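/- Assume 0 < y < 1. Then the random variables log det(ρ̃_n) + (n − p(n))·log(1 − p(n)/n) + p(n) converge in distribution, as n → ∞, to a Gaussian law N(μ̃_log, σ_log²) with mean μ̃_log = (3/2)·log(1−y) + 2y − y²/(1−y) and variance σ_log² = −2·log(1−y) − 2y. -/

import Mathlib

open MeasureTheory Finset

/-- The (finite) sample space of `p`-tuples of permutations of `{1,…,n}` carries the
discrete σ-algebra. -/
instance permVecMeasurableSpace (n p : ℕ) :
    MeasurableSpace (Fin p → Equiv.Perm (Fin n)) := ⊤

/-- The uniform probability measure on `p`-tuples of permutations of `{1,…,n}`: the joint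
law of `p` independent uniform random permutations `σ₁,…,σ_p`, i.e. the law of the
columnwise ranks of an `n×p` data matrix with independent entries having continuous
distributions. -/
noncomputable def permVecUniform (n p : ℕ) : Measure (Fin p → Equiv.Perm (Fin n)) :=
  (PMF.uniformOfFintype (Fin p → Equiv.Perm (Fin n))).toMeasure


/-- Hoeffding's improved Spearman rank correlation matrix
`ρ̃ₙ = (3/(n(n−1)(n−2))) Σ_{(i,j,k) pairwise distinct} A_{ij} A_{ik}ᵀ ∈ ℝ^{p×p}`, where the
sign vector `A_{ij} ∈ ℝᵖ` has `l`-th coordinate `sign(σ_l(i) − σ_l(j))`. -/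
noncomputable def improvedSpearmanRho (n p : ℕ) (ω : Fin p → Equiv.Perm (Fin n)) :
    Matrix (Fin p) (Fin p) ℝ :=
  (3 / ((n : ℝ) * ((n : ℝ) - 1) * ((n : ℝ) - 2))) •
    ∑ i : Fin n, ∑ j ∈ univ.erase i, ∑ k ∈ (univ.erase i).erase j,
      Matrix.vecMulVec
        (fun l => Real.sign (((ω l i : ℕ) : ℝ) - ((ω l j : ℕ) : ℝ)))
        (fun l => Real.sign (((ω l i : ℕ) : ℝ) - ((ω l k : ℕ) : ℝ)))

/-!
The row sums `∑ j, sign (σ i - σ j)` are the centered ranks, so the improved Spearman matrix equals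
`S + (n - 2)⁻¹ (S - 1 + H)`, where `S` is the Gram matrix of the standardized rank columns and `H`
is the degenerate part of Kendall's rank correlation matrix, whose Frobenius norm is bounded in
mean square.

Gram–Schmidt writes `det S` as the product over `k` of the squared distance of column `k` to the
span of the previous ones, which is `(n - 1 - k) / (n - 1)` times `1 + Y k`. Conditionally on the
previous columns `Y k` is a centered quadratic form in a uniformly permuted score vector, whose
variance is nearly deterministic, so conditioning on the columns one after the other shows that
the characteristic function of `∑ k, log (1 + Y k)` is close to a product of Gaussian factors.
Stirling's formula handles the deterministic factors.

To first order, passing from `S` to the improved matrix shifts the log-determinant by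
`(n - 2)⁻¹ (p - tr S⁻¹ + tr (S⁻¹ H))`. Since the columns are exchangeable, every entry of `S⁻¹` is
controlled by the last two Gram–Schmidt steps after a permutation of the columns. Hence `tr S⁻¹` is
close to `p (n - 1) / (n - p)`, which produces the drift `-y² / (1 - y)`, and the Frobenius norm of
`S⁻¹` is small enough for `tr (S⁻¹ H)` and all higher-order terms to be negligible.
-/

open scoped Matrix BigOperators

section ExchangeableTensor

/-- A symmetric tensor of order four whose entries depend only on the coincidence pattern of the
indices: `m₂₁₁`, for instance, is the value at `(i, i, j, k)` with `i, j, k` distinct. -/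
structure IsExchangeableTensor {ι : Type*} (T : ι → ι → ι → ι → ℝ)
    (m₄ m₃₁ m₂₂ m₂₁₁ m₁₁₁₁ : ℝ) : Prop where
  swap₁₂ : ∀ i j k l, T i j k l = T j i k l
  swap₂₃ : ∀ i j k l, T i j k l = T i k j l
  swap₃₄ : ∀ i j k l, T i j k l = T i j l k
  apply₄ : ∀ i, T i i i i = m₄
  apply₃₁ : ∀ i j, i ≠ j → T i i i j = m₃₁
  apply₂₂ : ∀ i j, i ≠ j → T i i j j = m₂₂
  apply₂₁₁ : ∀ i j k, i ≠ j → i ≠ k → j ≠ k → T i i j k = m₂₁₁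
  apply₁₁₁₁ : ∀ i j k l, i ≠ j → i ≠ k → i ≠ l → j ≠ k → j ≠ l → k ≠ l → T i j k l = m₁₁₁₁

variable {ι : Type*} [DecidableEq ι] {T : ι → ι → ι → ι → ℝ} {m₄ m₃₁ m₂₂ m₂₁₁ m₁₁₁₁ : ℝ}

local notation "δ" => (1 : Matrix ι ι ℝ)

lemma IsExchangeableTensor.apply_self_left (hT : IsExchangeableTensor T m₄ m₃₁ m₂₂ m₂₁₁ m₁₁₁₁)
    (i k l : ι) :
    T i i k l = (m₄ - 2 * m₃₁ - m₂₂ + 2 * m₂₁₁) * (δ i k * δ i l)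
      + (m₃₁ - m₂₁₁) * (δ i k + δ i l) + (m₂₂ - m₂₁₁) * δ k l + m₂₁₁ := by
  rcases eq_or_ne i k with rfl | hik <;> rcases eq_or_ne i l with rfl | hil
  · rw [hT.apply₄]
    simp only [Matrix.one_apply_eq]
    ring
  · rw [hT.apply₃₁ _ _ hil]
    simp [hil]
  · rw [hT.swap₃₄, hT.apply₃₁ _ _ hik]
    simp [hik, hik.symm]
  · rcases eq_or_ne k l with rfl | hkl
    · rw [hT.apply₂₂ _ _ hik]
      simp [hik]
    · rw [hT.apply₂₁₁ _ _ _ hik hil hkl]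
      simp [hik, hil, hkl]

lemma IsExchangeableTensor.apply_eq (hT : IsExchangeableTensor T m₄ m₃₁ m₂₂ m₂₁₁ m₁₁₁₁)
    (i j k l : ι) :
    T i j k l = (m₄ - 4 * m₃₁ - 3 * m₂₂ + 12 * m₂₁₁ - 6 * m₁₁₁₁) * (δ i j * δ i k * δ i l)
      + (m₃₁ - 3 * m₂₁₁ + 2 * m₁₁₁₁)
        * (δ i j * δ i k + δ i j * δ i l + δ i k * δ i l + δ j k * δ j l)
      + (m₂₂ - 2 * m₂₁₁ + m₁₁₁₁) * (δ i j * δ k l + δ i k * δ j l + δ i l * δ j k)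
      + (m₂₁₁ - m₁₁₁₁) * (δ i j + δ i k + δ i l + δ j k + δ j l + δ k l) + m₁₁₁₁ := by
  rcases eq_or_ne i j with rfl | hij
  · rw [hT.apply_self_left, Matrix.one_apply_eq]
    ring
  rcases eq_or_ne i k with rfl | hik
  · rw [hT.swap₂₃, hT.apply_self_left]
    simp only [Matrix.one_apply_eq, Matrix.one_apply_ne hij, Matrix.one_apply_ne' hij]
    ring
  rcases eq_or_ne i l with rfl | hil
  · rw [hT.swap₃₄, hT.swap₂₃, hT.apply_self_left]
    simp only [Matrix.one_apply_eq, Matrix.one_apply_ne hij, Matrix.one_apply_ne' hij,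
      Matrix.one_apply_ne hik, Matrix.one_apply_ne' hik]
    ring
  rcases eq_or_ne j k with rfl | hjk
  · rw [hT.swap₁₂, hT.swap₂₃, hT.apply_self_left]
    simp only [Matrix.one_apply_eq, Matrix.one_apply_ne hij, Matrix.one_apply_ne' hij,
      Matrix.one_apply_ne hil]
    ring
  rcases eq_or_ne j l with rfl | hjl
  · rw [hT.swap₁₂, hT.swap₃₄, hT.swap₂₃, hT.apply_self_left]
    simp only [Matrix.one_apply_eq, Matrix.one_apply_ne hij, Matrix.one_apply_ne' hij,
      Matrix.one_apply_ne hik, Matrix.one_apply_ne hjk, Matrix.one_apply_ne' hjk]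
    ring
  rcases eq_or_ne k l with rfl | hkl
  · rw [hT.swap₂₃, hT.swap₁₂, hT.swap₃₄, hT.swap₂₃, hT.apply_self_left]
    simp only [Matrix.one_apply_eq, Matrix.one_apply_ne hij, Matrix.one_apply_ne hik,
      Matrix.one_apply_ne' hik, Matrix.one_apply_ne hjk, Matrix.one_apply_ne' hjk]
    ring
  rw [hT.apply₁₁₁₁ i j k l hij hik hil hjk hjl hkl]
  simp [hij, hik, hil, hjk, hjl, hkl]

variable [Fintype ι] {P : Matrix ι ι ℝ}

omit [DecidableEq ι] in
lemma sum_row_eq_zero (hP : P *ᵥ 1 = 0) (i : ι) : ∑ j, P i j = 0 := by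
  simpa [Matrix.mulVec, dotProduct] using congrFun hP i

omit [DecidableEq ι] in
/-- Since the rows and columns of `P` sum to zero, contraction with `P ⊗ P` kills every tensor
that does not depend on all four indices. -/
lemma contract_degenerate_eq_zero (hP : P.IsSymm) (hP₁ : P *ᵥ 1 = 0)
    (A₁ A₂ A₃ A₄ : ι → ι → ι → ℝ) :
    ∑ i, ∑ j, ∑ k, ∑ l, P i j * P k l * (A₁ j k l + A₂ i k l + A₃ i j l + A₄ i j k) = 0 := by
  have h_left (B : ι → ℝ) : ∑ k, ∑ l, P k l * B k = 0 := by
    simp_rw [← sum_mul, sum_row_eq_zero hP₁, zero_mul, sum_const_zero]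
  have h_right (B : ι → ℝ) : ∑ k, ∑ l, P k l * B l = 0 := by
    rw [sum_comm]
    simp_rw [← hP.apply, h_left]
  have h₁ : ∑ i, ∑ j, ∑ k, ∑ l, P i j * P k l * A₁ j k l = 0 := by
    simp_rw [mul_assoc, ← mul_sum, h_right fun j => ∑ k, ∑ l, P k l * A₁ j k l]
  have h₂ : ∑ i, ∑ j, ∑ k, ∑ l, P i j * P k l * A₂ i k l = 0 := by
    simp_rw [mul_assoc, ← mul_sum, h_left fun i => ∑ k, ∑ l, P k l * A₂ i k l]
  have h₃ : ∑ i, ∑ j, ∑ k, ∑ l, P i j * P k l * A₃ i j l = 0 := by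
    simp_rw [mul_assoc, ← mul_sum, h_right (A₃ _ _), mul_zero, sum_const_zero]
  have h₄ : ∑ i, ∑ j, ∑ k, ∑ l, P i j * P k l * A₄ i j k = 0 := by
    simp_rw [mul_assoc, ← mul_sum, h_left (A₄ _ _), mul_zero, sum_const_zero]
  simp_rw [mul_add, sum_add_distrib, h₁, h₂, h₃, h₄, add_zero]

omit [DecidableEq ι] in
lemma IsExchangeableTensor.contract (hT : IsExchangeableTensor T m₄ m₃₁ m₂₂ m₂₁₁ m₁₁₁₁)
    (hP : P.IsSymm) (hP₁ : P *ᵥ 1 = 0) :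
    ∑ i, ∑ j, ∑ k, ∑ l, P i j * P k l * T i j k l
      = (m₄ - 4 * m₃₁ - 3 * m₂₂ + 12 * m₂₁₁ - 6 * m₁₁₁₁) * ∑ i, P i i ^ 2
        + (m₂₂ - 2 * m₂₁₁ + m₁₁₁₁) * (P.trace ^ 2 + 2 * ∑ i, ∑ j, P i j ^ 2) := by
  classical
  set a := m₄ - 4 * m₃₁ - 3 * m₂₂ + 12 * m₂₁₁ - 6 * m₁₁₁₁ with ha
  set b := m₃₁ - 3 * m₂₁₁ + 2 * m₁₁₁₁ with hb
  set c := m₂₂ - 2 * m₂₁₁ + m₁₁₁₁ with hc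
  set d := m₂₁₁ - m₁₁₁₁ with hd
  have h_diag : ∑ i, ∑ j, ∑ k, ∑ l, P i j * P k l * (a * (δ i j * δ i k * δ i l))
      = a * ∑ i, P i i ^ 2 := by
    simp [Matrix.one_apply, pow_two, mul_comm _ a, ← mul_sum]
  have h_trace : ∑ i, ∑ j, ∑ k, ∑ l, P i j * P k l * (c * (δ i j * δ k l))
      = c * P.trace ^ 2 := by
    simp [Matrix.one_apply, ← mul_sum, ← sum_mul, pow_two, mul_comm _ c, Matrix.trace]
  have h_pair : ∑ i, ∑ j, ∑ k, ∑ l, P i j * P k l * (c * (δ i k * δ j l + δ i l * δ j k))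
      = c * (2 * ∑ i, ∑ j, P i j ^ 2) := by
    simp [Matrix.one_apply, mul_add, sum_add_distrib, hP.apply, ← sum_mul, pow_two]
    ring
  have h_zero := contract_degenerate_eq_zero hP hP₁ (fun j k l => b * (δ j k * δ j l))
    (fun i k l => b * (δ i k * δ i l) + d * δ k l)
    (fun i j l => b * (δ i j * δ i l) + d * (δ i l + δ j l))
    (fun i j k => b * (δ i j * δ i k) + d * (δ i j + δ i k + δ j k) + m₁₁₁₁)
  rw [mul_add, ← add_assoc, ← h_diag, ← h_trace, ← h_pair, ← add_zero (_ + _ + _), ← h_zero]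
  simp_rw [← sum_add_distrib]
  refine sum_congr rfl fun i _ => sum_congr rfl fun j _ => sum_congr rfl fun k _ =>
    sum_congr rfl fun l _ => ?_
  rw [hT.apply_eq, ← ha, ← hb, ← hc, ← hd]
  ring

end ExchangeableTensor

section PermutationMoments

variable {ι : Type*} [Fintype ι] [DecidableEq ι]

local notation "N" => (Fintype.card ι : ℝ)

lemma expect_perm_mul_swap {M : Type*} [AddCommMonoid M] [Module ℚ≥0 M]
    (G : Equiv.Perm ι → M) (i j : ι) : (𝔼 σ, G (σ * Equiv.swap i j)) = 𝔼 σ, G σ :=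
  Fintype.expect_equiv (Equiv.mulRight (Equiv.swap i j)) _ _ fun _ => rfl

lemma sum_expect_perm_mul_apply (G : Equiv.Perm ι → ℝ) (f : ι → ℝ) :
    ∑ m, (𝔼 σ : Equiv.Perm ι, G σ * f (σ m)) = (∑ m, f m) * 𝔼 σ, G σ := by
  simp_rw [← expect_sum_comm, ← mul_sum, Equiv.sum_comp]
  rw [← expect_mul, mul_comm]

/-- Sampling without replacement: given the values of `σ` on `S`, the value `σ l` at a further
index is uniform on the complement of `σ '' S`. -/
lemma card_sub_mul_expect_perm_mul_apply (S : Finset ι) {l : ι} (hl : l ∉ S)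
    {G : Equiv.Perm ι → ℝ} (hG : ∀ σ τ : Equiv.Perm ι, (∀ i ∈ S, σ i = τ i) → G σ = G τ)
    (f : ι → ℝ) :
    (N - #S) * (𝔼 σ : Equiv.Perm ι, G σ * f (σ l))
      = (∑ m, f m) * (𝔼 σ, G σ) - ∑ m ∈ S, 𝔼 σ : Equiv.Perm ι, G σ * f (σ m) := by
  have h_off : ∀ m ∈ Sᶜ, (𝔼 σ : Equiv.Perm ι, G σ * f (σ m)) = 𝔼 σ, G σ * f (σ l) := by
    intro m hm
    rw [← expect_perm_mul_swap _ l m]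
    refine expect_congr rfl fun σ _ => ?_
    have hσ : G (σ * Equiv.swap l m) = G σ := hG _ _ fun i hi => by
      rw [Equiv.Perm.mul_apply, Equiv.swap_apply_of_ne_of_ne (by rintro rfl; exact hl hi)
        (by rintro rfl; exact mem_compl.1 hm hi)]
    rw [hσ, Equiv.Perm.mul_apply, Equiv.swap_apply_right]
  rw [← sum_expect_perm_mul_apply, ← sum_add_sum_compl S, sum_congr rfl h_off, sum_const,
    nsmul_eq_mul, card_compl, Nat.cast_sub (card_le_univ S)]
  ring

/-- A score vector: centered, with unit sum of squares. -/
structure IsStandardized (x : ι → ℝ) : Prop where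
  sum_eq_zero : ∑ i, x i = 0
  sum_sq : ∑ i, x i ^ 2 = 1

lemma expect_perm_apply (f : ι → ℝ) (i : ι) :
    (𝔼 σ : Equiv.Perm ι, f (σ i)) = (∑ j, f j) / N := by
  have hN : N ≠ 0 := Nat.cast_ne_zero.2 (Fintype.card_pos_iff.2 ⟨i⟩).ne'
  have h := card_sub_mul_expect_perm_mul_apply ∅ (notMem_empty i) (G := fun _ => 1)
    (fun _ _ _ => rfl) f
  simp only [card_empty, Nat.cast_zero, sub_zero, one_mul, Fintype.expect_const, mul_one,
    sum_empty] at h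
  rw [eq_div_iff hN, mul_comm, h]

lemma expect_perm_apply_mul_apply (f g : ι → ℝ) {i j : ι} (hij : i ≠ j) :
    (𝔼 σ : Equiv.Perm ι, f (σ i) * g (σ j))
      = ((∑ m, f m) * (∑ m, g m) - ∑ m, f m * g m) / (N * (N - 1)) := by
  have hN : (2 : ℝ) ≤ N := mod_cast Fintype.one_lt_card_iff.2 ⟨i, j, hij⟩
  have h := card_sub_mul_expect_perm_mul_apply {i} (notMem_singleton.2 hij.symm)
    (G := fun σ => f (σ i)) (fun σ τ h => by simp [h i]) g
  rw [card_singleton, sum_singleton, expect_perm_apply, expect_perm_apply (fun m => f m * g m),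
    Nat.cast_one] at h
  rw [eq_div_iff (mul_ne_zero (by linarith) (by linarith)),
    show ∀ a : ℝ, a * (N * (N - 1)) = N * ((N - 1) * a) by intro; ring, h]
  have : N ≠ 0 := by linarith
  field_simp

section FourthMoments

variable {x : ι → ℝ}

omit [DecidableEq ι] in
lemma IsStandardized.two_le_card (hx : IsStandardized x) : 2 ≤ Fintype.card ι := by
  by_contra! h_card
  have : Subsingleton ι := Fintype.card_le_one_iff_subsingleton.1 (by lia)
  have h_zero (i : ι) : x i = 0 := by
    rw [← hx.sum_eq_zero, Fintype.sum_subsingleton x i]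
  simpa [h_zero] using hx.sum_sq

lemma IsStandardized.card_sub_mul_expect (hx : IsStandardized x) (S : Finset ι) {l : ι}
    (hl : l ∉ S) {G : Equiv.Perm ι → ℝ}
    (hG : ∀ σ τ : Equiv.Perm ι, (∀ i ∈ S, σ i = τ i) → G σ = G τ) :
    (N - #S) * (𝔼 σ : Equiv.Perm ι, G σ * x (σ l))
      = - ∑ m ∈ S, 𝔼 σ : Equiv.Perm ι, G σ * x (σ m) := by
  rw [card_sub_mul_expect_perm_mul_apply S hl hG, hx.sum_eq_zero, zero_mul, zero_sub]

lemma IsStandardized.expect_apply_mul_apply (hx : IsStandardized x) (i j : ι) :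
    (𝔼 σ : Equiv.Perm ι, x (σ i) * x (σ j))
      = (if i = j then 1 / (N - 1) else 0) - 1 / (N * (N - 1)) := by
  have hN' : (2 : ℝ) ≤ N := mod_cast hx.two_le_card
  have h₁ : N - 1 ≠ 0 := by linarith
  have h₀ : N ≠ 0 := by linarith
  split_ifs with hij
  · subst hij
    simp_rw [← pow_two, expect_perm_apply (fun m => x m ^ 2), hx.sum_sq]
    field_simp
  · rw [expect_perm_apply_mul_apply x x hij, hx.sum_eq_zero]
    simp_rw [← pow_two, hx.sum_sq]
    field_simp
    simp

lemma IsStandardized.expect_cube_mul (hx : IsStandardized x) {i j : ι} (hij : i ≠ j) :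
    (𝔼 σ : Equiv.Perm ι, x (σ i) * x (σ i) * x (σ i) * x (σ j))
      = -((∑ m, x m ^ 4) / (N * (N - 1))) := by
  rw [expect_perm_apply_mul_apply (fun m => x m * x m * x m) x hij, hx.sum_eq_zero, mul_zero,
    zero_sub, neg_div]
  simp_rw [← pow_three', ← pow_succ]

lemma IsStandardized.expect_sq_mul_sq (hx : IsStandardized x) {i j : ι} (hij : i ≠ j) :
    (𝔼 σ : Equiv.Perm ι, x (σ i) * x (σ i) * x (σ j) * x (σ j))
      = (1 - ∑ m, x m ^ 4) / (N * (N - 1)) := by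
  have h := expect_perm_apply_mul_apply (fun m => x m ^ 2) (fun m => x m ^ 2) hij
  simp_rw [hx.sum_sq, ← pow_add, mul_one] at h
  rw [← h]
  exact expect_congr rfl fun σ _ => by ring

lemma IsStandardized.expect_sq_mul_mul (hx : IsStandardized x) {i j k : ι} (hij : i ≠ j)
    (hik : i ≠ k) (hjk : j ≠ k) :
    (𝔼 σ : Equiv.Perm ι, x (σ i) * x (σ i) * x (σ j) * x (σ k))
      = (2 * (∑ m, x m ^ 4) - 1) / (N * (N - 1) * (N - 2)) := by
  have hN : (3 : ℝ) ≤ N := by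
    have h_card := card_le_univ {i, j, k}
    rw [card_eq_three.2 ⟨i, j, k, hij, hik, hjk, rfl⟩] at h_card
    exact mod_cast h_card
  have h₀ : N ≠ 0 := by linarith
  have h₁ : N - 1 ≠ 0 := by linarith
  have h₂ : N - 2 ≠ 0 := by linarith
  have h := hx.card_sub_mul_expect {i, j} (l := k) (by simp [hik.symm, hjk.symm])
    (G := fun σ => x (σ i) * x (σ i) * x (σ j)) (fun σ τ h => by simp [h i, h j])
  have h_comm : (𝔼 σ : Equiv.Perm ι, x (σ i) * x (σ i) * x (σ j) * x (σ i))
      = 𝔼 σ : Equiv.Perm ι, x (σ i) * x (σ i) * x (σ i) * x (σ j) :=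
    expect_congr rfl fun σ _ => by ring
  rw [card_pair hij, sum_pair hij, h_comm, hx.expect_cube_mul hij,
    hx.expect_sq_mul_sq hij, Nat.cast_ofNat] at h
  rw [eq_div_iff (mul_ne_zero (mul_ne_zero h₀ h₁) h₂),
    show ∀ a : ℝ, a * (N * (N - 1) * (N - 2)) = N * (N - 1) * ((N - 2) * a) by intro; ring, h]
  field_simp
  ring

lemma IsStandardized.expect_mul_mul_mul (hx : IsStandardized x) {i j k l : ι} (hij : i ≠ j)
    (hik : i ≠ k) (hil : i ≠ l) (hjk : j ≠ k) (hjl : j ≠ l) (hkl : k ≠ l) :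
    (𝔼 σ : Equiv.Perm ι, x (σ i) * x (σ j) * x (σ k) * x (σ l))
      = (3 - 6 * ∑ m, x m ^ 4) / (N * (N - 1) * (N - 2) * (N - 3)) := by
  have hN : (4 : ℝ) ≤ N := by
    have h_card := card_le_univ {i, j, k, l}
    rw [card_insert_of_notMem (by simp [hij, hik, hil]),
      card_eq_three.2 ⟨j, k, l, hjk, hjl, hkl, rfl⟩] at h_card
    exact mod_cast h_card
  have h₀ : N ≠ 0 := by linarith
  have h₁ : N - 1 ≠ 0 := by linarith
  have h₂ : N - 2 ≠ 0 := by linarith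
  have h₃ : N - 3 ≠ 0 := by linarith
  have h := hx.card_sub_mul_expect {i, j, k} (l := l) (by simp [hil.symm, hjl.symm, hkl.symm])
    (G := fun σ => x (σ i) * x (σ j) * x (σ k)) (fun σ τ h => by simp [h i, h j, h k])
  have h_comm_i : (𝔼 σ : Equiv.Perm ι, x (σ i) * x (σ j) * x (σ k) * x (σ i))
      = 𝔼 σ : Equiv.Perm ι, x (σ i) * x (σ i) * x (σ j) * x (σ k) :=
    expect_congr rfl fun σ _ => by ring
  have h_comm_j : (𝔼 σ : Equiv.Perm ι, x (σ i) * x (σ j) * x (σ k) * x (σ j))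
      = 𝔼 σ : Equiv.Perm ι, x (σ j) * x (σ j) * x (σ i) * x (σ k) :=
    expect_congr rfl fun σ _ => by ring
  have h_comm_k : (𝔼 σ : Equiv.Perm ι, x (σ i) * x (σ j) * x (σ k) * x (σ k))
      = 𝔼 σ : Equiv.Perm ι, x (σ k) * x (σ k) * x (σ i) * x (σ j) :=
    expect_congr rfl fun σ _ => by ring
  rw [card_insert_of_notMem (by simp [hij, hik]), card_pair hjk,
    sum_insert (by simp [hij, hik]), sum_pair hjk, h_comm_i, h_comm_j, h_comm_k,
    hx.expect_sq_mul_mul hij hik hjk, hx.expect_sq_mul_mul hij.symm hjk hik,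
    hx.expect_sq_mul_mul hik.symm hjk.symm hij] at h
  rw [eq_div_iff (mul_ne_zero (mul_ne_zero (mul_ne_zero h₀ h₁) h₂) h₃),
    show ∀ a : ℝ, a * (N * (N - 1) * (N - 2) * (N - 3))
      = N * (N - 1) * (N - 2) * ((N - (2 + 1 : ℕ)) * a) by intro; push_cast; ring, h]
  field_simp
  ring

lemma IsStandardized.isExchangeableTensor_expect (hx : IsStandardized x) :
    IsExchangeableTensor (fun i j k l => 𝔼 σ : Equiv.Perm ι, x (σ i) * x (σ j) * x (σ k) * x (σ l))
      ((∑ m, x m ^ 4) / N) (-((∑ m, x m ^ 4) / (N * (N - 1))))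
      ((1 - ∑ m, x m ^ 4) / (N * (N - 1)))
      ((2 * (∑ m, x m ^ 4) - 1) / (N * (N - 1) * (N - 2)))
      ((3 - 6 * ∑ m, x m ^ 4) / (N * (N - 1) * (N - 2) * (N - 3))) where
  swap₁₂ _ _ _ _ := expect_congr rfl fun _ _ => by ring
  swap₂₃ _ _ _ _ := expect_congr rfl fun _ _ => by ring
  swap₃₄ _ _ _ _ := expect_congr rfl fun _ _ => by ring
  apply₄ i := by
    rw [← expect_perm_apply (fun m => x m ^ 4) i]
    exact expect_congr rfl fun _ _ => by ring
  apply₃₁ _ _ := hx.expect_cube_mul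
  apply₂₂ _ _ := hx.expect_sq_mul_sq
  apply₂₁₁ _ _ _ := hx.expect_sq_mul_mul
  apply₁₁₁₁ _ _ _ _ := hx.expect_mul_mul_mul

end FourthMoments

/-- Coefficient of `∑ i, P i i ^ 2` in the second moment of the quadratic form of a randomly
permuted score vector of length `M`, as a function of its sum `s` of fourth powers. -/
noncomputable def diagCoeff (M s : ℝ) : ℝ :=
  s / M + 4 * (s / (M * (M - 1))) - 3 * ((1 - s) / (M * (M - 1)))
    + 12 * ((2 * s - 1) / (M * (M - 1) * (M - 2)))
    - 6 * ((3 - 6 * s) / (M * (M - 1) * (M - 2) * (M - 3)))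

/-- Coefficient of `P.trace ^ 2 + 2 * ∑ i, ∑ j, P i j ^ 2` in the second moment of the quadratic
form of a randomly permuted score vector of length `M`, as a function of its sum `s` of fourth
powers. -/
noncomputable def pairCoeff (M s : ℝ) : ℝ :=
  (1 - s) / (M * (M - 1)) - 2 * ((2 * s - 1) / (M * (M - 1) * (M - 2)))
    + (3 - 6 * s) / (M * (M - 1) * (M - 2) * (M - 3))

section QuadraticForms

variable {x : ι → ℝ} {P : Matrix ι ι ℝ}

omit [DecidableEq ι] in
lemma dotProduct_mulVec_eq_sum (P : Matrix ι ι ℝ) (v w : ι → ℝ) :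
    v ⬝ᵥ P *ᵥ w = ∑ i, ∑ j, P i j * (v i * w j) := by
  simp_rw [dotProduct, Matrix.mulVec, dotProduct, mul_sum]
  exact sum_congr rfl fun i _ => sum_congr rfl fun j _ => by ring

omit [DecidableEq ι] in
lemma vecMulVec_mulVec_one {w : ι → ℝ} (hw : ∑ i, w i = 0) :
    Matrix.vecMulVec w w *ᵥ 1 = 0 := by
  ext i
  simp [Matrix.mulVec, dotProduct, Matrix.vecMulVec_apply, ← mul_sum, hw]

lemma IsStandardized.expect_quadraticForm (hx : IsStandardized x) (hP : P *ᵥ 1 = 0) :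
    (𝔼 σ : Equiv.Perm ι, (x ∘ σ) ⬝ᵥ P *ᵥ (x ∘ σ)) = P.trace / (N - 1) := by
  simp_rw [dotProduct_mulVec_eq_sum, expect_sum_comm, ← mul_expect, Function.comp_apply,
    hx.expect_apply_mul_apply, mul_sub, sum_sub_distrib, ← sum_mul, sum_row_eq_zero hP]
  simp [Matrix.trace, ← sum_mul, div_eq_mul_inv]

lemma IsStandardized.expect_quadraticForm_sq (hx : IsStandardized x) (hP : P *ᵥ 1 = 0)
    (hP' : P.IsSymm) :
    (𝔼 σ : Equiv.Perm ι, ((x ∘ σ) ⬝ᵥ P *ᵥ (x ∘ σ)) ^ 2)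
      = diagCoeff N (∑ m, x m ^ 4) * ∑ i, P i i ^ 2
        + pairCoeff N (∑ m, x m ^ 4) * (P.trace ^ 2 + 2 * ∑ i, ∑ j, P i j ^ 2) := by
  have h_sq (σ : Equiv.Perm ι) : ((x ∘ σ) ⬝ᵥ P *ᵥ (x ∘ σ)) ^ 2 =
      ∑ i, ∑ j, ∑ k, ∑ l, P i j * P k l * (x (σ i) * x (σ j) * x (σ k) * x (σ l)) := by
    simp_rw [dotProduct_mulVec_eq_sum, pow_two, sum_mul, mul_sum, Function.comp_apply]
    exact sum_congr rfl fun i _ => sum_congr rfl fun j _ => sum_congr rfl fun k _ =>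
      sum_congr rfl fun l _ => by ring
  simp_rw [h_sq, expect_sum_comm, ← mul_expect]
  rw [hx.isExchangeableTensor_expect.contract hP' hP, diagCoeff, pairCoeff]
  ring

lemma IsStandardized.expect_dotProduct_sq (hx : IsStandardized x) {w : ι → ℝ}
    (hw : ∑ i, w i = 0) :
    (𝔼 σ : Equiv.Perm ι, (w ⬝ᵥ (x ∘ σ)) ^ 2) = (∑ i, w i ^ 2) / (N - 1) := by
  have h := hx.expect_quadraticForm (vecMulVec_mulVec_one hw)
  rw [Matrix.trace_vecMulVec, dotProduct] at h
  simp_rw [Matrix.vecMulVec_mulVec, ← pow_two] at h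
  rw [← h]
  refine expect_congr rfl fun σ _ => ?_
  simp [pow_two, dotProduct_comm]

lemma IsStandardized.expect_dotProduct_pow_four (hx : IsStandardized x) {w : ι → ℝ}
    (hw : ∑ i, w i = 0) :
    (𝔼 σ : Equiv.Perm ι, (w ⬝ᵥ (x ∘ σ)) ^ 4)
      = diagCoeff N (∑ m, x m ^ 4) * ∑ i, w i ^ 4
        + 3 * pairCoeff N (∑ m, x m ^ 4) * (∑ i, w i ^ 2) ^ 2 := by
  have h := hx.expect_quadraticForm_sq (vecMulVec_mulVec_one hw)
    (Matrix.IsSymm.ext fun i j => by simp [Matrix.vecMulVec_apply, mul_comm])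
  have h_sq (σ : Equiv.Perm ι) : (x ∘ σ) ⬝ᵥ Matrix.vecMulVec w w *ᵥ (x ∘ σ)
      = (w ⬝ᵥ (x ∘ σ)) ^ 2 := by
    simp [Matrix.vecMulVec_mulVec, pow_two, dotProduct_comm]
  have h_pow (a : ℝ) : (a * a) ^ 2 = a ^ 4 := by ring
  have h_self : w ⬝ᵥ w = ∑ i, w i ^ 2 := by simp_rw [dotProduct, pow_two]
  simp_rw [h_sq, Matrix.trace_vecMulVec, Matrix.vecMulVec_apply, ← pow_mul, h_pow, mul_pow,
    ← sum_mul_sum, ← pow_two (∑ i, w i ^ 2), h_self] at h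
  rw [h]
  ring

end QuadraticForms

end PermutationMoments
section CenteredProjections

variable {ι : Type*} [Fintype ι]

/-- The matrix of an orthogonal projection of `ι → ℝ` whose range is orthogonal to the constants. -/
structure IsCenteredProj (M : Matrix ι ι ℝ) : Prop where
  isSymm : M.IsSymm
  mul_self : M * M = M
  mulVec_one : M *ᵥ 1 = 0

namespace IsCenteredProj

variable {M : Matrix ι ι ℝ} (hM : IsCenteredProj M)
include hM

lemma sum_row_sq (i : ι) : ∑ k, M i k ^ 2 = M i i := by
  conv_rhs => rw [← hM.mul_self, Matrix.mul_apply]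
  simp_rw [hM.isSymm.apply, pow_two]

lemma apply_sq_le (i j : ι) : M i j ^ 2 ≤ M i i :=
  hM.sum_row_sq i ▸ single_le_sum (f := fun k => M i k ^ 2) (fun _ _ => sq_nonneg _) (mem_univ j)

lemma diag_nonneg (i : ι) : 0 ≤ M i i := (sq_nonneg _).trans (hM.apply_sq_le i i)

lemma diag_le_one (i : ι) : M i i ≤ 1 := by
  nlinarith [hM.apply_sq_le i i, hM.diag_nonneg i]

lemma sum_sum_sq : ∑ i, ∑ j, M i j ^ 2 = M.trace := sum_congr rfl fun i _ => hM.sum_row_sq i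

lemma mulVec_mulVec (v : ι → ℝ) : M *ᵥ (M *ᵥ v) = M *ᵥ v := by
  rw [Matrix.mulVec_mulVec, hM.mul_self]

lemma dotProduct_mulVec_comm (v w : ι → ℝ) : v ⬝ᵥ M *ᵥ w = M *ᵥ v ⬝ᵥ w := by
  rw [Matrix.dotProduct_mulVec, ← Matrix.mulVec_transpose, hM.isSymm]

lemma sum_mulVec (v : ι → ℝ) : ∑ i, (M *ᵥ v) i = 0 := by
  rw [← one_dotProduct, hM.dotProduct_mulVec_comm, hM.mulVec_one, zero_dotProduct]

lemma dotProduct_mulVec_self (v : ι → ℝ) : v ⬝ᵥ M *ᵥ v = ∑ i, (M *ᵥ v) i ^ 2 := by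
  rw [← hM.mulVec_mulVec v, hM.dotProduct_mulVec_comm v, hM.mulVec_mulVec]
  simp only [dotProduct, pow_two]

lemma dotProduct_mulVec_self_nonneg (v : ι → ℝ) : 0 ≤ v ⬝ᵥ M *ᵥ v :=
  hM.dotProduct_mulVec_self v ▸ sum_nonneg fun _ _ => sq_nonneg _

lemma dotProduct_mulVec_self_le (v : ι → ℝ) : v ⬝ᵥ M *ᵥ v ≤ ∑ i, v i ^ 2 := by
  have h_resid : 0 ≤ ∑ i, (v i - (M *ᵥ v) i) ^ 2 := sum_nonneg fun _ _ => sq_nonneg _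
  simp_rw [sub_sq, sum_add_distrib, sum_sub_distrib, ← hM.dotProduct_mulVec_self, mul_assoc,
    ← mul_sum] at h_resid
  change 0 ≤ _ - 2 * (v ⬝ᵥ M *ᵥ v) + _ at h_resid
  linarith

lemma diag_add_diag_sub_nonneg (i j : ι) : 0 ≤ M i i + M j j - 2 * M i j := by
  have h_sum : M i i + M j j - 2 * M i j = ∑ k, (M i k - M j k) ^ 2 := by
    have h_inner : ∑ k, M i k * M j k = M i j := by
      conv_rhs => rw [← hM.mul_self, Matrix.mul_apply]
      exact sum_congr rfl fun k _ => by rw [hM.isSymm.apply j k]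
    simp_rw [sub_sq, sum_add_distrib, sum_sub_distrib, hM.sum_row_sq, mul_assoc, ← mul_sum, h_inner]
    ring
  exact h_sum ▸ sum_nonneg fun _ _ => sq_nonneg _

lemma diag_add_diag_sub_le (i j : ι) : M i i + M j j - 2 * M i j ≤ 4 := by
  nlinarith [hM.apply_sq_le i j, hM.diag_le_one i, hM.diag_le_one j]

end IsCenteredProj

end CenteredProjections

section TranspositionWalk

variable {ι : Type*} [Fintype ι] [DecidableEq ι]

/-- The generator of the random transposition walk, up to sign and normalization. -/
def swapLaplacian (F : Equiv.Perm ι → ℝ) (σ : Equiv.Perm ι) : ℝ :=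
  ∑ i, ∑ j, (F σ - F (σ * Equiv.swap i j))

/-- The Dirichlet energy density of `F` for the random transposition walk. -/
def swapEnergy (F : Equiv.Perm ι → ℝ) (σ : Equiv.Perm ι) : ℝ :=
  ∑ i, ∑ j, (F σ - F (σ * Equiv.swap i j)) ^ 2

lemma expect_mul_swapLaplacian (F G : Equiv.Perm ι → ℝ) :
    (𝔼 σ, G σ * swapLaplacian F σ) = (1 / 2) * 𝔼 σ, ∑ i, ∑ j,
      (G σ - G (σ * Equiv.swap i j)) * (F σ - F (σ * Equiv.swap i j)) := by
  simp_rw [swapLaplacian, mul_sum, expect_sum_comm, mul_sum]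
  refine sum_congr rfl fun i _ => sum_congr rfl fun j _ => ?_
  have h_reverse := expect_perm_mul_swap (fun σ => G σ * (F σ - F (σ * Equiv.swap i j))) i j
  simp_rw [mul_assoc, Equiv.swap_mul_self, mul_one] at h_reverse
  have h_expand : (𝔼 σ, (G σ - G (σ * Equiv.swap i j)) * (F σ - F (σ * Equiv.swap i j)))
      = (𝔼 σ, G σ * (F σ - F (σ * Equiv.swap i j)))
        + 𝔼 σ, G (σ * Equiv.swap i j) * (F (σ * Equiv.swap i j) - F σ) := by
    rw [← expect_add_distrib]
    exact expect_congr rfl fun _ _ => by ring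
  rw [h_expand, h_reverse]
  ring

lemma expect_mul_swapLaplacian_self_le {F : Equiv.Perm ι → ℝ} {B : ℝ}
    (hB : ∀ σ, swapEnergy F σ ≤ B) : (𝔼 σ, F σ * swapLaplacian F σ) ≤ B / 2 := by
  rw [expect_mul_swapLaplacian]
  simp_rw [← pow_two]
  have := expect_le (s := univ) univ_nonempty fun σ _ => hB σ
  unfold swapEnergy at this
  linarith

lemma expect_cube_mul_swapLaplacian_le {F : Equiv.Perm ι → ℝ} {B : ℝ}
    (hB : ∀ σ, swapEnergy F σ ≤ B) :
    (𝔼 σ, F σ ^ 3 * swapLaplacian F σ) ≤ (3 / 2) * B * 𝔼 σ, F σ ^ 2 := by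
  have h_cube (a b : ℝ) : (a ^ 3 - b ^ 3) * (a - b)
      ≤ 3 / 2 * (a ^ 2 * (a - b) ^ 2 + b ^ 2 * (a - b) ^ 2) := by
    nlinarith [mul_nonneg (sq_nonneg (a - b)) (sq_nonneg (a - b))]
  have h_swap (i j : ι) :
      (𝔼 σ, F (σ * Equiv.swap i j) ^ 2 * (F σ - F (σ * Equiv.swap i j)) ^ 2)
        = 𝔼 σ, F σ ^ 2 * (F σ - F (σ * Equiv.swap i j)) ^ 2 := by
    rw [← expect_perm_mul_swap (fun σ => F σ ^ 2 * (F σ - F (σ * Equiv.swap i j)) ^ 2) i j]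
    simp_rw [mul_assoc, Equiv.swap_mul_self, mul_one, sub_sq_comm (F (_ * _))]
  rw [expect_mul_swapLaplacian F fun σ => F σ ^ 3]
  calc 1 / 2 * (𝔼 σ, ∑ i, ∑ j,
        (F σ ^ 3 - F (σ * Equiv.swap i j) ^ 3) * (F σ - F (σ * Equiv.swap i j)))
      ≤ 1 / 2 * 𝔼 σ, ∑ i, ∑ j, 3 / 2 * (F σ ^ 2 * (F σ - F (σ * Equiv.swap i j)) ^ 2
        + F (σ * Equiv.swap i j) ^ 2 * (F σ - F (σ * Equiv.swap i j)) ^ 2) := by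
        refine mul_le_mul_of_nonneg_left (expect_le_expect fun σ _ => ?_) (by norm_num)
        exact sum_le_sum fun i _ => sum_le_sum fun j _ => h_cube _ _
    _ = 3 / 2 * 𝔼 σ, F σ ^ 2 * swapEnergy F σ := by
        simp_rw [swapEnergy, mul_sum, expect_sum_comm, ← mul_expect, expect_add_distrib, h_swap,
          mul_sum]
        exact sum_congr rfl fun i _ => sum_congr rfl fun j _ => by ring
    _ ≤ 3 / 2 * 𝔼 σ, F σ ^ 2 * B := by
        gcongr with σ
        exact hB σ
    _ = 3 / 2 * B * 𝔼 σ, F σ ^ 2 := by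
        rw [← expect_mul]
        ring

end TranspositionWalk
section QuadraticStatistics

variable {ι : Type*} [Fintype ι] [DecidableEq ι]

local notation "N" => (Fintype.card ι : ℝ)

omit [DecidableEq ι] in
lemma sum_sum_sub_mul_sub (a b : ι → ℝ) :
    ∑ i, ∑ j, (a i - a j) * (b i - b j)
      = 2 * N * (∑ i, a i * b i) - 2 * (∑ i, a i) * ∑ i, b i := by
  have h_expand (i j : ι) :
      (a i - a j) * (b i - b j) = a i * b i + a j * b j - a i * b j - b i * a j := by ring
  simp_rw [h_expand, sum_sub_distrib, sum_add_distrib, ← mul_sum, ← sum_mul]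
  simp only [sum_const, card_univ, nsmul_eq_mul, mul_left_comm _ N, ← mul_sum]
  ring

omit [Fintype ι] in
lemma comp_swap_eq_add (v : ι → ℝ) (i j : ι) :
    v ∘ Equiv.swap i j = v + (v j - v i) • (Pi.single i 1 - Pi.single j 1) := by
  ext k
  rcases eq_or_ne k i with rfl | hki
  · rcases eq_or_ne k j with rfl | hkj <;> simp [*]
  · rcases eq_or_ne k j with rfl | hkj
    · simp [hki]
    · simp [*, Equiv.swap_apply_of_ne_of_ne]

lemma dotProduct_comp_swap (d v : ι → ℝ) (i j : ι) :
    d ⬝ᵥ (v ∘ Equiv.swap i j) = d ⬝ᵥ v - (v i - v j) * (d i - d j) := by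
  simp only [comp_swap_eq_add, dotProduct_add, dotProduct_smul, dotProduct_sub,
    dotProduct_single_one, smul_eq_mul]
  ring

lemma quadraticForm_comp_swap {M : Matrix ι ι ℝ} (hM : M.IsSymm) (v : ι → ℝ) (i j : ι) :
    (v ∘ Equiv.swap i j) ⬝ᵥ M *ᵥ (v ∘ Equiv.swap i j)
      = v ⬝ᵥ M *ᵥ v - 2 * ((v i - v j) * ((M *ᵥ v) i - (M *ᵥ v) j))
        + (v i - v j) ^ 2 * (M i i + M j j - 2 * M i j) := by
  have h_col (k : ι) : v ⬝ᵥ M.col k = (M *ᵥ v) k := by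
    conv_rhs => rw [← hM.eq]
    exact dotProduct_comm _ _
  simp only [comp_swap_eq_add, Matrix.mulVec_add, Matrix.mulVec_smul, Matrix.mulVec_sub,
    dotProduct_add, add_dotProduct, dotProduct_smul, smul_dotProduct, dotProduct_sub,
    sub_dotProduct, Matrix.mulVec_single_one, single_one_dotProduct, smul_eq_mul, h_col]
  simp only [Matrix.col_apply, hM.apply i j]
  ring

/-- Standardized scores none of which exceeds its average size by more than the factor `√b`. -/
structure IsBoundedScore (b : ℝ) (x : ι → ℝ) : Prop extends IsStandardized x where
  sq_le : ∀ i, x i ^ 2 ≤ b / N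

/-- The centered diagonal part of the quadratic form of `M` at the permuted scores `x ∘ σ`. -/
noncomputable def diagFluctuation (x : ι → ℝ) (M : Matrix ι ι ℝ) (σ : Equiv.Perm ι) : ℝ :=
  M.diag ⬝ᵥ ((fun k => x k ^ 2) ∘ σ) - M.trace / N

/-- The centered quadratic form of `M` at the permuted scores `x ∘ σ`. -/
noncomputable def quadFluctuation (x : ι → ℝ) (M : Matrix ι ι ℝ) (σ : Equiv.Perm ι) : ℝ :=
  (x ∘ σ) ⬝ᵥ M *ᵥ (x ∘ σ) - M.trace / (N - 1)

variable {x : ι → ℝ} {M : Matrix ι ι ℝ} {b : ℝ}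

lemma diagFluctuation_sub_swap (x : ι → ℝ) (M : Matrix ι ι ℝ) (σ : Equiv.Perm ι) (i j : ι) :
    diagFluctuation x M σ - diagFluctuation x M (σ * Equiv.swap i j)
      = (x (σ i) ^ 2 - x (σ j) ^ 2) * (M i i - M j j) := by
  rw [diagFluctuation, diagFluctuation, Equiv.Perm.coe_mul, ← Function.comp_assoc,
    dotProduct_comp_swap]
  simp only [Function.comp_apply, Matrix.diag_apply]
  ring

lemma quadFluctuation_sub_swap (hM : M.IsSymm) (x : ι → ℝ) (σ : Equiv.Perm ι) (i j : ι) :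
    quadFluctuation x M σ - quadFluctuation x M (σ * Equiv.swap i j)
      = 2 * ((x (σ i) - x (σ j)) * ((M *ᵥ (x ∘ σ)) i - (M *ᵥ (x ∘ σ)) j))
        - (x (σ i) - x (σ j)) ^ 2 * (M i i + M j j - 2 * M i j) := by
  rw [quadFluctuation, quadFluctuation, Equiv.Perm.coe_mul, ← Function.comp_assoc,
    quadraticForm_comp_swap hM]
  simp only [Function.comp_apply]
  ring

omit [DecidableEq ι] in
lemma IsStandardized.comp_perm (hx : IsStandardized x) (σ : Equiv.Perm ι) :
    IsStandardized (x ∘ σ) where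
  sum_eq_zero := (Equiv.sum_comp σ x).trans hx.sum_eq_zero
  sum_sq := (Equiv.sum_comp σ fun i => x i ^ 2).trans hx.sum_sq

lemma IsStandardized.swapLaplacian_diagFluctuation (hx : IsStandardized x) (M : Matrix ι ι ℝ)
    (σ : Equiv.Perm ι) :
    swapLaplacian (diagFluctuation x M) σ = 2 * N * diagFluctuation x M σ := by
  have hN : (2 : ℝ) ≤ N := mod_cast hx.two_le_card
  have h_sum := sum_sum_sub_mul_sub (fun i => (x ∘ σ) i ^ 2) M.diag
  rw [(hx.comp_perm σ).sum_sq] at h_sum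
  simp_rw [swapLaplacian, diagFluctuation_sub_swap]
  refine h_sum.trans ?_
  rw [diagFluctuation, dotProduct_comm, Matrix.trace, dotProduct]
  simp only [Function.comp_apply]
  field_simp

omit [DecidableEq ι] in
lemma IsCenteredProj.sum_sum_sub_sq_mul (hM : IsCenteredProj M) {v : ι → ℝ}
    (hv : IsStandardized v) :
    ∑ i, ∑ j, (v i - v j) ^ 2 * (M i i + M j j - 2 * M i j)
      = 2 * N * ∑ i, M i i * v i ^ 2 + 2 * M.trace + 4 * (v ⬝ᵥ M *ᵥ v) := by
  have h_diag : ∑ i, ∑ j, (v i - v j) ^ 2 * (M i i + M j j)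
      = 2 * N * ∑ i, M i i * v i ^ 2 + 2 * M.trace := by
    have h_expand (i j : ι) : (v i - v j) ^ 2 * (M i i + M j j)
        = M i i * v i ^ 2 + M i i * v j ^ 2 + v i ^ 2 * M j j + M j j * v j ^ 2
          - 2 * (v i * M i i) * v j - 2 * v i * (v j * M j j) := by ring
    simp_rw [h_expand, sum_sub_distrib, sum_add_distrib, ← mul_sum, ← sum_mul]
    simp only [sum_const, card_univ, nsmul_eq_mul, mul_left_comm _ N, ← mul_sum, hv.sum_sq,
      hv.sum_eq_zero, Matrix.trace, Matrix.diag_apply]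
    ring
  have h_off : ∑ i, ∑ j, (v i - v j) ^ 2 * M i j = -2 * (v ⬝ᵥ M *ᵥ v) := by
    have h_expand (i j : ι) : (v i - v j) ^ 2 * M i j
        = v i ^ 2 * M i j + v j ^ 2 * M j i - 2 * (M i j * (v i * v j)) := by
      rw [hM.isSymm.apply]
      ring
    simp_rw [h_expand, sum_sub_distrib, sum_add_distrib]
    rw [sum_comm (f := fun i j => v j ^ 2 * M j i)]
    simp_rw [← mul_sum, sum_row_eq_zero hM.mulVec_one, dotProduct_mulVec_eq_sum]
    simp
  simp_rw [mul_sub, sum_sub_distrib, h_diag, mul_left_comm _ (2 : ℝ), ← mul_sum, h_off]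
  ring

lemma IsCenteredProj.swapLaplacian_quadFluctuation (hM : IsCenteredProj M)
    (hx : IsStandardized x) (σ : Equiv.Perm ι) :
    swapLaplacian (quadFluctuation x M) σ
      = (4 * N - 4) * quadFluctuation x M σ - 2 * N * diagFluctuation x M σ := by
  have hN : (2 : ℝ) ≤ N := mod_cast hx.two_le_card
  have h_cross := sum_sum_sub_mul_sub (x ∘ σ) (M *ᵥ (x ∘ σ))
  rw [hM.sum_mulVec, mul_zero, sub_zero] at h_cross
  have h_sq := hM.sum_sum_sub_sq_mul (hx.comp_perm σ)
  simp only [Function.comp_apply] at h_cross h_sq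
  simp_rw [swapLaplacian, quadFluctuation_sub_swap hM.isSymm, sum_sub_distrib, ← mul_sum, h_cross,
    h_sq]
  simp only [quadFluctuation, diagFluctuation, dotProduct, Function.comp_apply, Matrix.diag_apply]
  have : N - 1 ≠ 0 := by linarith
  field_simp
  ring

end QuadraticStatistics
section FluctuationMoments

variable {ι : Type*} [Fintype ι]

local notation "N" => (Fintype.card ι : ℝ)

variable {x : ι → ℝ} {M : Matrix ι ι ℝ} {b : ℝ}

lemma IsBoundedScore.one_le (hx : IsBoundedScore b x) : 1 ≤ b := by
  have hN : (2 : ℝ) ≤ N := mod_cast hx.two_le_card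
  calc 1 = ∑ i, x i ^ 2 := hx.sum_sq.symm
    _ ≤ ∑ _i : ι, b / N := sum_le_sum fun i _ => hx.sq_le i
    _ = b := by
      rw [sum_const, card_univ, nsmul_eq_mul]
      field_simp

variable [DecidableEq ι]

lemma IsBoundedScore.swapEnergy_diagFluctuation_le (hx : IsBoundedScore b x)
    (hM : IsCenteredProj M) (σ : Equiv.Perm ι) : swapEnergy (diagFluctuation x M) σ ≤ b ^ 2 := by
  have hN : (2 : ℝ) ≤ N := mod_cast hx.two_le_card
  have h_term (i j : ι) : ((x (σ i) ^ 2 - x (σ j) ^ 2) * (M i i - M j j)) ^ 2 ≤ (b / N) ^ 2 := by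
    refine sq_le_sq' (abs_le.1 ?_).1 (abs_le.1 ?_).2 <;>
    · rw [abs_mul, ← mul_one (b / N)]
      gcongr
      · exact (abs_nonneg _).trans (abs_sub_le_of_nonneg_of_le (sq_nonneg _) (hx.sq_le (σ i))
          (sq_nonneg _) (hx.sq_le (σ j)))
      · exact abs_sub_le_of_nonneg_of_le (sq_nonneg _) (hx.sq_le _) (sq_nonneg _) (hx.sq_le _)
      · exact abs_sub_le_of_nonneg_of_le (hM.diag_nonneg i) (hM.diag_le_one i) (hM.diag_nonneg j)
          (hM.diag_le_one j)
  simp_rw [swapEnergy, diagFluctuation_sub_swap]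
  calc ∑ i, ∑ j, ((x (σ i) ^ 2 - x (σ j) ^ 2) * (M i i - M j j)) ^ 2
      ≤ ∑ _i : ι, ∑ _j : ι, (b / N) ^ 2 :=
        sum_le_sum fun i _ => sum_le_sum fun j _ => h_term i j
    _ = b ^ 2 := by
      simp only [sum_const, card_univ, nsmul_eq_mul]
      field_simp

lemma IsBoundedScore.sub_swap_quadFluctuation_sq_le (hx : IsBoundedScore b x)
    (hM : IsCenteredProj M) (σ : Equiv.Perm ι) (i j : ι) :
    (quadFluctuation x M σ - quadFluctuation x M (σ * Equiv.swap i j)) ^ 2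
      ≤ 32 * b / N * (((M *ᵥ (x ∘ σ)) i - (M *ᵥ (x ∘ σ)) j)
          * ((M *ᵥ (x ∘ σ)) i - (M *ᵥ (x ∘ σ)) j)) + 512 * b ^ 2 / N ^ 2 := by
  set w := M *ᵥ (x ∘ σ)
  set d := x (σ i) - x (σ j)
  set e := M i i + M j j - 2 * M i j
  have h_d : d ^ 2 ≤ 4 * b / N := by
    calc d ^ 2 ≤ 2 * x (σ i) ^ 2 + 2 * x (σ j) ^ 2 := by nlinarith [sq_nonneg (x (σ i) + x (σ j))]
      _ ≤ 2 * (b / N) + 2 * (b / N) := by gcongr <;> exact hx.sq_le _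
      _ = 4 * b / N := by ring
  have h_quad : (d ^ 2 * e) ^ 2 ≤ (4 * b / N * 4) ^ 2 := by
    have h_nonneg : 0 ≤ e := hM.diag_add_diag_sub_nonneg i j
    have h_le : e ≤ 4 := hM.diag_add_diag_sub_le i j
    gcongr
    exact (sq_nonneg d).trans h_d
  rw [quadFluctuation_sub_swap hM.isSymm]
  calc (2 * (d * (w i - w j)) - d ^ 2 * e) ^ 2
      ≤ 8 * (d ^ 2 * (w i - w j) ^ 2) + 2 * (d ^ 2 * e) ^ 2 := by
        nlinarith [sq_nonneg (2 * (d * (w i - w j)) + d ^ 2 * e)]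
    _ ≤ 8 * (4 * b / N * (w i - w j) ^ 2) + 2 * (4 * b / N * 4) ^ 2 := by gcongr
    _ = 32 * b / N * ((w i - w j) * (w i - w j)) + 512 * b ^ 2 / N ^ 2 := by ring

lemma IsBoundedScore.swapEnergy_quadFluctuation_le (hx : IsBoundedScore b x)
    (hM : IsCenteredProj M) (σ : Equiv.Perm ι) :
    swapEnergy (quadFluctuation x M) σ ≤ 576 * b ^ 2 := by
  have hN : (2 : ℝ) ≤ N := mod_cast hx.two_le_card
  have hb := hx.one_le
  set w := M *ᵥ (x ∘ σ)
  have h_norm : ∑ i, w i * w i ≤ 1 := by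
    have h_le := hM.dotProduct_mulVec_self_le (x ∘ σ)
    rw [(hx.comp_perm σ).sum_sq, hM.dotProduct_mulVec_self] at h_le
    simpa only [← pow_two] using h_le
  have h_sum := sum_sum_sub_mul_sub w w
  rw [hM.sum_mulVec, mul_zero, sub_zero] at h_sum
  calc swapEnergy (quadFluctuation x M) σ
      ≤ ∑ i, ∑ j, (32 * b / N * ((w i - w j) * (w i - w j)) + 512 * b ^ 2 / N ^ 2) :=
        sum_le_sum fun i _ => sum_le_sum fun j _ => hx.sub_swap_quadFluctuation_sq_le hM σ i j
    _ = 64 * b * (∑ i, w i * w i) + 512 * b ^ 2 := by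
        simp only [sum_add_distrib, ← mul_sum, h_sum, sum_const, card_univ, nsmul_eq_mul]
        field_simp
        ring
    _ ≤ 64 * b * 1 + 512 * b ^ 2 := by gcongr
    _ ≤ 576 * b ^ 2 := by nlinarith

lemma IsBoundedScore.expect_diagFluctuation_sq_le (hx : IsBoundedScore b x)
    (hM : IsCenteredProj M) : (𝔼 σ, diagFluctuation x M σ ^ 2) ≤ b ^ 2 / (4 * N) := by
  have hN : (2 : ℝ) ≤ N := mod_cast hx.two_le_card
  have h_poincare := expect_mul_swapLaplacian_self_le (hx.swapEnergy_diagFluctuation_le hM)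
  simp_rw [hx.swapLaplacian_diagFluctuation, mul_left_comm (diagFluctuation x M _), ← pow_two,
    ← mul_expect] at h_poincare
  rw [le_div_iff₀ (by positivity)]
  linarith

lemma IsBoundedScore.expect_diagFluctuation_pow_four_le (hx : IsBoundedScore b x)
    (hM : IsCenteredProj M) : (𝔼 σ, diagFluctuation x M σ ^ 4) ≤ b ^ 4 / N ^ 2 := by
  have hN : (2 : ℝ) ≤ N := mod_cast hx.two_le_card
  have h_poincare := expect_cube_mul_swapLaplacian_le (hx.swapEnergy_diagFluctuation_le hM)
  simp_rw [hx.swapLaplacian_diagFluctuation, mul_left_comm (diagFluctuation x M _ ^ 3), ← pow_succ,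
    ← mul_expect] at h_poincare
  have h_sq := hx.expect_diagFluctuation_sq_le hM
  rw [le_div_iff₀ (by positivity)] at h_sq ⊢
  nlinarith [sq_nonneg (b ^ 2)]

lemma IsBoundedScore.expect_quadFluctuation_sq_le (hx : IsBoundedScore b x)
    (hM : IsCenteredProj M) : (𝔼 σ, quadFluctuation x M σ ^ 2) ≤ 289 * b ^ 2 / N := by
  have hN : (2 : ℝ) ≤ N := mod_cast hx.two_le_card
  have h_poincare := expect_mul_swapLaplacian_self_le (hx.swapEnergy_quadFluctuation_le hM)
  simp_rw [hM.swapLaplacian_quadFluctuation hx.toIsStandardized] at h_poincare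
  have h_young : (3 * N - 4) * (𝔼 σ, quadFluctuation x M σ ^ 2)
      - N * (𝔼 σ, diagFluctuation x M σ ^ 2)
      ≤ 𝔼 σ, quadFluctuation x M σ
        * ((4 * N - 4) * quadFluctuation x M σ - 2 * N * diagFluctuation x M σ) := by
    rw [mul_expect, mul_expect, ← expect_sub_distrib]
    refine expect_le_expect fun σ _ => ?_
    nlinarith [mul_nonneg (zero_le_two.trans hN)
      (sq_nonneg (quadFluctuation x M σ - diagFluctuation x M σ))]
  have h_diag := hx.expect_diagFluctuation_sq_le hM
  have h_nonneg : 0 ≤ 𝔼 σ, quadFluctuation x M σ ^ 2 := expect_nonneg fun _ _ => sq_nonneg _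
  rw [le_div_iff₀ (by positivity)] at h_diag ⊢
  nlinarith

lemma four_mul_cube_mul_le (u v : ℝ) : 4 * (u ^ 3 * v) ≤ 3 * u ^ 4 + v ^ 4 := by
  nlinarith [sq_nonneg (u ^ 2 - v ^ 2), sq_nonneg (u * (u - v)), sq_nonneg (u ^ 2 - u * v)]

lemma IsBoundedScore.expect_quadFluctuation_pow_four_le (hx : IsBoundedScore b x)
    (hM : IsCenteredProj M) : (𝔼 σ, quadFluctuation x M σ ^ 4) ≤ 500000 * b ^ 4 / N ^ 2 := by
  have hN : (2 : ℝ) ≤ N := mod_cast hx.two_le_card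
  have h_poincare := expect_cube_mul_swapLaplacian_le (hx.swapEnergy_quadFluctuation_le hM)
  simp_rw [hM.swapLaplacian_quadFluctuation hx.toIsStandardized] at h_poincare
  have h_young : (5 / 2 * N - 4) * (𝔼 σ, quadFluctuation x M σ ^ 4)
      - N / 2 * (𝔼 σ, diagFluctuation x M σ ^ 4)
      ≤ 𝔼 σ, quadFluctuation x M σ ^ 3
        * ((4 * N - 4) * quadFluctuation x M σ - 2 * N * diagFluctuation x M σ) := by
    rw [mul_expect, mul_expect, ← expect_sub_distrib]
    refine expect_le_expect fun σ _ => ?_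
    nlinarith [four_mul_cube_mul_le (quadFluctuation x M σ) (diagFluctuation x M σ)]
  have : 0 ≤ 𝔼 σ, quadFluctuation x M σ ^ 4 := expect_nonneg fun _ _ => by positivity
  have h_bound : N / 2 * (𝔼 σ, quadFluctuation x M σ ^ 4) ≤ 250000 * b ^ 4 / N := by
    calc N / 2 * (𝔼 σ, quadFluctuation x M σ ^ 4)
        ≤ (5 / 2 * N - 4) * (𝔼 σ, quadFluctuation x M σ ^ 4) := by gcongr; linarith
      _ ≤ 3 / 2 * (576 * b ^ 2) * (𝔼 σ, quadFluctuation x M σ ^ 2)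
          + N / 2 * (𝔼 σ, diagFluctuation x M σ ^ 4) := by linarith
      _ ≤ 3 / 2 * (576 * b ^ 2) * (289 * b ^ 2 / N) + N / 2 * (b ^ 4 / N ^ 2) := by
        gcongr
        · exact hx.expect_quadFluctuation_sq_le hM
        · exact hx.expect_diagFluctuation_pow_four_le hM
      _ ≤ 250000 * b ^ 4 / N := by
        field_simp
        nlinarith [sq_nonneg (b ^ 2)]
  rw [le_div_iff₀ (by positivity)] at h_bound ⊢
  linarith

end FluctuationMoments
section GramSchmidt

variable {ι : Type*} [Fintype ι]

local notation "N" => (Fintype.card ι : ℝ)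

/-- `e` is a unit vector in the range of the projection `M`, along the residual `M *ᵥ u`; it is not
unique when this residual vanishes. -/
structure IsResidualDirection (M : Matrix ι ι ℝ) (u e : ι → ℝ) : Prop where
  sum_sq : ∑ i, e i ^ 2 = 1
  mulVec_self : M *ᵥ e = e
  mulVec_eq : M *ᵥ u = √(u ⬝ᵥ M *ᵥ u) • e

lemma IsResidualDirection.dotProduct_self {M : Matrix ι ι ℝ} {u e : ι → ℝ}
    (he : IsResidualDirection M u e) : e ⬝ᵥ e = 1 := by
  simpa only [dotProduct, pow_two] using he.sum_sq

namespace IsCenteredProj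

variable {M : Matrix ι ι ℝ} (hM : IsCenteredProj M)
include hM

lemma exists_unit_mulVec_eq_self (h_trace : M.trace ≠ 0) :
    ∃ e : ι → ℝ, ∑ i, e i ^ 2 = 1 ∧ M *ᵥ e = e := by
  obtain ⟨a, -, ha⟩ := exists_ne_zero_of_sum_ne_zero h_trace
  have ha_pos : 0 < M a a := (hM.diag_nonneg a).lt_of_ne ha.symm
  refine ⟨(√(M a a))⁻¹ • M a, ?_, ?_⟩
  · simp_rw [Pi.smul_apply, smul_eq_mul, mul_pow, inv_pow, Real.sq_sqrt ha_pos.le, ← mul_sum,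
      hM.sum_row_sq, inv_mul_cancel₀ ha_pos.ne']
  · have h_row : M *ᵥ M a = M a := by
      ext i
      conv_rhs => rw [← hM.mul_self, Matrix.mul_apply]
      refine sum_congr rfl fun j _ => ?_
      change M i j * M a j = M a j * M j i
      rw [hM.isSymm.apply i j, mul_comm]
    rw [Matrix.mulVec_smul, h_row]

lemma exists_isResidualDirection (h_trace : M.trace ≠ 0) (u : ι → ℝ) :
    ∃ e, IsResidualDirection M u e := by
  rcases (hM.dotProduct_mulVec_self_nonneg u).eq_or_lt with h_zero | h_pos
  · obtain ⟨e, he_unit, he_fixed⟩ := hM.exists_unit_mulVec_eq_self h_trace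
    refine ⟨e, he_unit, he_fixed, ?_⟩
    have h_sum := hM.dotProduct_mulVec_self u
    rw [← h_zero, eq_comm, sum_eq_zero_iff_of_nonneg fun _ _ => sq_nonneg _] at h_sum
    rw [← h_zero, Real.sqrt_zero, zero_smul]
    exact funext fun i => pow_eq_zero_iff two_ne_zero |>.1 (h_sum i (mem_univ i))
  · refine ⟨(√(u ⬝ᵥ M *ᵥ u))⁻¹ • M *ᵥ u, ?_, ?_, ?_⟩
    · simp_rw [Pi.smul_apply, smul_eq_mul, mul_pow, inv_pow, Real.sq_sqrt h_pos.le, ← mul_sum,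
        ← hM.dotProduct_mulVec_self, inv_mul_cancel₀ h_pos.ne']
    · rw [Matrix.mulVec_smul, hM.mulVec_mulVec]
    · rw [smul_inv_smul₀ (Real.sqrt_pos.2 h_pos).ne']

lemma sub_vecMulVec_self {e : ι → ℝ} (he : e ⬝ᵥ e = 1) (hMe : M *ᵥ e = e) :
    IsCenteredProj (M - Matrix.vecMulVec e e) where
  isSymm := by
    rw [Matrix.IsSymm, Matrix.transpose_sub, hM.isSymm, Matrix.transpose_vecMulVec]
  mul_self := by
    have heM : e ᵥ* M = e := by rw [← Matrix.mulVec_transpose, hM.isSymm, hMe]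
    rw [sub_mul, mul_sub, mul_sub, hM.mul_self, Matrix.mul_vecMulVec, Matrix.vecMulVec_mul, hMe,
      heM, Matrix.vecMulVec_mul_vecMulVec, he, one_smul]
    abel
  mulVec_one := by
    have he_sum : e ⬝ᵥ 1 = 0 := by
      rw [← hMe, ← hM.dotProduct_mulVec_comm, hM.mulVec_one, dotProduct_zero]
    rw [Matrix.sub_mulVec, hM.mulVec_one, Matrix.vecMulVec_mulVec, he_sum]
    simp

end IsCenteredProj

/-- A residual direction of `u` for `M`, chosen arbitrarily among the possible ones. -/
noncomputable def nextDirection (M : Matrix ι ι ℝ) (u : ι → ℝ) : ι → ℝ :=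
  Classical.epsilon (IsResidualDirection M u)

lemma IsCenteredProj.isResidualDirection_nextDirection {M : Matrix ι ι ℝ} (hM : IsCenteredProj M)
    (h_trace : M.trace ≠ 0) (u : ι → ℝ) : IsResidualDirection M u (nextDirection M u) :=
  Classical.epsilon_spec (hM.exists_isResidualDirection h_trace u)

variable [DecidableEq ι]

lemma isCenteredProj_centering :
    IsCenteredProj (1 - N⁻¹ • Matrix.vecMulVec 1 1 : Matrix ι ι ℝ) := by
  rcases isEmpty_or_nonempty ι with _ | _
  · exact ⟨Subsingleton.elim _ _, Subsingleton.elim _ _, Subsingleton.elim _ _⟩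
  have hN : N ≠ 0 := by positivity
  refine ⟨?_, ?_, ?_⟩
  · rw [Matrix.IsSymm, Matrix.transpose_sub, Matrix.transpose_one, Matrix.transpose_smul,
      Matrix.transpose_vecMulVec]
  · rw [sub_mul, mul_sub, mul_sub, one_mul, mul_one, one_mul, Matrix.smul_mul, Matrix.mul_smul,
      Matrix.vecMulVec_mul_vecMulVec, one_dotProduct_one, Matrix.vecMulVec_smul, smul_smul,
      smul_smul, mul_assoc, inv_mul_cancel₀ hN, mul_one, sub_self, sub_zero]
  · rw [Matrix.sub_mulVec, Matrix.one_mulVec, Matrix.smul_mulVec, Matrix.vecMulVec_mulVec,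
      one_dotProduct_one]
    ext i
    simp [hN]

/-- The projection onto the orthogonal complement of the constants and of the first `k`
Gram–Schmidt directions of the sequence `U`. An arbitrary direction is spent on every linearly
dependent vector, so that the rank decreases by one in each step. -/
noncomputable def residualProj (U : ℕ → ι → ℝ) : ℕ → Matrix ι ι ℝ
  | 0 => 1 - N⁻¹ • Matrix.vecMulVec 1 1
  | k + 1 => residualProj U k - Matrix.vecMulVec
      (nextDirection (residualProj U k) (U k)) (nextDirection (residualProj U k) (U k))

/-- The `k`-th Gram–Schmidt direction of the sequence `U`. -/
noncomputable def direction (U : ℕ → ι → ℝ) (k : ℕ) : ι → ℝ :=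
  nextDirection (residualProj U k) (U k)

variable {U V : ℕ → ι → ℝ} {j k : ℕ}

lemma residualProj_congr (h : ∀ j < k, U j = V j) : residualProj U k = residualProj V k := by
  induction k with
  | zero => rfl
  | succ k ih =>
    rw [residualProj, residualProj, ih fun j hj => h j (by lia), h k (by lia)]

lemma residualProj_succ_mulVec (U : ℕ → ι → ℝ) (k : ℕ) (v : ι → ℝ) :
    residualProj U (k + 1) *ᵥ v
      = residualProj U k *ᵥ v - (direction U k ⬝ᵥ v) • direction U k := by
  rw [residualProj, Matrix.sub_mulVec, Matrix.vecMulVec_mulVec, op_smul_eq_smul]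
  rfl

lemma residualProj_spec (U : ℕ → ι → ℝ) (hk : k < Fintype.card ι) :
    IsCenteredProj (residualProj U k) ∧ (residualProj U k).trace = N - 1 - k := by
  induction k with
  | zero =>
    refine ⟨isCenteredProj_centering, ?_⟩
    have hN : N ≠ 0 := by positivity
    rw [residualProj, Matrix.trace_sub, Matrix.trace_one, Matrix.trace_smul,
      Matrix.trace_vecMulVec, one_dotProduct_one, smul_eq_mul, inv_mul_cancel₀ hN]
    simp
  | succ k ih =>
    obtain ⟨h_proj, h_trace⟩ := ih (by lia)
    have hk_cast : (k : ℝ) + 1 < N := by exact_mod_cast hk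
    have h_dir : IsResidualDirection (residualProj U k) (U k) (direction U k) :=
      h_proj.isResidualDirection_nextDirection (by rw [h_trace]; intro h; linarith) (U k)
    refine ⟨h_proj.sub_vecMulVec_self h_dir.dotProduct_self h_dir.mulVec_self, ?_⟩
    change (residualProj U k - Matrix.vecMulVec (direction U k) (direction U k)).trace = _
    rw [Matrix.trace_sub, Matrix.trace_vecMulVec, h_trace,
      h_dir.dotProduct_self]
    push_cast
    ring

lemma isCenteredProj_residualProj (U : ℕ → ι → ℝ) (hk : k < Fintype.card ι) :
    IsCenteredProj (residualProj U k) := (residualProj_spec U hk).1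

lemma trace_residualProj (U : ℕ → ι → ℝ) (hk : k < Fintype.card ι) :
    (residualProj U k).trace = N - 1 - k := (residualProj_spec U hk).2

lemma isResidualDirection_direction (U : ℕ → ι → ℝ) (hk : k + 1 < Fintype.card ι) :
    IsResidualDirection (residualProj U k) (U k) (direction U k) := by
  refine (isCenteredProj_residualProj U (by lia)).isResidualDirection_nextDirection ?_ _
  have hk_cast : (k : ℝ) + 1 < N := by exact_mod_cast hk
  rw [trace_residualProj U (by lia)]
  intro h
  linarith

lemma direction_dotProduct_mulVec (U : ℕ → ι → ℝ) (hk : k + 1 < Fintype.card ι) (v : ι → ℝ) :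
    direction U k ⬝ᵥ residualProj U k *ᵥ v = direction U k ⬝ᵥ v := by
  rw [(isCenteredProj_residualProj U (by lia)).dotProduct_mulVec_comm,
    (isResidualDirection_direction U hk).mulVec_self]

lemma sum_direction (U : ℕ → ι → ℝ) (hk : k + 1 < Fintype.card ι) : ∑ i, direction U k i = 0 := by
  rw [← (isResidualDirection_direction U hk).mulVec_self]
  exact (isCenteredProj_residualProj U (by lia)).sum_mulVec _

lemma direction_dotProduct_self (U : ℕ → ι → ℝ) (hk : k + 1 < Fintype.card ι) :
    direction U k ⬝ᵥ U k = √(U k ⬝ᵥ residualProj U k *ᵥ U k) := by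
  have h_dir := isResidualDirection_direction U hk
  conv_lhs => rw [← direction_dotProduct_mulVec U hk, h_dir.mulVec_eq, dotProduct_smul,
    h_dir.dotProduct_self, smul_eq_mul, mul_one]

lemma residualProj_mulVec_of_lt (U : ℕ → ι → ℝ) (hjk : j < k) (hk : k < Fintype.card ι) :
    residualProj U k *ᵥ U j = 0 := by
  induction k, hjk using Nat.le_induction with
  | base =>
    rw [residualProj_succ_mulVec, direction_dotProduct_self U hk]
    exact sub_eq_zero.2 (isResidualDirection_direction U hk).mulVec_eq
  | succ k _ ih =>
    have h_zero := ih (by lia)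
    rw [residualProj_succ_mulVec, ← direction_dotProduct_mulVec U hk, h_zero]
    simp

lemma direction_dotProduct_of_lt (U : ℕ → ι → ℝ) (hjk : j < k) (hk : k + 1 < Fintype.card ι) :
    direction U k ⬝ᵥ U j = 0 := by
  rw [← direction_dotProduct_mulVec U hk, residualProj_mulVec_of_lt U hjk (by lia),
    dotProduct_zero]

lemma sum_direction_add_residualProj_mulVec (U : ℕ → ι → ℝ) (k : ℕ) {v : ι → ℝ}
    (hv : ∑ i, v i = 0) :
    ∑ j ∈ range k, (direction U j ⬝ᵥ v) • direction U j + residualProj U k *ᵥ v = v := by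
  induction k with
  | zero =>
    rw [residualProj, Matrix.sub_mulVec, Matrix.smul_mulVec, Matrix.vecMulVec_mulVec,
      one_dotProduct, hv]
    simp
  | succ k ih =>
    conv_rhs => rw [← ih]
    rw [sum_range_succ, residualProj_succ_mulVec]
    abel

/-- The upper triangular factor of the QR decomposition of the first `p` vectors of `U`. -/
noncomputable def gramFactor (p : ℕ) (U : ℕ → ι → ℝ) : Matrix (Fin p) (Fin p) ℝ :=
  Matrix.of fun j k => direction U j ⬝ᵥ U k

/-- The Gram matrix of the first `p` vectors of `U`. -/
def gramMatrix (p : ℕ) (U : ℕ → ι → ℝ) : Matrix (Fin p) (Fin p) ℝ :=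
  Matrix.of fun j k => U j ⬝ᵥ U k

variable {p : ℕ}

lemma gramMatrix_eq_transpose_mul (hp : p < Fintype.card ι) (hU : ∀ k < p, ∑ i, U k i = 0) :
    gramMatrix p U = (gramFactor p U)ᵀ * gramFactor p U := by
  ext a b
  have h_expand := sum_direction_add_residualProj_mulVec U p (hU a a.2)
  rw [residualProj_mulVec_of_lt U a.2 hp, add_zero,
    ← Fin.sum_univ_eq_sum_range fun j => (direction U j ⬝ᵥ U a) • direction U j] at h_expand
  simp only [gramMatrix, gramFactor, Matrix.mul_apply, Matrix.transpose_apply, Matrix.of_apply]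
  conv_lhs => rw [← h_expand, sum_dotProduct]
  simp only [smul_dotProduct, smul_eq_mul]

lemma blockTriangular_gramFactor (hp : p < Fintype.card ι) (U : ℕ → ι → ℝ) :
    (gramFactor p U).BlockTriangular id := fun i _ hji =>
  direction_dotProduct_of_lt U hji (by lia)

lemma gramFactor_apply_self (hp : p < Fintype.card ι) (U : ℕ → ι → ℝ) (k : Fin p) :
    gramFactor p U k k = √(U k ⬝ᵥ residualProj U k *ᵥ U k) :=
  direction_dotProduct_self U (by lia)

lemma gramFactor_apply_self_sq (hp : p < Fintype.card ι) (U : ℕ → ι → ℝ) (k : Fin p) :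
    gramFactor p U k k ^ 2 = U k ⬝ᵥ residualProj U k *ᵥ U k := by
  rw [gramFactor_apply_self hp, Real.sq_sqrt]
  exact (isCenteredProj_residualProj U (by lia)).dotProduct_mulVec_self_nonneg _

lemma det_gramMatrix (hp : p < Fintype.card ι) (hU : ∀ k < p, ∑ i, U k i = 0) :
    (gramMatrix p U).det = ∏ k : Fin p, U k ⬝ᵥ residualProj U k *ᵥ U k := by
  rw [gramMatrix_eq_transpose_mul hp hU, Matrix.det_mul, Matrix.det_transpose,
    Matrix.det_of_isUpperTriangular (blockTriangular_gramFactor hp U), ← prod_mul_distrib]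
  simp_rw [← pow_two, gramFactor_apply_self_sq hp]

end GramSchmidt
section MomentCoefficients

lemma diagCoeff_mul_add_pairCoeff_mul {M : ℝ} (hM : 3 < M) (s : ℝ) :
    diagCoeff M s * (M - 1) ^ 2 / M + pairCoeff M s * (M ^ 2 - 1) = 1 := by
  have h0 : M ≠ 0 := by linarith
  have h1 : M - 1 ≠ 0 := by linarith
  have h2 : M - 2 ≠ 0 := by linarith
  have h3 : M - 3 ≠ 0 := by linarith
  rw [diagCoeff, pairCoeff]
  field_simp
  ring

variable {M s : ℝ}

lemma inv_mul_sub_one_le (hM : 6 ≤ M) : 1 / (M * (M - 1)) ≤ 2 / M ^ 2 := by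
  rw [div_le_div_iff₀ (by nlinarith) (by positivity)]
  nlinarith

lemma inv_mul_sub_one_mul_sub_two_le (hM : 6 ≤ M) :
    1 / (M * (M - 1) * (M - 2)) ≤ 2 / 3 / M ^ 2 := by
  have h_inv : 1 / (M - 2) ≤ 1 / 3 := one_div_le_one_div_of_le three_pos (by linarith)
  calc 1 / (M * (M - 1) * (M - 2))
      = 1 / (M * (M - 1)) * (1 / (M - 2)) := by rw [one_div_mul_one_div]
    _ ≤ 2 / M ^ 2 * (1 / 3) :=
      mul_le_mul (inv_mul_sub_one_le hM) h_inv (one_div_nonneg.2 (by linarith)) (by positivity)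
    _ = 2 / 3 / M ^ 2 := by ring

lemma inv_mul_sub_one_mul_sub_two_mul_sub_three_le (hM : 6 ≤ M) :
    1 / (M * (M - 1) * (M - 2) * (M - 3)) ≤ 2 / 9 / M ^ 2 := by
  have h_inv : 1 / (M - 3) ≤ 1 / 3 := one_div_le_one_div_of_le three_pos (by linarith)
  calc 1 / (M * (M - 1) * (M - 2) * (M - 3))
      = 1 / (M * (M - 1) * (M - 2)) * (1 / (M - 3)) := by rw [one_div_mul_one_div]
    _ ≤ 2 / 3 / M ^ 2 * (1 / 3) :=
      mul_le_mul (inv_mul_sub_one_mul_sub_two_le hM) h_inv (one_div_nonneg.2 (by linarith))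
        (by positivity)
    _ = 2 / 9 / M ^ 2 := by ring

lemma abs_diagCoeff_le (hM : 6 ≤ M) (hs0 : 0 ≤ s) (hs : s ≤ 1 / 2) :
    |diagCoeff M s| ≤ s / M + 20 / M ^ 2 := by
  have hA := inv_mul_sub_one_le hM
  have hB := inv_mul_sub_one_mul_sub_two_le hM
  have hC := inv_mul_sub_one_mul_sub_two_mul_sub_three_le hM
  have h1 : 0 ≤ M - 1 := by linarith
  have h2 : 0 ≤ M - 2 := by linarith
  have h3 : 0 ≤ M - 3 := by linarith
  have hA0 : 0 ≤ 1 / (M * (M - 1)) := by positivity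
  have hB0 : 0 ≤ 1 / (M * (M - 1) * (M - 2)) := by positivity
  have hC0 : 0 ≤ 1 / (M * (M - 1) * (M - 2) * (M - 3)) := by positivity
  have hsM : 0 ≤ s / M := by positivity
  have h_eq : diagCoeff M s = s / M - (3 - 7 * s) * (1 / (M * (M - 1)))
      - 12 * ((1 - 2 * s) * (1 / (M * (M - 1) * (M - 2))))
      - 18 * ((1 - 2 * s) * (1 / (M * (M - 1) * (M - 2) * (M - 3)))) := by
    rw [diagCoeff]
    ring
  have hs' : 0 ≤ 1 - 2 * s := by linarith
  have h_div (c : ℝ) : c / M ^ 2 = c * (1 / M ^ 2) := by ring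
  rw [h_div] at hA hB hC
  rw [h_eq, h_div, abs_le]
  constructor <;>
    nlinarith [mul_nonneg hs0 hA0, mul_nonneg hs' hA0, mul_nonneg hs' hB0, mul_nonneg hs' hC0,
      mul_nonneg hs0 hB0, mul_nonneg hs0 hC0]

lemma pairCoeff_eq (M s : ℝ) : pairCoeff M s = (1 - s) * (1 / (M * (M - 1)))
    + 2 * (1 - 2 * s) * (1 / (M * (M - 1) * (M - 2)))
    + 3 * (1 - 2 * s) * (1 / (M * (M - 1) * (M - 2) * (M - 3))) := by
  rw [pairCoeff]
  ring

lemma pairCoeff_nonneg (hM : 6 ≤ M) (hs : s ≤ 1 / 2) : 0 ≤ pairCoeff M s := by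
  have : 0 ≤ M - 1 := by linarith
  have : 0 ≤ M - 2 := by linarith
  have : 0 ≤ M - 3 := by linarith
  have : 0 ≤ 1 - s := by linarith
  have : 0 ≤ 1 - 2 * s := by linarith
  rw [pairCoeff_eq]
  positivity

lemma pairCoeff_le (hM : 6 ≤ M) (hs0 : 0 ≤ s) : pairCoeff M s ≤ 4 / M ^ 2 := by
  calc pairCoeff M s
      ≤ 1 * (2 / M ^ 2) + 2 * (2 / 3 / M ^ 2) + 3 * (2 / 9 / M ^ 2) := by
        rw [pairCoeff_eq]
        refine add_le_add_three ?_ ?_ ?_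
        · exact mul_le_mul (by linarith) (inv_mul_sub_one_le hM)
            (one_div_nonneg.2 (by nlinarith)) zero_le_one
        · exact mul_le_mul (by linarith) (inv_mul_sub_one_mul_sub_two_le hM)
            (one_div_nonneg.2 (mul_nonneg (by nlinarith) (by linarith))) two_pos.le
        · exact mul_le_mul (by linarith) (inv_mul_sub_one_mul_sub_two_mul_sub_three_le hM)
            (one_div_nonneg.2 (mul_nonneg (mul_nonneg (by nlinarith) (by linarith))
              (by linarith))) three_pos.le
    _ = 4 / M ^ 2 := by ring

variable {ι : Type*} [Fintype ι]

local notation "N" => (Fintype.card ι : ℝ)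

variable {x : ι → ℝ} {b : ℝ}

namespace IsBoundedScore

lemma sum_pow_four_le (hx : IsBoundedScore b x) : ∑ i, x i ^ 4 ≤ b / N := by
  calc ∑ i, x i ^ 4 = ∑ i, x i ^ 2 * x i ^ 2 := sum_congr rfl fun i _ => by ring
    _ ≤ ∑ i, b / N * x i ^ 2 := by
      gcongr with i
      exact hx.sq_le i
    _ = b / N := by rw [← mul_sum, hx.sum_sq, mul_one]

lemma six_le_card (hx : IsBoundedScore b x) (hN : 6 * b ≤ N) : 6 ≤ N := by
  linarith [hx.one_le]

lemma sum_pow_four_le_half (hx : IsBoundedScore b x) (hN : 6 * b ≤ N) :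
    ∑ i, x i ^ 4 ≤ 1 / 2 := by
  have hN6 := hx.six_le_card hN
  refine hx.sum_pow_four_le.trans ?_
  rw [div_le_div_iff₀ (by linarith) two_pos]
  linarith

lemma sum_pow_four_nonneg (x : ι → ℝ) : 0 ≤ ∑ i, x i ^ 4 := sum_nonneg fun _ _ => by positivity

lemma abs_diagCoeff_le (hx : IsBoundedScore b x) (hN : 6 * b ≤ N) :
    |diagCoeff N (∑ i, x i ^ 4)| ≤ 21 * b / N ^ 2 := by
  have hb := hx.one_le
  have hN6 := hx.six_le_card hN
  calc |diagCoeff N (∑ i, x i ^ 4)| ≤ (∑ i, x i ^ 4) / N + 20 / N ^ 2 :=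
        _root_.abs_diagCoeff_le hN6 (sum_pow_four_nonneg x) (hx.sum_pow_four_le_half hN)
    _ ≤ b / N / N + 20 * b / N ^ 2 := by
      gcongr
      · exact hx.sum_pow_four_le
      · linarith
    _ = 21 * b / N ^ 2 := by ring

lemma pairCoeff_nonneg (hx : IsBoundedScore b x) (hN : 6 * b ≤ N) :
    0 ≤ pairCoeff N (∑ i, x i ^ 4) :=
  _root_.pairCoeff_nonneg (hx.six_le_card hN) (hx.sum_pow_four_le_half hN)

lemma pairCoeff_le (hx : IsBoundedScore b x) (hN : 6 * b ≤ N) :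
    pairCoeff N (∑ i, x i ^ 4) ≤ 4 / N ^ 2 :=
  _root_.pairCoeff_le (hx.six_le_card hN) (sum_pow_four_nonneg x)

end IsBoundedScore

end MomentCoefficients

section RelativeFluctuation

variable {ι : Type*} [Fintype ι]

local notation "N" => (Fintype.card ι : ℝ)

/-- The relative deviation of the quadratic form of `M` at the permuted scores `x ∘ σ` from its
mean `M.trace / (N - 1)`. -/
noncomputable def relFluctuation (x : ι → ℝ) (M : Matrix ι ι ℝ) (σ : Equiv.Perm ι) : ℝ :=
  quadFluctuation x M σ * ((N - 1) / M.trace)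

/-- The variance of the diagonal of `M`, multiplied by its length. -/
noncomputable def diagDispersion (M : Matrix ι ι ℝ) : ℝ :=
  ∑ i, M i i ^ 2 - M.trace ^ 2 / N

variable {x : ι → ℝ} {M : Matrix ι ι ℝ} {b κ : ℝ}

lemma diagDispersion_nonneg (M : Matrix ι ι ℝ) : 0 ≤ diagDispersion M := by
  rcases isEmpty_or_nonempty ι with _ | _
  · simp [diagDispersion, Matrix.trace]
  rw [diagDispersion, sub_nonneg, div_le_iff₀ (by positivity), mul_comm]
  exact sq_sum_le_card_mul_sum_sq

lemma quadraticForm_mul_eq_one_add_relFluctuation (hN : 1 < N) (h_trace : M.trace ≠ 0)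
    (σ : Equiv.Perm ι) :
    ((x ∘ σ) ⬝ᵥ M *ᵥ (x ∘ σ)) * ((N - 1) / M.trace) = 1 + relFluctuation x M σ := by
  have : N - 1 ≠ 0 := by linarith
  rw [relFluctuation, quadFluctuation]
  field_simp
  ring

lemma card_sub_one_div_trace_le (hκ : 0 < κ) (hN : 0 < N) (h_trace : κ * N ≤ M.trace) :
    (N - 1) / M.trace ≤ 1 / κ := by
  have : 0 < κ * N := by positivity
  rw [div_le_div_iff₀ (by linarith) hκ]
  linarith

variable [DecidableEq ι]

lemma IsStandardized.expect_relFluctuation (hx : IsStandardized x) (hM : IsCenteredProj M) :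
    (𝔼 σ, relFluctuation x M σ) = 0 := by
  simp_rw [relFluctuation, quadFluctuation, ← expect_mul, expect_sub_distrib,
    hx.expect_quadraticForm hM.mulVec_one, Fintype.expect_const, sub_self, zero_mul]

lemma IsStandardized.expect_relFluctuation_sq (hx : IsStandardized x) (hM : IsCenteredProj M)
    (hN : 3 < N) (h_trace : M.trace ≠ 0) :
    (𝔼 σ, relFluctuation x M σ ^ 2)
      = 2 * pairCoeff N (∑ i, x i ^ 4) * (N - 1) * (N - 1 - M.trace) / M.trace
        + diagCoeff N (∑ i, x i ^ 4) * ((N - 1) / M.trace) ^ 2 * diagDispersion M := by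
  set R := (N - 1) / M.trace with hR
  set q : Equiv.Perm ι → ℝ := fun σ => (x ∘ σ) ⬝ᵥ M *ᵥ (x ∘ σ)
  have h_mean : (𝔼 σ, q σ) * R = 1 := by
    have : N - 1 ≠ 0 := by linarith
    rw [hx.expect_quadraticForm hM.mulVec_one, hR]
    field_simp
  have h_expand : (𝔼 σ, relFluctuation x M σ ^ 2) = R ^ 2 * (𝔼 σ, q σ ^ 2) - 1 := by
    have h_sq (σ : Equiv.Perm ι) :
        relFluctuation x M σ ^ 2 = R ^ 2 * q σ ^ 2 - 2 * (q σ * R) + 1 := by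
      have h_rel : q σ * R = 1 + relFluctuation x M σ :=
        quadraticForm_mul_eq_one_add_relFluctuation (by linarith) h_trace σ
      rw [← mul_pow, mul_comm R, h_rel]
      ring
    simp_rw [h_sq, expect_add_distrib, expect_sub_distrib, ← mul_expect, ← expect_mul, h_mean,
      Fintype.expect_const]
    ring
  have h_identity := diagCoeff_mul_add_pairCoeff_mul hN (∑ i, x i ^ 4)
  rw [h_expand, hx.expect_quadraticForm_sq hM.mulVec_one hM.isSymm, hM.sum_sum_sq, diagDispersion,
    hR]
  field_simp at h_identity ⊢
  linear_combination (M.trace ^ 2) * h_identity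

end RelativeFluctuation

section RelativeFluctuationBounds

variable {ι : Type*} [Fintype ι] [DecidableEq ι]

local notation "N" => (Fintype.card ι : ℝ)

variable {x : ι → ℝ} {M : Matrix ι ι ℝ} {b κ : ℝ}

namespace IsBoundedScore

variable (hx : IsBoundedScore b x) (hM : IsCenteredProj M) (hκ : 0 < κ)
  (h_trace : κ * Fintype.card ι ≤ M.trace)
include hx hM hκ h_trace

lemma expect_relFluctuation_sq_le :
    (𝔼 σ, relFluctuation x M σ ^ 2) ≤ 289 * (b / κ) ^ 2 / N := by
  have hN : (2 : ℝ) ≤ N := mod_cast hx.two_le_card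
  simp_rw [relFluctuation, mul_pow, ← expect_mul]
  calc (𝔼 σ, quadFluctuation x M σ ^ 2) * ((N - 1) / M.trace) ^ 2
      ≤ 289 * b ^ 2 / N * (1 / κ) ^ 2 := by
        have : 0 ≤ (N - 1) / M.trace :=
          div_nonneg (by linarith) ((by positivity : 0 ≤ κ * N).trans h_trace)
        have h_ratio := card_sub_one_div_trace_le hκ (by linarith) h_trace
        gcongr
        exact hx.expect_quadFluctuation_sq_le hM
    _ = 289 * (b / κ) ^ 2 / N := by ring

lemma expect_relFluctuation_pow_four_le :
    (𝔼 σ, relFluctuation x M σ ^ 4) ≤ 500000 * (b / κ) ^ 4 / N ^ 2 := by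
  have hN : (2 : ℝ) ≤ N := mod_cast hx.two_le_card
  simp_rw [relFluctuation, mul_pow, ← expect_mul]
  calc (𝔼 σ, quadFluctuation x M σ ^ 4) * ((N - 1) / M.trace) ^ 4
      ≤ 500000 * b ^ 4 / N ^ 2 * (1 / κ) ^ 4 := by
        have : 0 ≤ (N - 1) / M.trace :=
          div_nonneg (by linarith) ((by positivity : 0 ≤ κ * N).trans h_trace)
        have h_ratio := card_sub_one_div_trace_le hκ (by linarith) h_trace
        gcongr
        exact hx.expect_quadFluctuation_pow_four_le hM
    _ = 500000 * (b / κ) ^ 4 / N ^ 2 := by ring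

lemma expect_abs_relFluctuation_le :
    (𝔼 σ, |relFluctuation x M σ|) ≤ 17 * (b / κ) / √N := by
  have hb := hx.one_le
  refine le_of_sq_le_sq ?_ (by positivity)
  calc (𝔼 σ, |relFluctuation x M σ|) ^ 2 ≤ (𝔼 σ, relFluctuation x M σ ^ 2) := by
        simpa using expect_mul_sq_le_sq_mul_sq univ (fun σ => |relFluctuation x M σ|) 1
    _ ≤ 289 * (b / κ) ^ 2 / N := hx.expect_relFluctuation_sq_le hM hκ h_trace
    _ = (17 * (b / κ) / √N) ^ 2 := by
      rw [div_pow (17 * (b / κ)), Real.sq_sqrt (Nat.cast_nonneg _)]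
      ring

lemma expect_abs_relFluctuation_cube_le :
    (𝔼 σ, |relFluctuation x M σ| ^ 3) ≤ 12100 * (b / κ) ^ 3 / (N * √N) := by
  have hb := hx.one_le
  refine le_of_sq_le_sq ?_ (by positivity)
  calc (𝔼 σ, |relFluctuation x M σ| ^ 3) ^ 2
      ≤ (𝔼 σ, relFluctuation x M σ ^ 2) * (𝔼 σ, relFluctuation x M σ ^ 4) := by
        have h_cauchy := expect_mul_sq_le_sq_mul_sq univ (fun σ => |relFluctuation x M σ|)
          (fun σ => |relFluctuation x M σ| ^ 2)
        simp_rw [← pow_succ', ← pow_mul, sq_abs] at h_cauchy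
        simpa [Even.pow_abs (show Even 4 by decide)] using h_cauchy
    _ ≤ 289 * (b / κ) ^ 2 / N * (500000 * (b / κ) ^ 4 / N ^ 2) := by
        gcongr
        · exact hx.expect_relFluctuation_sq_le hM hκ h_trace
        · exact hx.expect_relFluctuation_pow_four_le hM hκ h_trace
    _ = 144500000 * ((b / κ) ^ 6 / N ^ 3) := by ring
    _ ≤ 146410000 * ((b / κ) ^ 6 / N ^ 3) := by
        gcongr
        norm_num
    _ = (12100 * (b / κ) ^ 3 / (N * √N)) ^ 2 := by
        rw [div_pow (12100 * (b / κ) ^ 3), mul_pow N, Real.sq_sqrt (Nat.cast_nonneg _)]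
        ring

end IsBoundedScore

end RelativeFluctuationBounds
section DispersionStep

variable {ι : Type*} [Fintype ι]

local notation "N" => (Fintype.card ι : ℝ)

variable {x u e : ι → ℝ} {M : Matrix ι ι ℝ} {b κ R y : ℝ}

lemma diagDispersion_sub_vecMulVec_self (M : Matrix ι ι ℝ) (he : ∑ i, e i ^ 2 = 1) :
    diagDispersion (M - Matrix.vecMulVec e e)
      = diagDispersion M + (2 * M.trace - 1) / N - 2 * ∑ i, M i i * e i ^ 2 + ∑ i, e i ^ 4 := by
  have h_trace : (M - Matrix.vecMulVec e e).trace = M.trace - 1 := by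
    rw [Matrix.trace_sub, Matrix.trace_vecMulVec, ← he]
    simp only [dotProduct, pow_two]
  have h_sq : ∑ i, (M - Matrix.vecMulVec e e) i i ^ 2
      = ∑ i, M i i ^ 2 - 2 * ∑ i, M i i * e i ^ 2 + ∑ i, e i ^ 4 := by
    rw [mul_sum, ← sum_sub_distrib, ← sum_add_distrib]
    refine sum_congr rfl fun i _ => ?_
    rw [Matrix.sub_apply, Matrix.vecMulVec_apply]
    ring
  rw [diagDispersion, diagDispersion, h_trace, h_sq]
  ring

namespace IsResidualDirection

variable (hM : IsCenteredProj M) (he : IsResidualDirection M u e)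
  (hy : (u ⬝ᵥ M *ᵥ u) * R = 1 + y)
include hM he hy

lemma mulVec_sq_mul (i : ι) : (M *ᵥ u) i ^ 2 * R = e i ^ 2 * (1 + y) := by
  conv_lhs => rw [he.mulVec_eq, Pi.smul_apply, smul_eq_mul, mul_pow,
    Real.sq_sqrt (hM.dotProduct_mulVec_self_nonneg u)]
  linear_combination e i ^ 2 * hy

lemma sum_diag_mul_mulVec_sq_sub_le :
    R * ∑ i, M i i * (M *ᵥ u) i ^ 2 - |y| ≤ ∑ i, M i i * e i ^ 2 := by
  have h_eq : R * ∑ i, M i i * (M *ᵥ u) i ^ 2 = (1 + y) * ∑ i, M i i * e i ^ 2 := by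
    rw [mul_sum, mul_sum]
    exact sum_congr rfl fun i _ => by linear_combination M i i * he.mulVec_sq_mul hM hy i
  have h_nonneg : 0 ≤ ∑ i, M i i * e i ^ 2 :=
    sum_nonneg fun i _ => mul_nonneg (hM.diag_nonneg i) (sq_nonneg _)
  have h_le : ∑ i, M i i * e i ^ 2 ≤ 1 := by
    rw [← he.sum_sq]
    exact sum_le_sum fun i _ => mul_le_of_le_one_left (sq_nonneg _) (hM.diag_le_one i)
  rw [h_eq]
  nlinarith [le_abs_self y, abs_nonneg y]

lemma sum_pow_four_le : ∑ i, e i ^ 4 ≤ 2 * R ^ 2 * ∑ i, (M *ᵥ u) i ^ 4 + 2 * y ^ 2 := by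
  have h_term (i : ι) : e i ^ 4 ≤ 2 * R ^ 2 * (M *ᵥ u) i ^ 4 + 2 * y ^ 2 * e i ^ 2 := by
    have h_pow : R ^ 2 * (M *ᵥ u) i ^ 4 = e i ^ 4 * (1 + y) ^ 2 := by
      linear_combination ((M *ᵥ u) i ^ 2 * R + e i ^ 2 * (1 + y)) * he.mulVec_sq_mul hM hy i
    have h_sq : e i ^ 2 ≤ 1 := by
      rw [← he.sum_sq]
      exact single_le_sum (f := fun i => e i ^ 2) (fun _ _ => sq_nonneg _) (mem_univ i)
    have h_four : e i ^ 4 ≤ e i ^ 2 := by nlinarith [sq_nonneg (e i)]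
    calc e i ^ 4 ≤ e i ^ 4 * (2 * (1 + y) ^ 2 + 2 * y ^ 2) :=
          le_mul_of_one_le_right (by positivity) (by nlinarith [sq_nonneg (1 + 2 * y)])
      _ = 2 * R ^ 2 * (M *ᵥ u) i ^ 4 + 2 * y ^ 2 * e i ^ 4 := by linear_combination -2 * h_pow
      _ ≤ 2 * R ^ 2 * (M *ᵥ u) i ^ 4 + 2 * y ^ 2 * e i ^ 2 := by gcongr
  calc ∑ i, e i ^ 4 ≤ ∑ i, (2 * R ^ 2 * (M *ᵥ u) i ^ 4 + 2 * y ^ 2 * e i ^ 2) :=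
        sum_le_sum fun i _ => h_term i
    _ = 2 * R ^ 2 * ∑ i, (M *ᵥ u) i ^ 4 + 2 * y ^ 2 := by
        rw [sum_add_distrib, ← mul_sum, ← mul_sum, he.sum_sq, mul_one]

lemma diagDispersion_sub_vecMulVec_self_le :
    diagDispersion (M - Matrix.vecMulVec e e)
      ≤ diagDispersion M + 2 * (M.trace / N - R * ∑ i, M i i * (M *ᵥ u) i ^ 2) + 2 * |y|
        + 2 * R ^ 2 * ∑ i, (M *ᵥ u) i ^ 4 + 2 * y ^ 2 := by
  have h_diag := he.sum_diag_mul_mulVec_sq_sub_le hM hy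
  have h_four := he.sum_pow_four_le hM hy
  have h_trace : (2 * M.trace - 1) / N ≤ 2 * (M.trace / N) := by
    rw [← mul_div_assoc]
    gcongr
    linarith
  rw [diagDispersion_sub_vecMulVec_self M he.sum_sq]
  linarith

end IsResidualDirection

lemma IsCenteredProj.trace_le_card (hM : IsCenteredProj M) : M.trace ≤ N := by
  calc M.trace ≤ ∑ _i : ι, (1 : ℝ) := sum_le_sum fun i _ => hM.diag_le_one i
    _ = N := by simp

lemma IsBoundedScore.one_le_div (hx : IsBoundedScore b x) (hM : IsCenteredProj M) (hκ : 0 < κ)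
    (h_trace : κ * N ≤ M.trace) : 1 ≤ b / κ := by
  have hN : (2 : ℝ) ≤ N := mod_cast hx.two_le_card
  rw [le_div_iff₀ hκ, one_mul]
  nlinarith [hM.trace_le_card, hx.one_le]

variable [DecidableEq ι]

lemma IsStandardized.expect_mulVec_sq (hx : IsStandardized x) (hM : IsCenteredProj M) (i : ι) :
    (𝔼 σ : Equiv.Perm ι, (M *ᵥ (x ∘ σ)) i ^ 2) = M i i / (N - 1) := by
  rw [← hM.sum_row_sq i]
  exact hx.expect_dotProduct_sq (sum_row_eq_zero hM.mulVec_one i)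

lemma IsStandardized.trace_div_le_sum_diag_mul_expect (hx : IsStandardized x)
    (hM : IsCenteredProj M) (h_trace : 0 < M.trace) :
    M.trace / N ≤ (N - 1) / M.trace * ∑ i, M i i * (𝔼 σ : Equiv.Perm ι, (M *ᵥ (x ∘ σ)) i ^ 2) := by
  have hN : (2 : ℝ) ≤ N := mod_cast hx.two_le_card
  have h_disp := diagDispersion_nonneg M
  rw [diagDispersion, sub_nonneg] at h_disp
  calc M.trace / N = M.trace ^ 2 / N / M.trace := by field_simp
    _ ≤ (∑ i, M i i ^ 2) / M.trace := by gcongr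
    _ = (N - 1) / M.trace * ∑ i, M i i * (M i i / (N - 1)) := by
      have : N - 1 ≠ 0 := by linarith
      simp_rw [← mul_div_assoc, ← pow_two, ← sum_div]
      field_simp
    _ = _ := by simp_rw [hx.expect_mulVec_sq hM]

namespace IsBoundedScore

variable (hx : IsBoundedScore b x) (hM : IsCenteredProj M) (hN : 6 * b ≤ Fintype.card ι)
include hx hM hN

lemma expect_mulVec_pow_four_le (i : ι) :
    (𝔼 σ : Equiv.Perm ι, (M *ᵥ (x ∘ σ)) i ^ 4) ≤ 33 * b / N ^ 2 := by
  have h_four : ∑ j, M i j ^ 4 ≤ 1 := by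
    calc ∑ j, M i j ^ 4 ≤ ∑ j, M i j ^ 2 := by
          refine sum_le_sum fun j _ => ?_
          nlinarith [(hM.apply_sq_le i j).trans (hM.diag_le_one i), sq_nonneg (M i j)]
      _ ≤ 1 := (hM.sum_row_sq i).trans_le (hM.diag_le_one i)
  have h_diag : M i i ^ 2 ≤ 1 := (hM.apply_sq_le i i).trans (hM.diag_le_one i)
  calc (𝔼 σ : Equiv.Perm ι, (M *ᵥ (x ∘ σ)) i ^ 4)
      = diagCoeff N (∑ m, x m ^ 4) * ∑ j, M i j ^ 4
        + 3 * pairCoeff N (∑ m, x m ^ 4) * M i i ^ 2 := by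
        rw [← hM.sum_row_sq i]
        exact hx.expect_dotProduct_pow_four (sum_row_eq_zero hM.mulVec_one i)
    _ ≤ |diagCoeff N (∑ m, x m ^ 4)| * ∑ j, M i j ^ 4
        + 3 * pairCoeff N (∑ m, x m ^ 4) * M i i ^ 2 := by
        gcongr
        exact le_abs_self _
    _ ≤ 21 * b / N ^ 2 * 1 + 3 * (4 / N ^ 2) * 1 := by
        have := hx.pairCoeff_nonneg hN
        have := hx.one_le
        gcongr
        · exact hx.abs_diagCoeff_le hN
        · exact hx.pairCoeff_le hN
    _ = (21 * b + 12) / N ^ 2 := by ring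
    _ ≤ 33 * b / N ^ 2 := by
        gcongr
        linarith [hx.one_le]

omit [DecidableEq ι] in
lemma dispersion_remainder_le (hκ : 0 < κ) (h_trace : κ * N ≤ M.trace) :
    34 * (b / κ) / √N + (66 * (b / κ ^ 2) + 578 * (b / κ) ^ 2) / N
      ≤ 678 * (b / κ) ^ 2 / √N := by
  have hN6 := hx.six_le_card hN
  have h_sqrt : √N ≤ N := Real.sqrt_le_left (by linarith) |>.2 (by nlinarith)
  have h_beta := hx.one_le_div hM hκ h_trace
  have h_kappa : b / κ ^ 2 ≤ (b / κ) ^ 2 := by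
    rw [div_pow]
    gcongr
    nlinarith [hx.one_le]
  calc 34 * (b / κ) / √N + (66 * (b / κ ^ 2) + 578 * (b / κ) ^ 2) / N
      ≤ 34 * (b / κ) ^ 2 / √N + (66 * (b / κ) ^ 2 + 578 * (b / κ) ^ 2) / √N := by
        gcongr
        nlinarith
    _ = 678 * (b / κ) ^ 2 / √N := by ring

lemma expect_diagDispersion_sub_vecMulVec_le (hκ : 0 < κ) (h_trace : κ * N ≤ M.trace) :
    (𝔼 σ : Equiv.Perm ι, diagDispersion (M - Matrix.vecMulVec (nextDirection M (x ∘ σ))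
      (nextDirection M (x ∘ σ)))) ≤ diagDispersion M + 678 * (b / κ) ^ 2 / √N := by
  have hN6 := hx.six_le_card hN
  have h_pos : 0 < M.trace := (by positivity : 0 < κ * N).trans_le h_trace
  set R := (N - 1) / M.trace
  have h_point (σ : Equiv.Perm ι) :=
    (hM.isResidualDirection_nextDirection h_pos.ne' (x ∘ σ)).diagDispersion_sub_vecMulVec_self_le hM
      (quadraticForm_mul_eq_one_add_relFluctuation (by linarith) h_pos.ne' σ)
  have h_four : R ^ 2 * ∑ i, (𝔼 σ : Equiv.Perm ι, (M *ᵥ (x ∘ σ)) i ^ 4)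
      ≤ (1 / κ) ^ 2 * ∑ _i : ι, 33 * b / N ^ 2 := by
    have h_ratio : R ≤ 1 / κ := card_sub_one_div_trace_le hκ (by linarith) h_trace
    have : 0 ≤ R := div_nonneg (by linarith) h_pos.le
    gcongr with i
    exact hx.expect_mulVec_pow_four_le hM hN i
  have h_diag := hx.trace_div_le_sum_diag_mul_expect hM h_pos
  have h_abs := hx.expect_abs_relFluctuation_le hM hκ h_trace
  have h_sq := hx.expect_relFluctuation_sq_le hM hκ h_trace
  refine (expect_le_expect fun σ _ => h_point σ).trans ?_
  simp only [expect_add_distrib, expect_sub_distrib, ← mul_expect, expect_sum_comm,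
    Fintype.expect_const]
  calc _ ≤ diagDispersion M + 2 * (17 * (b / κ) / √N)
        + 2 * ((1 / κ) ^ 2 * ∑ _i : ι, 33 * b / N ^ 2) + 2 * (289 * (b / κ) ^ 2 / N) := by
        linarith
    _ = diagDispersion M + (34 * (b / κ) / √N + (66 * (b / κ ^ 2) + 578 * (b / κ) ^ 2) / N) := by
        rw [sum_const, card_univ, nsmul_eq_mul]
        field_simp
        ring
    _ ≤ diagDispersion M + 678 * (b / κ) ^ 2 / √N := by
        rw [add_le_add_iff_left]
        exact hx.dispersion_remainder_le hM hN hκ h_trace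

end IsBoundedScore

end DispersionStep

section FiniteExpectation

lemma expect_eq_expect_update {κ α E : Type*} [Fintype κ] [DecidableEq κ] [Fintype α] [Nonempty α]
    [AddCommMonoid E] [Module ℚ≥0 E] (k : κ) (F : (κ → α) → E) :
    (𝔼 ω, F ω) = 𝔼 ω : κ → α, 𝔼 a, F (Function.update ω k a) := by
  let e : (κ → α) × α ≃ (κ → α) × α :=
    { toFun := fun q => (Function.update q.1 k q.2, q.1 k)
      invFun := fun q => (Function.update q.1 k q.2, q.1 k)
      left_inv := fun q => by simp
      right_inv := fun q => by simp }
  have h_expect (G : (κ → α) × α → E) : (𝔼 ω, 𝔼 a, G (ω, a)) = 𝔼 q, G q := by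
    rw [← univ_product_univ, expect_product]
  calc (𝔼 ω, F ω) = 𝔼 ω : κ → α, 𝔼 _a : α, F ω := by simp_rw [Fintype.expect_const]
    _ = 𝔼 q : (κ → α) × α, F (Function.update q.1 k q.2) := by
      rw [h_expect fun q => F q.1]
      exact (Fintype.expect_equiv e _ _ fun _ => rfl).symm
    _ = 𝔼 ω : κ → α, 𝔼 a, F (Function.update ω k a) :=
      (h_expect fun q => F (Function.update q.1 k q.2)).symm

variable {α 𝕜 : Type*} [Fintype α] [RCLike 𝕜]

lemma norm_expect_le_expect {f : α → 𝕜} {g : α → ℝ} (h : ∀ i, ‖f i‖ ≤ g i) :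
    ‖𝔼 i, f i‖ ≤ 𝔼 i, g i := by
  rw [Fintype.expect_eq_sum_div_card, Fintype.expect_eq_sum_div_card, norm_div, RCLike.norm_natCast]
  gcongr
  exact norm_sum_le_of_le _ fun i _ => h i

lemma ofReal_expect (f : α → ℝ) : ((𝔼 i, f i : ℝ) : 𝕜) = 𝔼 i, (f i : 𝕜) := by
  rw [Fintype.expect_eq_sum_div_card, Fintype.expect_eq_sum_div_card]
  push_cast
  rfl

end FiniteExpectation

section Columns

variable {ι : Type*} [Fintype ι] [DecidableEq ι] {p : ℕ}

local notation "N" => (Fintype.card ι : ℝ)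

omit [Fintype ι] [DecidableEq ι] in
/-- The columns `x ∘ ω k` of permuted scores, continued by zero to a sequence. -/
def column (x : ι → ℝ) (ω : Fin p → Equiv.Perm ι) (k : ℕ) : ι → ℝ :=
  if h : k < p then x ∘ ω ⟨k, h⟩ else 0

/-- The relative deviation of the squared norm of the component of `U k` that is orthogonal to the
constants and to its predecessors, from its mean over the permutations of `U k`. -/
noncomputable def residualFluctuation (U : ℕ → ι → ℝ) (k : ℕ) : ℝ :=
  (U k ⬝ᵥ residualProj U k *ᵥ U k - (residualProj U k).trace / (N - 1))
    * ((N - 1) / (residualProj U k).trace)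

variable {U V : ℕ → ι → ℝ} {j : ℕ}

lemma residualFluctuation_congr (h : ∀ i ≤ j, U i = V i) :
    residualFluctuation U j = residualFluctuation V j := by
  rw [residualFluctuation, residualFluctuation, h j le_rfl,
    residualProj_congr fun i hi => h i hi.le]

variable (x : ι → ℝ) (ω : Fin p → Equiv.Perm ι) (k : Fin p) (σ : Equiv.Perm ι)

omit [Fintype ι] [DecidableEq ι] in
lemma column_fin : column x ω k = x ∘ ω k := dif_pos k.2

omit [Fintype ι] [DecidableEq ι] in
lemma column_update_of_ne (h : j ≠ k) : column x (Function.update ω k σ) j = column x ω j := by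
  unfold column
  split_ifs with hj
  · rw [Function.update_of_ne (by rwa [ne_eq, Fin.ext_iff])]
  · rfl

omit [Fintype ι] [DecidableEq ι] in
lemma column_update_self : column x (Function.update ω k σ) k = x ∘ σ := by
  rw [column_fin, Function.update_self]

lemma residualProj_column_update (h : j ≤ k) :
    residualProj (column x (Function.update ω k σ)) j = residualProj (column x ω) j :=
  residualProj_congr fun _ hi => column_update_of_ne x ω k σ (by lia)

lemma residualFluctuation_column_update (h : j < k) :
    residualFluctuation (column x (Function.update ω k σ)) j = residualFluctuation (column x ω) j :=
  residualFluctuation_congr fun _ hi => column_update_of_ne x ω k σ (by lia)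

lemma residualFluctuation_column_update_self :
    residualFluctuation (column x (Function.update ω k σ)) k
      = relFluctuation x (residualProj (column x ω) k) σ := by
  rw [residualFluctuation, column_update_self, residualProj_column_update x ω k σ le_rfl]
  rfl

end Columns

section ResidualRecursion

variable {ι : Type*} [Fintype ι] [DecidableEq ι]

local notation "N" => (Fintype.card ι : ℝ)

variable {p : ℕ} {x : ι → ℝ} {U : ℕ → ι → ℝ} {b κ : ℝ} {k : ℕ}

lemma mul_card_le_trace_residualProj (hp_lt : p < Fintype.card ι) (hp : κ * N ≤ N - p)
    (hk : k < p) : κ * N ≤ (residualProj U k).trace := by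
  have hk_cast : (k : ℝ) + 1 ≤ p := by exact_mod_cast hk
  rw [trace_residualProj U (hk.trans hp_lt)]
  linarith

lemma diagDispersion_centering :
    diagDispersion (1 - N⁻¹ • Matrix.vecMulVec 1 1 : Matrix ι ι ℝ) = 0 := by
  rcases isEmpty_or_nonempty ι with _ | _
  · simp [diagDispersion, Matrix.trace]
  simp only [diagDispersion, Matrix.trace, Matrix.diag_apply, Matrix.sub_apply,
    Matrix.one_apply_eq, Matrix.smul_apply, Matrix.vecMulVec_apply, Pi.one_apply, sum_const,
    card_univ, nsmul_eq_mul]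
  field_simp
  ring

/-- The variance of the `k`-th residual fluctuation for `M` scores with fourth moment sum `s`, up to
the contribution of the dispersion of the diagonal of the residual projection. -/
noncomputable def residualVariance (M s : ℝ) (k : ℕ) : ℝ :=
  2 * pairCoeff M s * (M - 1) * k / (M - 1 - k)

variable (hx : IsBoundedScore b x) (hN : 6 * b ≤ Fintype.card ι) (hκ : 0 < κ)
  (hp : κ * Fintype.card ι ≤ Fintype.card ι - p)
include hx hN hκ hp

namespace IsBoundedScore

omit [DecidableEq ι] in
lemma lt_card : p < Fintype.card ι := by
  have hb := hx.one_le
  have h_pos : 0 < κ * N := mul_pos hκ (by linarith)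
  have h_lt : (p : ℝ) < N := by linarith
  exact_mod_cast h_lt

lemma expect_diagDispersion_residualProj_le (hk : k ≤ p) :
    (𝔼 ω : Fin p → Equiv.Perm ι, diagDispersion (residualProj (column x ω) k))
      ≤ k * (678 * (b / κ) ^ 2 / √N) := by
  have hp_lt := hx.lt_card hN hκ hp
  induction k with
  | zero =>
    simp only [residualProj, diagDispersion_centering, expect_const_zero, CharP.cast_eq_zero,
      zero_mul, le_refl]
  | succ k ih =>
    have h_step (ω : Fin p → Equiv.Perm ι) :
        (𝔼 σ, diagDispersion (residualProj (column x (Function.update ω ⟨k, hk⟩ σ)) (k + 1)))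
          ≤ diagDispersion (residualProj (column x ω) k) + 678 * (b / κ) ^ 2 / √N := by
      have h_proj (σ : Equiv.Perm ι) := residualProj_column_update x ω ⟨k, hk⟩ σ le_rfl
      have h_col (σ : Equiv.Perm ι) := column_update_self x ω ⟨k, hk⟩ σ
      dsimp only at h_proj h_col
      simp_rw [residualProj, h_proj, h_col]
      exact hx.expect_diagDispersion_sub_vecMulVec_le (isCenteredProj_residualProj _ (by lia)) hN hκ
        (mul_card_le_trace_residualProj hp_lt hp hk)
    rw [expect_eq_expect_update ⟨k, hk⟩]
    refine (expect_le_expect fun ω _ => h_step ω).trans ?_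
    rw [expect_add_distrib, Fintype.expect_const]
    push_cast
    linarith [ih (by lia)]

omit [DecidableEq ι] in
lemma residualVariance_nonneg (hk : k < p) : 0 ≤ residualVariance N (∑ i, x i ^ 4) k := by
  have h_pair := hx.pairCoeff_nonneg hN
  have hb := hx.one_le
  have h_lt := hx.lt_card hN hκ hp
  have hk_cast : (k : ℝ) + 1 ≤ N := by exact_mod_cast (by lia)
  have : 0 ≤ N - 1 := by linarith
  exact div_nonneg (by positivity) (by linarith)

omit [DecidableEq ι] in
lemma residualVariance_le (hk : k < p) :
    residualVariance N (∑ i, x i ^ 4) k ≤ 8 / κ / N := by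
  have hb := hx.one_le
  have h_lt := hx.lt_card hN hκ hp
  have hN_pos : 0 < N := by linarith
  have hk_le : (k : ℝ) ≤ N := by exact_mod_cast (by lia)
  have hk_cast : (k : ℝ) + 1 ≤ p := by exact_mod_cast hk
  have := hx.pairCoeff_nonneg hN
  calc residualVariance N (∑ i, x i ^ 4) k ≤ 2 * (4 / N ^ 2) * N * N / (κ * N) := by
        have : 0 ≤ N - 1 := by linarith
        unfold residualVariance
        gcongr
        · exact hx.pairCoeff_le hN
        · linarith
        · linarith
    _ = 8 / κ / N := by
      field_simp
      norm_num

end IsBoundedScore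

end ResidualRecursion

/-- A bounded test function of a real variable with the expansion `1 + α u + z u²` at the origin, up
to an error of `C |u|³`. -/
structure HasQuadraticExpansion (h : ℝ → ℂ) (α z : ℂ) (C : ℝ) : Prop where
  norm_le_one : ∀ u, ‖h u‖ ≤ 1
  norm_sub_le : ∀ u, ‖h u - 1 - α * u - z * (u : ℂ) ^ 2‖ ≤ C * |u| ^ 3

lemma HasQuadraticExpansion.nonneg {h : ℝ → ℂ} {α z : ℂ} {C : ℝ}
    (hh : HasQuadraticExpansion h α z C) : 0 ≤ C := by
  simpa using (norm_nonneg _).trans (hh.norm_sub_le 1)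

/-- The constant in the error made by replacing one factor of the characteristic function by a
Gaussian factor. -/
noncomputable def stepError (C : ℝ) (z : ℂ) (b κ : ℝ) : ℝ :=
  12100 * C * (b / κ) ^ 3 + 14238 * ‖z‖ * (b ^ 3 / κ ^ 4) + (8 * ‖z‖ / κ) ^ 2

section CharacteristicRecursion

variable {ι : Type*} [Fintype ι] [DecidableEq ι]

local notation "N" => (Fintype.card ι : ℝ)

variable {p k : ℕ} {x : ι → ℝ} {M : Matrix ι ι ℝ} {b κ C : ℝ} {h : ℝ → ℂ} {α z : ℂ}

lemma expect_prod_residualFluctuation_succ (x : ι → ℝ) (h : ℝ → ℂ) (hk : k < p) :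
    (𝔼 ω : Fin p → Equiv.Perm ι,
        ∏ j ∈ range (k + 1), h (residualFluctuation (column x ω) j))
      = 𝔼 ω : Fin p → Equiv.Perm ι, (∏ j ∈ range k, h (residualFluctuation (column x ω) j))
          * 𝔼 σ, h (relFluctuation x (residualProj (column x ω) k) σ) := by
  rw [expect_eq_expect_update ⟨k, hk⟩]
  refine expect_congr rfl fun ω _ => ?_
  rw [mul_expect]
  refine expect_congr rfl fun σ _ => ?_
  rw [prod_range_succ]
  congr 1
  · refine prod_congr rfl fun j hj => ?_
    rw [residualFluctuation_column_update x ω ⟨k, hk⟩ σ (mem_range.1 hj)]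
  · exact congrArg h (residualFluctuation_column_update_self x ω ⟨k, hk⟩ σ)

namespace IsBoundedScore

lemma norm_expect_comp_relFluctuation_sub_le (hx : IsBoundedScore b x) (hM : IsCenteredProj M)
    (hκ : 0 < κ) (h_trace : κ * N ≤ M.trace) (hh : HasQuadraticExpansion h α z C) :
    ‖(𝔼 σ, h (relFluctuation x M σ)) - 1 - z * (𝔼 σ, relFluctuation x M σ ^ 2 : ℝ)‖
      ≤ C * (12100 * (b / κ) ^ 3 / (N * √N)) := by
  set Y := relFluctuation x M
  have h_mean : (𝔼 σ, (Y σ : ℂ)) = 0 := by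
    rw [← RCLike.ofReal_eq_complex_ofReal, ← ofReal_expect, hx.expect_relFluctuation hM,
      RCLike.ofReal_zero]
  have h_eq : (𝔼 σ, h (Y σ)) - 1 - z * (𝔼 σ, Y σ ^ 2 : ℝ)
      = 𝔼 σ, (h (Y σ) - 1 - α * Y σ - z * (Y σ : ℂ) ^ 2) := by
    rw [expect_sub_distrib, expect_sub_distrib, expect_sub_distrib, ← mul_expect, ← mul_expect,
      h_mean, Fintype.expect_const, ← RCLike.ofReal_eq_complex_ofReal, ofReal_expect]
    push_cast
    ring
  calc _ ≤ 𝔼 σ, C * |Y σ| ^ 3 := by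
        rw [h_eq]
        exact norm_expect_le_expect fun σ => hh.norm_sub_le (Y σ)
    _ ≤ C * (12100 * (b / κ) ^ 3 / (N * √N)) := by
        rw [← mul_expect]
        exact mul_le_mul_of_nonneg_left (hx.expect_abs_relFluctuation_cube_le hM hκ h_trace)
          hh.nonneg

omit [DecidableEq ι] in
lemma abs_diagCoeff_mul_diagDispersion_le (hx : IsBoundedScore b x) (hN : 6 * b ≤ N) (hκ : 0 < κ)
    (h_trace : κ * N ≤ M.trace) :
    |diagCoeff N (∑ i, x i ^ 4) * ((N - 1) / M.trace) ^ 2 * diagDispersion M|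
      ≤ 21 * b / N ^ 2 * (1 / κ) ^ 2 * diagDispersion M := by
  have hb := hx.one_le
  have h_nonneg := diagDispersion_nonneg M
  have h_ratio := card_sub_one_div_trace_le hκ (by linarith) h_trace
  have h_ratio_nonneg : 0 ≤ (N - 1) / M.trace :=
    div_nonneg (by linarith) ((by positivity : 0 ≤ κ * N).trans h_trace)
  rw [abs_mul, abs_mul, abs_of_nonneg h_nonneg, abs_pow, abs_of_nonneg h_ratio_nonneg]
  gcongr
  exact hx.abs_diagCoeff_le hN

variable (hx : IsBoundedScore b x) (hN : 6 * b ≤ Fintype.card ι) (hκ : 0 < κ)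
  (hp : κ * Fintype.card ι ≤ Fintype.card ι - p) (hh : HasQuadraticExpansion h α z C)
  (hz : 8 * ‖z‖ / κ ≤ Fintype.card ι)
include hx hN hκ hp

omit [DecidableEq ι] in
lemma norm_mul_residualVariance_le (z : ℂ) (hk : k < p) :
    ‖z * residualVariance N (∑ i, x i ^ 4) k‖ ≤ 8 * ‖z‖ / κ / N := by
  rw [norm_mul, Complex.norm_real,
    Real.norm_of_nonneg (hx.residualVariance_nonneg hN hκ hp hk)]
  calc ‖z‖ * residualVariance N (∑ i, x i ^ 4) k ≤ ‖z‖ * (8 / κ / N) := by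
        gcongr
        exact hx.residualVariance_le hN hκ hp hk
    _ = 8 * ‖z‖ / κ / N := by ring

omit [DecidableEq ι] in
lemma norm_exp_residualVariance_sub_le (hz : 8 * ‖z‖ / κ ≤ N) (hk : k < p) :
    ‖Complex.exp (z * residualVariance N (∑ i, x i ^ 4) k) - 1
      - z * residualVariance N (∑ i, x i ^ 4) k‖ ≤ (8 * ‖z‖ / κ) ^ 2 / N ^ 2 := by
  have h_norm := hx.norm_mul_residualVariance_le hN hκ hp z hk
  calc _ ≤ ‖z * residualVariance N (∑ i, x i ^ 4) k‖ ^ 2 :=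
        Complex.norm_exp_sub_one_sub_id_le
          (h_norm.trans (div_le_one_of_le₀ hz (Nat.cast_nonneg _)))
    _ ≤ (8 * ‖z‖ / κ / N) ^ 2 := by gcongr
    _ = (8 * ‖z‖ / κ) ^ 2 / N ^ 2 := div_pow _ _ _

include hh hz in
lemma norm_expect_comp_relFluctuation_sub_exp_le (hk : k < p) (U : ℕ → ι → ℝ) :
    ‖(𝔼 σ, h (relFluctuation x (residualProj U k) σ))
        - Complex.exp (z * residualVariance N (∑ i, x i ^ 4) k)‖
      ≤ C * (12100 * (b / κ) ^ 3 / (N * √N))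
        + ‖z‖ * (21 * b / N ^ 2 * (1 / κ) ^ 2 * diagDispersion (residualProj U k))
        + (8 * ‖z‖ / κ) ^ 2 / N ^ 2 := by
  have hb := hx.one_le
  have hp_lt := hx.lt_card hN hκ hp
  set M := residualProj U k
  have hM : IsCenteredProj M := isCenteredProj_residualProj U (hk.trans hp_lt)
  have h_trace : κ * N ≤ M.trace := mul_card_le_trace_residualProj hp_lt hp hk
  have h_pos : 0 < M.trace := (mul_pos hκ (by linarith)).trans_le h_trace
  set v := residualVariance N (∑ i, x i ^ 4) k
  set d := diagCoeff N (∑ i, x i ^ 4) * ((N - 1) / M.trace) ^ 2 * diagDispersion M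
  have h_var : (𝔼 σ, relFluctuation x M σ ^ 2) = v + d := by
    rw [hx.expect_relFluctuation_sq hM (by linarith) h_pos.ne', add_left_inj]
    rw [show M.trace = N - 1 - k from trace_residualProj U (hk.trans hp_lt), sub_sub_cancel]
    rfl
  have h_split : (𝔼 σ, h (relFluctuation x M σ)) - Complex.exp (z * v)
      = ((𝔼 σ, h (relFluctuation x M σ)) - 1 - z * (𝔼 σ, relFluctuation x M σ ^ 2 : ℝ))
        + z * d - (Complex.exp (z * v) - 1 - z * v) := by
    rw [h_var]
    push_cast
    ring
  rw [h_split]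
  refine (norm_sub_le _ _).trans (add_le_add ((norm_add_le _ _).trans (add_le_add ?_ ?_)) ?_)
  · exact hx.norm_expect_comp_relFluctuation_sub_le hM hκ h_trace hh
  · rw [norm_mul, Complex.norm_real, Real.norm_eq_abs]
    gcongr
    exact hx.abs_diagCoeff_mul_diagDispersion_le hN hκ h_trace
  · exact hx.norm_exp_residualVariance_sub_le hN hκ hp hz hk

include hh hz in
lemma norm_expect_prod_succ_sub_le (hk : k < p) :
    ‖(𝔼 ω : Fin p → Equiv.Perm ι,
          ∏ j ∈ range (k + 1), h (residualFluctuation (column x ω) j))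
        - Complex.exp (z * residualVariance N (∑ i, x i ^ 4) k)
          * 𝔼 ω : Fin p → Equiv.Perm ι, ∏ j ∈ range k, h (residualFluctuation (column x ω) j)‖
      ≤ stepError C z b κ / (N * √N) := by
  have hb := hx.one_le
  have hN_one : 1 ≤ N := by linarith
  set W : (Fin p → Equiv.Perm ι) → ℂ :=
    fun ω => ∏ j ∈ range k, h (residualFluctuation (column x ω) j)
  have hW (ω : Fin p → Equiv.Perm ι) : ‖W ω‖ ≤ 1 := by
    rw [norm_prod]
    exact prod_le_one (fun _ _ => norm_nonneg _) fun j _ => hh.norm_le_one _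
  rw [expect_prod_residualFluctuation_succ x h hk, mul_expect, ← expect_sub_distrib]
  simp_rw [mul_comm (Complex.exp _), ← mul_sub]
  refine (norm_expect_le_expect fun ω => (norm_mul_le _ _).trans
    (mul_le_of_le_one_left (norm_nonneg _) (hW ω))).trans ?_
  refine (expect_le_expect fun ω _ =>
    hx.norm_expect_comp_relFluctuation_sub_exp_le hN hκ hp hh hz hk (column x ω)).trans ?_
  simp only [expect_add_distrib, ← mul_expect, Fintype.expect_const]
  have h_disp : (𝔼 ω : Fin p → Equiv.Perm ι, diagDispersion (residualProj (column x ω) k))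
      ≤ N * (678 * (b / κ) ^ 2 / √N) := by
    have hk_le : (k : ℝ) ≤ N := by exact_mod_cast (hk.trans (hx.lt_card hN hκ hp)).le
    refine (hx.expect_diagDispersion_residualProj_le hN hκ hp hk.le).trans ?_
    gcongr
  have h_sqrt : N * √N ≤ N ^ 2 := by
    rw [pow_two]
    gcongr
    exact Real.sqrt_le_self_iff.2 (Or.inr hN_one)
  calc _ ≤ C * (12100 * (b / κ) ^ 3 / (N * √N))
        + ‖z‖ * (21 * b / N ^ 2 * (1 / κ) ^ 2 * (N * (678 * (b / κ) ^ 2 / √N)))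
        + (8 * ‖z‖ / κ) ^ 2 / (N * √N) := by gcongr
    _ = stepError C z b κ / (N * √N) := by
      rw [stepError]
      field_simp
      ring

include hh hz in
lemma norm_expect_prod_sub_exp_le (hz_re : z.re ≤ 0) (hk : k ≤ p) :
    ‖(𝔼 ω : Fin p → Equiv.Perm ι, ∏ j ∈ range k, h (residualFluctuation (column x ω) j))
        - Complex.exp (z * (∑ j ∈ range k, residualVariance N (∑ i, x i ^ 4) j : ℝ))‖
      ≤ k * (stepError C z b κ / (N * √N)) := by
  induction k with
  | zero => simp
  | succ k ih =>
    set s := ∑ i, x i ^ 4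
    set φ : ℕ → ℂ := fun k => 𝔼 ω : Fin p → Equiv.Perm ι,
      ∏ j ∈ range k, h (residualFluctuation (column x ω) j)
    set ψ : ℕ → ℂ := fun k => Complex.exp (z * (∑ j ∈ range k, residualVariance N s j : ℝ))
    set a := Complex.exp (z * residualVariance N s k)
    have h_norm : ‖a‖ ≤ 1 := by
      rw [Complex.norm_exp, Real.exp_le_one_iff, Complex.re_mul_ofReal]
      exact mul_nonpos_of_nonpos_of_nonneg hz_re (hx.residualVariance_nonneg hN hκ hp hk)
    have h_exp : ψ (k + 1) = a * ψ k := by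
      simp only [ψ, a, sum_range_succ, ← Complex.exp_add]
      push_cast
      ring_nf
    calc ‖φ (k + 1) - ψ (k + 1)‖ = ‖(φ (k + 1) - a * φ k) + a * (φ k - ψ k)‖ := by
          rw [h_exp]
          ring_nf
      _ ≤ ‖φ (k + 1) - a * φ k‖ + ‖a‖ * ‖φ k - ψ k‖ := by
          rw [← norm_mul]
          exact norm_add_le _ _
      _ ≤ stepError C z b κ / (N * √N) + 1 * (k * (stepError C z b κ / (N * √N))) := by
          gcongr
          · exact hx.norm_expect_prod_succ_sub_le hN hκ hp hh hz hk
          · exact ih (by lia)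
      _ = ((k + 1 : ℕ) : ℝ) * (stepError C z b κ / (N * √N)) := by
          push_cast
          ring

end IsBoundedScore

end CharacteristicRecursion

section LogExpansion

variable {u : ℝ}

lemma abs_log_one_add_sub_le (hu : |u| ≤ 1 / 2) :
    |Real.log (1 + u) - u + u ^ 2 / 2| ≤ 2 * |u| ^ 3 := by
  have h_taylor := Real.abs_log_sub_add_sum_range_le (x := -u) (by rw [abs_neg]; linarith) 2
  have h_sum : (∑ i ∈ range 2, (-u) ^ (i + 1) / ((i : ℝ) + 1)) + Real.log (1 - -u)
      = Real.log (1 + u) - u + u ^ 2 / 2 := by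
    rw [sum_range_succ, sum_range_succ, range_zero, sum_empty, sub_neg_eq_add]
    push_cast
    ring
  rw [abs_neg, h_sum] at h_taylor
  refine h_taylor.trans ((div_le_iff₀ (by linarith)).2 ?_)
  change |u| ^ 3 ≤ _
  nlinarith [mul_nonneg (pow_nonneg (abs_nonneg u) 3) (sub_nonneg.2 hu)]

lemma abs_log_one_add_sub_self_le (hu : |u| ≤ 1 / 2) :
    |Real.log (1 + u) - u| ≤ 3 / 2 * |u| ^ 2 := by
  calc |Real.log (1 + u) - u| = |(Real.log (1 + u) - u + u ^ 2 / 2) - u ^ 2 / 2| := by ring_nf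
    _ ≤ 2 * |u| ^ 3 + u ^ 2 / 2 := by
        refine (abs_sub _ _).trans (add_le_add (abs_log_one_add_sub_le hu) (abs_of_nonneg ?_).le)
        positivity
    _ ≤ 3 / 2 * |u| ^ 2 := by
        nlinarith [sq_abs u, mul_le_mul_of_nonneg_left hu (sq_nonneg |u|)]

lemma abs_log_one_add_le (hu : |u| ≤ 1 / 2) : |Real.log (1 + u)| ≤ 2 * |u| := by
  calc |Real.log (1 + u)| = |(Real.log (1 + u) - u) + u| := by ring_nf
    _ ≤ 3 / 2 * |u| ^ 2 + |u| := by
        refine (abs_add_le _ _).trans ?_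
        gcongr
        exact abs_log_one_add_sub_self_le hu
    _ ≤ 2 * |u| := by nlinarith [abs_nonneg u]

lemma abs_log_one_add_sq_sub_sq_le (hu : |u| ≤ 1 / 2) :
    |Real.log (1 + u) ^ 2 - u ^ 2| ≤ 5 * |u| ^ 3 := by
  have h_add : |Real.log (1 + u) + u| ≤ 3 * |u| :=
    (abs_add_le _ _).trans (by linarith [abs_log_one_add_le hu])
  calc |Real.log (1 + u) ^ 2 - u ^ 2|
      = |Real.log (1 + u) + u| * |Real.log (1 + u) - u| := by rw [sq_sub_sq, abs_mul]
    _ ≤ 3 * |u| * (3 / 2 * |u| ^ 2) := by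
        gcongr
        exact abs_log_one_add_sub_self_le hu
    _ ≤ 5 * |u| ^ 3 := by nlinarith [pow_nonneg (abs_nonneg u) 3]

lemma norm_exp_mul_I_sub_le (a : ℝ) :
    ‖Complex.exp (a * Complex.I) - (1 + a * Complex.I - (a : ℂ) ^ 2 / 2)‖
      ≤ |a| ^ 3 * Real.exp |a| := by
  have h_sum : ∑ m ∈ range 3, ((a : ℂ) * Complex.I) ^ m / (m.factorial : ℂ)
      = 1 + a * Complex.I - (a : ℂ) ^ 2 / 2 := by
    simp only [sum_range_succ, range_zero, sum_empty, mul_pow, Complex.I_sq, Nat.factorial]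
    push_cast
    ring
  simpa only [h_sum, norm_mul, Complex.norm_real, Complex.norm_I, mul_one, Real.norm_eq_abs]
    using Complex.norm_exp_sub_sum_le_norm_mul_exp ((a : ℂ) * Complex.I) 3

lemma norm_exp_log_one_add_sub_le_of_abs_le (t : ℝ) (hu : |u| ≤ 1 / 2) :
    ‖Complex.exp ((t * Real.log (1 + u) : ℝ) * Complex.I) - 1 - t * Complex.I * u
        - (-(t : ℂ) ^ 2 - t * Complex.I) / 2 * (u : ℂ) ^ 2‖
      ≤ (8 * |t| ^ 3 * Real.exp |t| + 2 * |t| + 5 * |t| ^ 2) * |u| ^ 3 := by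
  set l := Real.log (1 + u)
  have hl : |l| ≤ 2 * |u| := abs_log_one_add_le hu
  have h_exp : ‖Complex.exp ((t * l : ℝ) * Complex.I)
      - (1 + (t * l : ℝ) * Complex.I - ((t * l : ℝ) : ℂ) ^ 2 / 2)‖
      ≤ 8 * |t| ^ 3 * Real.exp |t| * |u| ^ 3 :=
    calc _ ≤ |t * l| ^ 3 * Real.exp |t * l| := norm_exp_mul_I_sub_le _
      _ ≤ (|t| * (2 * |u|)) ^ 3 * Real.exp |t| := by
          rw [abs_mul]
          gcongr
          exact mul_le_of_le_one_right (abs_nonneg t) (by linarith)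
      _ = 8 * |t| ^ 3 * Real.exp |t| * |u| ^ 3 := by ring
  have h_lin : ‖t * Complex.I * ((l - u + u ^ 2 / 2 : ℝ) : ℂ)‖ ≤ 2 * |t| * |u| ^ 3 := by
    rw [norm_mul, norm_mul, Complex.norm_real, Complex.norm_real, Complex.norm_I, mul_one,
      Real.norm_eq_abs, Real.norm_eq_abs]
    nlinarith [abs_log_one_add_sub_le hu, abs_nonneg t]
  have h_quad : ‖-(t : ℂ) ^ 2 / 2 * ((l ^ 2 - u ^ 2 : ℝ) : ℂ)‖ ≤ 5 * |t| ^ 2 * |u| ^ 3 := by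
    rw [norm_mul, norm_div, norm_neg, norm_pow, Complex.norm_real, Complex.norm_real,
      Complex.norm_ofNat, Real.norm_eq_abs, Real.norm_eq_abs]
    calc |t| ^ 2 / 2 * |l ^ 2 - u ^ 2| ≤ |t| ^ 2 * (5 * |u| ^ 3) :=
          mul_le_mul (half_le_self (by positivity)) (abs_log_one_add_sq_sub_sq_le hu)
            (abs_nonneg _) (by positivity)
      _ = 5 * |t| ^ 2 * |u| ^ 3 := by ring
  have h_split : Complex.exp ((t * l : ℝ) * Complex.I) - 1 - t * Complex.I * u
        - (-(t : ℂ) ^ 2 - t * Complex.I) / 2 * (u : ℂ) ^ 2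
      = (Complex.exp ((t * l : ℝ) * Complex.I)
          - (1 + (t * l : ℝ) * Complex.I - ((t * l : ℝ) : ℂ) ^ 2 / 2))
        + t * Complex.I * ((l - u + u ^ 2 / 2 : ℝ) : ℂ)
        + -(t : ℂ) ^ 2 / 2 * ((l ^ 2 - u ^ 2 : ℝ) : ℂ) := by
    push_cast
    ring
  rw [h_split]
  linarith [norm_add₃_le (a := Complex.exp ((t * l : ℝ) * Complex.I)
      - (1 + (t * l : ℝ) * Complex.I - ((t * l : ℝ) : ℂ) ^ 2 / 2))
    (b := t * Complex.I * ((l - u + u ^ 2 / 2 : ℝ) : ℂ))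
    (c := -(t : ℂ) ^ 2 / 2 * ((l ^ 2 - u ^ 2 : ℝ) : ℂ))]

lemma norm_sub_one_sub_sub_le_of_le_abs {v : ℂ} (hv : ‖v‖ ≤ 1) (α z : ℂ) (hu : 1 / 2 ≤ |u|) :
    ‖v - 1 - α * u - z * (u : ℂ) ^ 2‖ ≤ (16 + 4 * ‖α‖ + 2 * ‖z‖) * |u| ^ 3 := by
  have h_sq : |u| ^ 2 ≤ 2 * |u| ^ 3 := by nlinarith [sq_nonneg |u|]
  have h_one : |u| ≤ 4 * |u| ^ 3 := by nlinarith
  calc ‖v - 1 - α * u - z * (u : ℂ) ^ 2‖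
      ≤ ‖v‖ + ‖(1 : ℂ)‖ + ‖α * u‖ + ‖z * (u : ℂ) ^ 2‖ := by
        refine (norm_sub_le _ _).trans (add_le_add_left ?_ _)
        exact (norm_sub_le _ _).trans (add_le_add_left (norm_sub_le _ _) _)
    _ ≤ 2 + ‖α‖ * |u| + ‖z‖ * |u| ^ 2 := by
        rw [norm_mul, norm_mul, norm_pow, Complex.norm_real, Real.norm_eq_abs, norm_one]
        linarith
    _ ≤ 16 * |u| ^ 3 + ‖α‖ * (4 * |u| ^ 3) + ‖z‖ * (2 * |u| ^ 3) := by
        gcongr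
        linarith
    _ = (16 + 4 * ‖α‖ + 2 * ‖z‖) * |u| ^ 3 := by ring

theorem exists_hasQuadraticExpansion_exp_log_one_add (t : ℝ) :
    ∃ C, HasQuadraticExpansion (fun u => Complex.exp ((t * Real.log (1 + u) : ℝ) * Complex.I))
      (t * Complex.I) ((-(t : ℂ) ^ 2 - t * Complex.I) / 2) C := by
  set z : ℂ := (-(t : ℂ) ^ 2 - t * Complex.I) / 2
  have h_norm (u : ℝ) : ‖Complex.exp ((t * Real.log (1 + u) : ℝ) * Complex.I)‖ ≤ 1 :=
    (Complex.norm_exp_ofReal_mul_I _).le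
  refine ⟨max (8 * |t| ^ 3 * Real.exp |t| + 2 * |t| + 5 * |t| ^ 2)
    (16 + 4 * ‖(t * Complex.I : ℂ)‖ + 2 * ‖z‖), h_norm, fun u => ?_⟩
  rcases le_total |u| (1 / 2) with hu | hu
  · refine (norm_exp_log_one_add_sub_le_of_abs_le t hu).trans ?_
    gcongr
    exact le_max_left _ _
  · refine (norm_sub_one_sub_sub_le_of_le_abs (h_norm u) _ z hu).trans ?_
    gcongr
    exact le_max_right _ _

end LogExpansion

section AspectRatioLimits

open Filter Topology

lemma tendsto_inv_natCast_sub (c : ℝ) :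
    Tendsto (fun n : ℕ => ((n : ℝ) - c)⁻¹) atTop (𝓝 0) :=
  tendsto_inv_atTop_zero.comp
    (tendsto_atTop_add_const_right _ (-c) tendsto_natCast_atTop_atTop)

lemma tendsto_pairCoeff_mul_sq {s : ℕ → ℝ} (hs : Tendsto s atTop (𝓝 0)) :
    Tendsto (fun n : ℕ => pairCoeff n (s n) * ((n : ℝ) - 1) ^ 2) atTop (𝓝 1) := by
  have h_lim := ((tendsto_inv_natCast_sub 0).const_sub 1).mul
    (((hs.const_sub 1).sub ((((hs.const_mul 2).sub_const 1).const_mul 2).mul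
      (tendsto_inv_natCast_sub 2))).add
      ((((hs.const_mul 6).const_sub 3).mul (tendsto_inv_natCast_sub 2)).mul
        (tendsto_inv_natCast_sub 3)))
  norm_num at h_lim
  refine h_lim.congr' ?_
  filter_upwards [eventually_gt_atTop 3] with n hn
  have hn3 : (3 : ℝ) < n := by exact_mod_cast hn
  have h0 : (n : ℝ) ≠ 0 := by linarith
  have h1 : (n : ℝ) - 1 ≠ 0 := by linarith
  have h2 : (n : ℝ) - 2 ≠ 0 := by linarith
  have h3 : (n : ℝ) - 3 ≠ 0 := by linarith
  rw [pairCoeff]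
  field_simp

lemma log_add_one_sub_log_le {a : ℝ} (ha : 0 < a) : Real.log (a + 1) - Real.log a ≤ 1 / a := by
  rw [← Real.log_div (by linarith) ha.ne', add_div, div_self ha.ne']
  linarith [Real.log_le_sub_one_of_pos (x := 1 + 1 / a) (by positivity)]

lemma one_div_le_log_sub_log_sub_one {a : ℝ} (ha : 1 < a) :
    1 / a ≤ Real.log a - Real.log (a - 1) := by
  have h0 : 0 < a := by linarith
  have h_log := Real.log_le_sub_one_of_pos (div_pos (sub_pos.2 ha) h0)
  rw [Real.log_div (by linarith) h0.ne', sub_div, div_self h0.ne'] at h_log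
  linarith

lemma log_sub_log_le_sum_one_div {M : ℝ} {q : ℕ} (h : (q : ℝ) < M) :
    Real.log (M + 1) - Real.log (M + 1 - q) ≤ ∑ k ∈ range q, 1 / (M - k) := by
  have h_sum := sum_range_sub' (fun k : ℕ => Real.log (M + 1 - k)) q
  rw [Nat.cast_zero, sub_zero] at h_sum
  rw [← h_sum]
  refine sum_le_sum fun k hk => ?_
  have hkq : (k : ℝ) ≤ q := by exact_mod_cast (mem_range.1 hk).le
  rw [Nat.cast_succ, add_sub_add_right_eq_sub, add_sub_right_comm]
  exact log_add_one_sub_log_le (by linarith)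

lemma sum_one_div_le_log_sub_log {M : ℝ} {q : ℕ} (h : (q : ℝ) < M) :
    ∑ k ∈ range q, 1 / (M - k) ≤ Real.log M - Real.log (M - q) := by
  have h_sum := sum_range_sub' (fun k : ℕ => Real.log (M - k)) q
  rw [Nat.cast_zero, sub_zero] at h_sum
  rw [← h_sum]
  refine sum_le_sum fun k hk => ?_
  have hkq : (k : ℝ) + 1 ≤ q := by exact_mod_cast mem_range.1 hk
  rw [Nat.cast_succ, ← sub_sub]
  exact one_div_le_log_sub_log_sub_one (by linarith)

variable {y : ℝ} {p : ℕ → ℕ}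

lemma tendsto_div_natCast_sub (hpy : Tendsto (fun n => (p n : ℝ) / (n : ℝ)) atTop (𝓝 y))
    (c : ℝ) : Tendsto (fun n : ℕ => (p n : ℝ) / ((n : ℝ) - c)) atTop (𝓝 y) := by
  have h_lim := hpy.mul (((tendsto_inv_natCast_sub c).const_mul c).const_add 1)
  rw [mul_zero, add_zero, mul_one] at h_lim
  refine h_lim.congr' ?_
  filter_upwards [eventually_gt_atTop 0,
    tendsto_natCast_atTop_atTop.eventually_gt_atTop c] with n hn hc
  have h0 : (n : ℝ) ≠ 0 := by positivity
  have h1 : (n : ℝ) - c ≠ 0 := by linarith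
  field_simp
  ring

lemma eventually_mul_natCast_le_sub (hy1 : y < 1)
    (hpy : Tendsto (fun n => (p n : ℝ) / (n : ℝ)) atTop (𝓝 y)) :
    ∀ᶠ n : ℕ in atTop, (1 - y) / 2 * (n : ℝ) ≤ n - p n := by
  have h_lt : ∀ᶠ n in atTop, (p n : ℝ) / (n : ℝ) < (1 + y) / 2 :=
    hpy.eventually_lt_const (by linarith)
  filter_upwards [h_lt, eventually_gt_atTop 0] with n h hn
  rw [div_lt_iff₀ (by exact_mod_cast hn)] at h
  linarith

lemma tendsto_natCast_sub_atTop (hy1 : y < 1)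
    (hpy : Tendsto (fun n => (p n : ℝ) / (n : ℝ)) atTop (𝓝 y)) :
    Tendsto (fun n : ℕ => (n : ℝ) - p n) atTop atTop :=
  tendsto_atTop_mono' _ (eventually_mul_natCast_le_sub hy1 hpy)
    (tendsto_natCast_atTop_atTop.const_mul_atTop (by linarith))

lemma eventually_le_natCast_sub_one_sub (hy1 : y < 1)
    (hpy : Tendsto (fun n => (p n : ℝ) / (n : ℝ)) atTop (𝓝 y)) (K : ℝ) :
    ∀ᶠ n : ℕ in atTop, K ≤ (n : ℝ) - 1 - p n := by
  filter_upwards [(tendsto_natCast_sub_atTop hy1 hpy).eventually_ge_atTop (K + 1)] with n hn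
  linarith

lemma tendsto_log_natCast_sub_sub_log (hy1 : y < 1)
    (hpy : Tendsto (fun n => (p n : ℝ) / (n : ℝ)) atTop (𝓝 y)) (c : ℝ) :
    Tendsto (fun n : ℕ => Real.log ((n : ℝ) - c) - Real.log ((n : ℝ) - c - p n)) atTop
      (𝓝 (-Real.log (1 - y))) := by
  refine (((tendsto_div_natCast_sub hpy c).const_sub 1).log (by linarith)).neg.congr' ?_
  filter_upwards [tendsto_natCast_atTop_atTop.eventually_gt_atTop c,
    (tendsto_natCast_sub_atTop hy1 hpy).eventually_gt_atTop c] with n hn hp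
  have h0 : (n : ℝ) - c ≠ 0 := by linarith
  rw [one_sub_div h0, Real.log_div (by linarith) h0, neg_sub]

lemma tendsto_sum_one_div_sub (hy1 : y < 1)
    (hpy : Tendsto (fun n => (p n : ℝ) / (n : ℝ)) atTop (𝓝 y)) :
    Tendsto (fun n : ℕ => ∑ k ∈ range (p n), 1 / ((n : ℝ) - 1 - k)) atTop
      (𝓝 (-Real.log (1 - y))) := by
  have h_ev : ∀ᶠ n : ℕ in atTop, (p n : ℝ) < n - 1 := by
    filter_upwards [eventually_le_natCast_sub_one_sub hy1 hpy 1] with n hn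
    linarith
  refine tendsto_of_tendsto_of_tendsto_of_le_of_le'
    (tendsto_log_natCast_sub_sub_log hy1 hpy 0) (tendsto_log_natCast_sub_sub_log hy1 hpy 1) ?_ ?_
  · filter_upwards [h_ev] with n hn
    simpa only [sub_zero, sub_add_cancel] using log_sub_log_le_sum_one_div hn
  · filter_upwards [h_ev] with n hn
    exact sum_one_div_le_log_sub_log hn

theorem tendsto_sum_residualVariance (hy1 : y < 1)
    (hpy : Tendsto (fun n => (p n : ℝ) / (n : ℝ)) atTop (𝓝 y)) {s : ℕ → ℝ}
    (hs : Tendsto s atTop (𝓝 0)) :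
    Tendsto (fun n : ℕ => ∑ k ∈ range (p n), residualVariance n (s n) k) atTop
      (𝓝 (-2 * Real.log (1 - y) - 2 * y)) := by
  have h_lim := ((tendsto_pairCoeff_mul_sq hs).mul
    ((tendsto_sum_one_div_sub hy1 hpy).sub (tendsto_div_natCast_sub hpy 1))).const_mul 2
  rw [show 2 * (1 * (-Real.log (1 - y) - y)) = -2 * Real.log (1 - y) - 2 * y by ring] at h_lim
  refine h_lim.congr' ?_
  filter_upwards [eventually_le_natCast_sub_one_sub hy1 hpy 1] with n hn
  have h1 : (n : ℝ) - 1 ≠ 0 := by linarith [Nat.cast_nonneg (α := ℝ) (p n)]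
  have h_term : ∀ k ∈ range (p n), residualVariance n (s n) k
      = 2 * pairCoeff n (s n) * ((n : ℝ) - 1) * ((n - 1) * (1 / ((n : ℝ) - 1 - k)) - 1) := by
    intro k hk
    have hk' : (k : ℝ) ≤ p n := by exact_mod_cast (mem_range.1 hk).le
    have h2 : (n : ℝ) - 1 - k ≠ 0 := by linarith
    rw [residualVariance]
    field_simp
    ring
  rw [sum_congr rfl h_term, ← mul_sum, sum_sub_distrib, ← mul_sum, sum_const, card_range,
    nsmul_eq_mul, mul_one]
  field_simp

end AspectRatioLimits

section StirlingLimit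

open Filter Topology

lemma sum_log_natCast_sub {n q : ℕ} (h : q ≤ n) :
    ∑ k ∈ range q, Real.log ((n : ℝ) - k) = Real.log n.factorial - Real.log (n - q).factorial := by
  have h_term : ∀ k ∈ range q, Real.log ((n : ℝ) - k)
      = Real.log (n - k).factorial - Real.log (n - (k + 1)).factorial := by
    intro k hk
    obtain ⟨m, hm⟩ : ∃ m, n - k = m + 1 := ⟨n - k - 1, by have := mem_range.1 hk; omega⟩
    rw [← Nat.cast_sub (by have := mem_range.1 hk; omega), ← Nat.sub_sub, hm,
      Nat.add_sub_cancel, Nat.factorial_succ, Nat.cast_mul,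
      Real.log_mul (by positivity) (by positivity), add_sub_cancel_right]
  rw [sum_congr rfl h_term, sum_range_sub' (fun k => Real.log (n - k).factorial), Nat.sub_zero]

lemma log_factorial_eq {m : ℕ} (hm : 0 < m) :
    Real.log m.factorial = Real.log (Stirling.stirlingSeq m)
      + (Real.log 2 + Real.log m) / 2 + m * (Real.log m - 1) := by
  have hm' : (m : ℝ) ≠ 0 := by positivity
  have h_stirling := Stirling.log_stirlingSeq_formula m
  rw [Real.log_mul two_ne_zero hm', Real.log_div hm' (Real.exp_ne_zero _),
    Real.log_exp] at h_stirling
  linarith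

lemma sum_log_one_sub_div_eq {m : ℕ} (hm : 0 < m) (q : ℕ) :
    ∑ k ∈ range q, Real.log (((m + q : ℝ) - k) / (m + q))
      = Real.log (Stirling.stirlingSeq (m + q)) - Real.log (Stirling.stirlingSeq m)
        + (m + 1 / 2) * (Real.log (m + q) - Real.log m) - q := by
  have h_sum := sum_log_natCast_sub (Nat.le_add_left q m)
  rw [Nat.add_sub_cancel, log_factorial_eq hm, log_factorial_eq (m := m + q) (by omega),
    Nat.cast_add] at h_sum
  have hm' : (0 : ℝ) < m := by exact_mod_cast hm
  have h_term : ∀ k ∈ range q, Real.log (((m + q : ℝ) - k) / (m + q))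
      = Real.log ((m + q : ℝ) - k) - Real.log (m + q) := by
    intro k hk
    have hkq : (k : ℝ) ≤ q := by exact_mod_cast (mem_range.1 hk).le
    exact Real.log_div (by linarith) (by positivity)
  rw [sum_congr rfl h_term, sum_sub_distrib, h_sum, sum_const, card_range, nsmul_eq_mul]
  ring

lemma sum_log_one_sub_div_add_eq {m : ℕ} (hm : 0 < m) (q : ℕ) :
    ∑ k ∈ range q, Real.log (((m + q : ℝ) - k) / (m + q))
        + (m + 1) * Real.log (1 - q / (m + q + 1)) + q
      = Real.log (Stirling.stirlingSeq (m + q)) - Real.log (Stirling.stirlingSeq m)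
        - Real.log (1 - q / (m + q)) / 2 + m * Real.log (1 + 1 / m)
        - (1 - q / (m + q)) * ((m + q) * Real.log (1 + 1 / (m + q)))
        + Real.log (1 - q / (m + q + 1)) := by
  have hm' : (0 : ℝ) < m := by exact_mod_cast hm
  have hmq : (m + q : ℝ) ≠ 0 := by positivity
  have hmq1 : (m + q + 1 : ℝ) ≠ 0 := by positivity
  have h_one_sub : (1 - q / (m + q) : ℝ) = m / (m + q) := by field_simp; ring
  have h_one_sub' : (1 - q / (m + q + 1) : ℝ) = (m + 1) / (m + q + 1) := by field_simp; ring
  have h_one_add : (1 + 1 / m : ℝ) = (m + 1) / m := by field_simp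
  have h_one_add' : (1 + 1 / (m + q) : ℝ) = (m + q + 1) / (m + q) := by field_simp
  rw [sum_log_one_sub_div_eq hm, h_one_sub, h_one_sub', h_one_add, h_one_add',
    Real.log_div (by positivity) hmq, Real.log_div (by positivity) hmq1,
    Real.log_div (by positivity) hm'.ne', Real.log_div hmq1 hmq]
  field_simp
  ring

lemma tendsto_sub_one_sub_atTop {y : ℝ} {p : ℕ → ℕ} (hy1 : y < 1)
    (hpy : Tendsto (fun n => (p n : ℝ) / (n : ℝ)) atTop (𝓝 y)) :
    Tendsto (fun n : ℕ => n - 1 - p n) atTop atTop := by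
  refine (tendsto_natCast_atTop_iff (R := ℝ)).1 (tendsto_atTop.2 fun K => ?_)
  filter_upwards [eventually_le_natCast_sub_one_sub hy1 hpy K] with n hn
  have h_cast : (n : ℝ) ≤ (n - 1 - p n : ℕ) + p n + 1 := by
    exact_mod_cast (by omega : n ≤ (n - 1 - p n) + p n + 1)
  linarith

theorem tendsto_sum_log_one_sub_div {y : ℝ} {p : ℕ → ℕ} (hy1 : y < 1)
    (hpy : Tendsto (fun n => (p n : ℝ) / (n : ℝ)) atTop (𝓝 y)) :
    Tendsto (fun n : ℕ => ∑ k ∈ range (p n), Real.log (((n : ℝ) - 1 - k) / (n - 1))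
        + ((n : ℝ) - p n) * Real.log (1 - p n / n) + p n) atTop
      (𝓝 (1 / 2 * Real.log (1 - y) + y)) := by
  have hM := tendsto_sub_one_sub_atTop hy1 hpy
  have hN : Tendsto (fun n : ℕ => n - 1) atTop atTop := tendsto_sub_atTop_nat 1
  have h_stirling : Tendsto (fun m => Real.log (Stirling.stirlingSeq m)) atTop
      (𝓝 (Real.log √Real.pi)) := Stirling.tendsto_stirlingSeq_sqrt_pi.log (by positivity)
  have h_euler : Tendsto (fun m : ℕ => (m : ℝ) * Real.log (1 + 1 / m)) atTop (𝓝 1) :=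
    (Real.tendsto_mul_log_one_add_div_atTop 1).comp tendsto_natCast_atTop_atTop
  have h_ratio := (tendsto_div_natCast_sub hpy 1).const_sub 1
  have h_lim := (((((h_stirling.comp hN).sub (h_stirling.comp hM)).sub
    ((h_ratio.log (by linarith)).div_const 2)).add (h_euler.comp hM)).sub
    (h_ratio.mul (h_euler.comp hN))).add ((hpy.const_sub 1).log (by linarith))
  rw [show Real.log √Real.pi - Real.log √Real.pi - Real.log (1 - y) / 2 + 1 - (1 - y) * 1
    + Real.log (1 - y) = 1 / 2 * Real.log (1 - y) + y by ring] at h_lim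
  refine h_lim.congr' ?_
  filter_upwards [eventually_le_natCast_sub_one_sub hy1 hpy 1] with n hn
  obtain ⟨m, hm⟩ : ∃ m, n = m + p n + 1 :=
    ⟨n - (p n + 1), by
      have : p n + 2 ≤ n := by
        rify
        linarith
      omega⟩
  have hn_sub : n - 1 = m + p n := by omega
  have hn_cast : (n : ℝ) = m + p n + 1 := by exact_mod_cast hm
  have hm_pos : 0 < m := by
    rify
    linarith
  simp only [Function.comp, hn_sub, Nat.add_sub_cancel]
  rw [hn_cast, add_sub_cancel_right, show (m + p n + 1 - p n : ℝ) = m + 1 by ring]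
  push_cast
  exact (sum_log_one_sub_div_add_eq hm_pos (p n)).symm

end StirlingLimit

section FrobeniusPerturbation

open scoped Matrix.Norms.Frobenius

variable {m : Type*} [Fintype m]

lemma sq_frobenius_norm_eq_sum (A : Matrix m m ℝ) : ‖A‖ ^ 2 = ∑ i, ∑ j, A i j ^ 2 := by
  have h_nonneg : 0 ≤ ∑ i, ∑ j, ‖A i j‖ ^ (2 : ℝ) :=
    sum_nonneg fun i _ => sum_nonneg fun j _ => by positivity
  rw [Matrix.frobenius_norm_def, ← Real.sqrt_eq_rpow, Real.sq_sqrt h_nonneg]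
  simp only [Real.rpow_ofNat, Real.norm_eq_abs, sq_abs]

lemma sq_frobenius_norm_eq_trace (A : Matrix m m ℝ) : ‖A‖ ^ 2 = (A * Aᵀ).trace := by
  rw [sq_frobenius_norm_eq_sum]
  simp only [Matrix.trace, Matrix.diag_apply, Matrix.mul_apply, Matrix.transpose_apply, sq]

lemma abs_trace_mul_le (A B : Matrix m m ℝ) : |(A * B).trace| ≤ ‖A‖ * ‖B‖ := by
  have h_sq : (A * B).trace ^ 2 ≤ ‖A‖ ^ 2 * ‖Bᵀ‖ ^ 2 := by
    simp only [sq_frobenius_norm_eq_sum, Matrix.trace, Matrix.diag_apply, Matrix.mul_apply,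
      Matrix.transpose_apply, ← Fintype.sum_prod_type']
    exact sum_mul_sq_le_sq_mul_sq _ _ _
  rw [Matrix.frobenius_norm_transpose, ← mul_pow] at h_sq
  exact abs_le_of_sq_le_sq h_sq (by positivity)

lemma frobenius_norm_transpose_mul_self (S : Matrix m m ℝ) : ‖Sᵀ * S‖ = ‖S * Sᵀ‖ := by
  rw [← sq_eq_sq₀ (norm_nonneg _) (norm_nonneg _), sq_frobenius_norm_eq_trace,
    sq_frobenius_norm_eq_trace, Matrix.transpose_mul, Matrix.transpose_mul,
    Matrix.transpose_transpose, Matrix.mul_assoc, Matrix.trace_mul_comm]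
  simp only [Matrix.mul_assoc]

lemma frobenius_norm_transpose_mul_mul_le (S : Matrix m m ℝ) {H : Matrix m m ℝ} (hH : H.IsSymm) :
    ‖Sᵀ * H * S‖ ≤ ‖S * Sᵀ‖ * ‖H‖ := by
  have h_trace : ‖Sᵀ * H * S‖ ^ 2 = ((S * Sᵀ * H) * (S * Sᵀ * H)).trace := by
    rw [sq_frobenius_norm_eq_trace, Matrix.transpose_mul, Matrix.transpose_mul,
      Matrix.transpose_transpose, hH.eq, Matrix.mul_assoc, Matrix.mul_assoc, Matrix.trace_mul_comm]
    simp only [Matrix.mul_assoc]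
    rw [Matrix.trace_mul_comm]
    simp only [Matrix.mul_assoc]
  have h_le : ‖S * Sᵀ * H‖ ≤ ‖S * Sᵀ‖ * ‖H‖ := Matrix.frobenius_norm_mul _ _
  refine (sq_le_sq₀ (norm_nonneg _) (by positivity)).1 ?_
  calc ‖Sᵀ * H * S‖ ^ 2 ≤ ‖S * Sᵀ * H‖ * ‖S * Sᵀ * H‖ :=
        h_trace.le.trans ((le_abs_self _).trans (abs_trace_mul_le _ _))
    _ ≤ (‖S * Sᵀ‖ * ‖H‖) ^ 2 := by
        rw [← sq]
        gcongr

variable [DecidableEq m]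

lemma frobenius_norm_one : ‖(1 : Matrix m m ℝ)‖ = √(Fintype.card m) := by
  simpa using congrArg NNReal.toReal (Matrix.frobenius_nnnorm_one (n := m) (α := ℝ))

lemma det_one_add_eq_prod_eigenvalues {X : Matrix m m ℝ} (hX : X.IsHermitian) :
    (1 + X).det = ∏ i, (1 + hX.eigenvalues i) := by
  set V := hX.eigenvectorUnitary
  have h_conj : 1 + X
      = Unitary.conjStarAlgAut ℝ _ V (Matrix.diagonal fun i => 1 + hX.eigenvalues i) := by
    conv_lhs => rw [hX.spectral_theorem, ← map_one (Unitary.conjStarAlgAut ℝ _ V), ← map_add,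
      ← Matrix.diagonal_one, Matrix.diagonal_add]
    rfl
  rw [h_conj, Unitary.conjStarAlgAut_apply, Matrix.det_mul_right_comm,
    (Matrix.mem_unitaryGroup_iff).1 V.2, one_mul, Matrix.det_diagonal]

lemma sq_frobenius_norm_eq_sum_eigenvalues_sq {X : Matrix m m ℝ} (hX : X.IsHermitian) :
    ‖X‖ ^ 2 = ∑ i, hX.eigenvalues i ^ 2 := by
  set V := hX.eigenvectorUnitary
  have h_conj : X * X
      = Unitary.conjStarAlgAut ℝ _ V (Matrix.diagonal fun i => hX.eigenvalues i ^ 2) := by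
    conv_lhs => rw [hX.spectral_theorem, ← map_mul, Matrix.diagonal_mul_diagonal]
    simp only [Function.comp_apply, RCLike.ofReal_real_eq_id, id, sq, V]
  rw [sq_frobenius_norm_eq_trace, ← Matrix.conjTranspose_eq_transpose_of_trivial, hX.eq, h_conj,
    Unitary.conjStarAlgAut_apply, Matrix.trace_mul_comm, ← mul_assoc,
    (Matrix.mem_unitaryGroup_iff').1 V.2, one_mul, Matrix.trace_diagonal]

theorem abs_log_det_one_add_sub_trace_le {X : Matrix m m ℝ} (hX : X.IsSymm) (h : ‖X‖ ≤ 1 / 2) :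
    0 < (1 + X).det ∧ |Real.log (1 + X).det - X.trace| ≤ 2 * ‖X‖ ^ 2 := by
  have hXh : X.IsHermitian := (Matrix.conjTranspose_eq_transpose_of_trivial X).trans hX
  set l := hXh.eigenvalues
  have h_sq : ‖X‖ ^ 2 = ∑ i, l i ^ 2 := sq_frobenius_norm_eq_sum_eigenvalues_sq hXh
  have h_le (i : m) : |l i| ≤ 1 / 2 := by
    refine (abs_le_of_sq_le_sq ?_ (norm_nonneg X)).trans h
    rw [h_sq]
    exact single_le_sum (f := fun i => l i ^ 2) (fun j _ => sq_nonneg _) (mem_univ i)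
  have h_pos (i : m) : 0 < 1 + l i := by linarith [(abs_le.1 (h_le i)).1]
  have h_trace : X.trace = ∑ i, l i := by simpa using hXh.trace_eq_sum_eigenvalues
  rw [det_one_add_eq_prod_eigenvalues hXh]
  refine ⟨prod_pos fun i _ => h_pos i, ?_⟩
  rw [Real.log_prod fun i _ => (h_pos i).ne', h_trace, ← sum_sub_distrib, h_sq, mul_sum]
  refine (abs_sum_le_sum_abs _ _).trans (sum_le_sum fun i _ => ?_)
  refine (abs_log_one_add_sub_self_le (h_le i)).trans ?_
  rw [sq_abs]
  gcongr
  norm_num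

lemma transpose_mul_add_smul_eq {T : Matrix m m ℝ} (hT : IsUnit T.det) (H : Matrix m m ℝ)
    (δ : ℝ) : Tᵀ * T + δ • (Tᵀ * T - 1 + H)
      = Tᵀ * (1 + δ • (1 - T⁻¹ᵀ * T⁻¹ + T⁻¹ᵀ * H * T⁻¹)) * T := by
  have h_inv : T⁻¹ * T = 1 := Matrix.nonsing_inv_mul _ hT
  have h_inv' : Tᵀ * T⁻¹ᵀ = 1 := by
    rw [← Matrix.transpose_mul, h_inv, Matrix.transpose_one]
  have h_one : Tᵀ * (T⁻¹ᵀ * T⁻¹) * T = 1 := by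
    rw [← mul_assoc, h_inv', one_mul, h_inv]
  have h_mid : Tᵀ * (T⁻¹ᵀ * H * T⁻¹) * T = H := by
    rw [mul_assoc T⁻¹ᵀ, ← mul_assoc Tᵀ, h_inv', one_mul, mul_assoc, h_inv, mul_one]
  rw [mul_add, add_mul, mul_one, Matrix.mul_smul, Matrix.smul_mul, mul_add, add_mul, mul_sub,
    sub_mul, mul_one, h_one, h_mid]

theorem abs_log_det_add_smul_sub_le {T H : Matrix m m ℝ} {δ : ℝ} (hT : T.det ≠ 0) (hH : H.IsSymm)
    (hδ : |δ| * (√(Fintype.card m) + ‖(Tᵀ * T)⁻¹‖ + ‖(Tᵀ * T)⁻¹‖ * ‖H‖) ≤ 1 / 2) :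
    |Real.log (Tᵀ * T + δ • (Tᵀ * T - 1 + H)).det - Real.log (Tᵀ * T).det
        - δ * (Fintype.card m - (Tᵀ * T)⁻¹.trace)|
      ≤ |δ| * (‖(Tᵀ * T)⁻¹‖ * ‖H‖)
        + 2 * (|δ| * (√(Fintype.card m) + ‖(Tᵀ * T)⁻¹‖ + ‖(Tᵀ * T)⁻¹‖ * ‖H‖)) ^ 2 := by
  have hTu : IsUnit T.det := isUnit_iff_ne_zero.2 hT
  set R := (Tᵀ * T)⁻¹
  set S := T⁻¹
  have hR : R = S * Sᵀ := by
    rw [show R = (Tᵀ * T)⁻¹ from rfl, Matrix.mul_inv_rev, ← Matrix.transpose_nonsing_inv]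
  set X := δ • (1 - Sᵀ * S + Sᵀ * H * S)
  have hX_symm : X.IsSymm :=
    ((Matrix.isSymm_one.sub (Matrix.isSymm_transpose_mul_self S)).add (by
      rw [Matrix.IsSymm, Matrix.transpose_mul, Matrix.transpose_mul, Matrix.transpose_transpose,
        hH.eq, mul_assoc])).smul δ
  have hX_norm : ‖X‖ ≤ |δ| * (√(Fintype.card m) + ‖R‖ + ‖R‖ * ‖H‖) := by
    rw [norm_smul, Real.norm_eq_abs, ← frobenius_norm_one, hR]
    gcongr
    refine (norm_add_le _ _).trans (add_le_add ((norm_sub_le _ _).trans_eq ?_)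
      (frobenius_norm_transpose_mul_mul_le S hH))
    rw [frobenius_norm_transpose_mul_self]
  have hX_trace : X.trace = δ * (Fintype.card m - R.trace) + δ * (R * H).trace := by
    rw [Matrix.trace_smul, Matrix.trace_add, Matrix.trace_sub, Matrix.trace_one, hR,
      Matrix.trace_mul_comm Sᵀ S, Matrix.trace_mul_comm (Sᵀ * H), ← mul_assoc, smul_eq_mul]
    ring
  obtain ⟨h_pos, h_log⟩ := abs_log_det_one_add_sub_trace_le hX_symm (hX_norm.trans hδ)
  have h_det : (Tᵀ * T + δ • (Tᵀ * T - 1 + H)).det = (Tᵀ * T).det * (1 + X).det := by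
    rw [transpose_mul_add_smul_eq hTu, Matrix.det_mul_right_comm, Matrix.det_mul]
  have h_det_ne : (Tᵀ * T).det ≠ 0 := by
    rw [Matrix.det_mul, Matrix.det_transpose]
    exact mul_ne_zero hT hT
  rw [h_det, Real.log_mul h_det_ne h_pos.ne']
  calc _ = |δ * (R * H).trace + (Real.log (1 + X).det - X.trace)| := by
        rw [hX_trace]
        ring_nf
    _ ≤ |δ| * (‖R‖ * ‖H‖) + 2 * ‖X‖ ^ 2 := by
        refine (abs_add_le _ _).trans (add_le_add ?_ h_log)
        rw [abs_mul]
        gcongr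
        exact abs_trace_mul_le R H
    _ ≤ _ := by gcongr

end FrobeniusPerturbation

section SignKernel

variable {n : ℕ}

/-- The kernel `sign (σ i - σ j)` of Kendall's rank statistic. -/
noncomputable def signKernel (σ : Equiv.Perm (Fin n)) (i j : Fin n) : ℝ :=
  Real.sign (((σ i : ℕ) : ℝ) - ((σ j : ℕ) : ℝ))

lemma neg_signKernel (σ : Equiv.Perm (Fin n)) (i j : Fin n) :
    -signKernel σ i j = signKernel σ j i := by
  rw [signKernel, signKernel, ← Real.sign_neg, neg_sub]

lemma signKernel_self (σ : Equiv.Perm (Fin n)) (i : Fin n) : signKernel σ i i = 0 := by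
  simp [signKernel]

lemma signKernel_of_lt {σ : Equiv.Perm (Fin n)} {i j : Fin n} (h : σ i < σ j) :
    signKernel σ i j = -1 := by
  have : ((σ i : ℕ) : ℝ) < ((σ j : ℕ) : ℝ) := by exact_mod_cast h
  exact Real.sign_of_neg (by linarith)

lemma signKernel_of_gt {σ : Equiv.Perm (Fin n)} {i j : Fin n} (h : σ j < σ i) :
    signKernel σ i j = 1 := by
  rw [← neg_signKernel, signKernel_of_lt h, neg_neg]

lemma signKernel_sq (σ : Equiv.Perm (Fin n)) {i j : Fin n} (hij : i ≠ j) :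
    signKernel σ i j ^ 2 = 1 := by
  rcases (σ.injective.ne hij).lt_or_gt with h | h
  · norm_num [signKernel_of_lt h]
  · norm_num [signKernel_of_gt h]

lemma abs_signKernel_le_one (σ : Equiv.Perm (Fin n)) (i j : Fin n) : |signKernel σ i j| ≤ 1 := by
  rcases eq_or_ne i j with rfl | hij
  · simp [signKernel_self]
  · exact (sq_le_one_iff_abs_le_one _).1 (signKernel_sq σ hij).le

-- Among three distinct ranks only the middle one sees the other two on opposite sides.
lemma signKernel_cyclic_sum (σ : Equiv.Perm (Fin n)) {i j l : Fin n} (hij : i ≠ j) (hil : i ≠ l)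
    (hjl : j ≠ l) :
    signKernel σ i j * signKernel σ i l + signKernel σ j i * signKernel σ j l
      + signKernel σ l i * signKernel σ l j = 1 := by
  rw [← neg_signKernel σ i j, ← neg_signKernel σ i l, ← neg_signKernel σ j l]
  rcases (σ.injective.ne hij).lt_or_gt with h₁ | h₁ <;>
    rcases (σ.injective.ne hil).lt_or_gt with h₂ | h₂ <;>
    rcases (σ.injective.ne hjl).lt_or_gt with h₃ | h₃ <;>
    first
    | exact absurd (h₁.trans h₃) h₂.asymm
    | exact absurd (h₃.trans h₁) h₂.asymm
    | norm_num [signKernel_of_lt, signKernel_of_gt, h₁, h₂, h₃]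

/-- The covariance of two sign kernels under a uniform random permutation. -/
noncomputable def signCov (i j k l : Fin n) : ℝ :=
  𝔼 σ : Equiv.Perm (Fin n), signKernel σ i j * signKernel σ k l

lemma signCov_perm (τ : Equiv.Perm (Fin n)) (i j k l : Fin n) :
    signCov (τ i) (τ j) (τ k) (τ l) = signCov i j k l :=
  Fintype.expect_equiv (Equiv.mulRight τ) _ _ fun _ => rfl

lemma neg_signCov_left (i j k l : Fin n) : -signCov i j k l = signCov j i k l := by
  simp only [signCov, ← expect_neg_distrib, ← neg_mul, neg_signKernel]

lemma neg_signCov_right (i j k l : Fin n) : -signCov i j k l = signCov i j l k := by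
  simp only [signCov, ← expect_neg_distrib, ← mul_neg, neg_signKernel]

lemma signCov_comm (i j k l : Fin n) : signCov i j k l = signCov k l i j := by
  simp only [signCov, mul_comm]

lemma signCov_self_left (i k l : Fin n) : signCov i i k l = 0 := by
  simp [signCov, signKernel_self]

lemma signCov_same {i j : Fin n} (hij : i ≠ j) : signCov i j i j = 1 := by
  simp only [signCov, ← sq, signKernel_sq _ hij, Fintype.expect_const]

lemma signCov_disjoint {i j k l : Fin n} (hik : i ≠ k) (hil : i ≠ l) (hjk : j ≠ k)
    (hjl : j ≠ l) : signCov i j k l = 0 := by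
  have h := signCov_perm (Equiv.swap i j) i j k l
  rw [Equiv.swap_apply_left, Equiv.swap_apply_right, Equiv.swap_apply_of_ne_of_ne hik.symm hjk.symm,
    Equiv.swap_apply_of_ne_of_ne hil.symm hjl.symm, ← neg_signCov_left] at h
  linarith

lemma signCov_share_left {i j l : Fin n} (hij : i ≠ j) (hil : i ≠ l) (hjl : j ≠ l) :
    signCov i j i l = 1 / 3 := by
  have hji := signCov_perm (Equiv.swap i j) i j i l
  rw [Equiv.swap_apply_left, Equiv.swap_apply_right,
    Equiv.swap_apply_of_ne_of_ne hil.symm hjl.symm] at hji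
  have hli := signCov_perm (Equiv.swap i l) i l i j
  rw [Equiv.swap_apply_left, Equiv.swap_apply_right, Equiv.swap_apply_of_ne_of_ne hij.symm hjl,
    signCov_comm i l] at hli
  have hsum : signCov i j i l + signCov j i j l + signCov l i l j = 1 := by
    simp only [signCov, ← expect_add_distrib, signKernel_cyclic_sum _ hij hil hjl,
      Fintype.expect_const]
  linarith

local notation "δ" => (1 : Matrix (Fin n) (Fin n) ℝ)

lemma signCov_eq (i j k l : Fin n) :
    signCov i j k l
      = (δ i k + δ j l - δ i l - δ j k) / 3 + (δ i k * δ j l - δ i l * δ j k) / 3 := by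
  rcases eq_or_ne i j with rfl | hij
  · rw [signCov_self_left]; ring
  rcases eq_or_ne k l with rfl | hkl
  · rw [signCov_comm, signCov_self_left]; ring
  have hji := hij.symm
  rcases eq_or_ne i k with rfl | hik
  · rcases eq_or_ne j l with rfl | hjl
    · norm_num [signCov_same hij, hij, hji]
    · norm_num [signCov_share_left hij hkl hjl, hji, hjl, hkl]
  rcases eq_or_ne j l with rfl | hjl
  · rw [← neg_signCov_left, ← neg_signCov_right, signCov_share_left hji hkl.symm hik]
    norm_num [hij, hik, hkl.symm]
  rcases eq_or_ne i l with rfl | hil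
  · rcases eq_or_ne j k with rfl | hjk
    · norm_num [← neg_signCov_right i j i j, signCov_same hij, hij, hji]
    · norm_num [← neg_signCov_right i j i k, signCov_share_left hij hik hjk, hik, hji, hjk]
  rcases eq_or_ne j k with rfl | hjk
  · norm_num [← neg_signCov_left j i j l, signCov_share_left hji hkl hil, hij, hjl, hil]
  · simp [signCov_disjoint hik hil hjk hjl, hik, hil, hjk, hjl]

lemma sum_mul_signCov {C : Fin n → Fin n → ℝ} (hC : ∀ i j, -C i j = C j i) (i j : Fin n) :
    ∑ k, ∑ l, C k l * signCov i j k l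
      = 2 / 3 * ∑ l, C i l - 2 / 3 * ∑ l, C j l + 2 / 3 * C i j := by
  have hcol (i : Fin n) : ∑ k, C k i = -∑ l, C i l := by simp only [← hC i, sum_neg_distrib]
  have hterm (k l : Fin n) : C k l * signCov i j k l
      = (C k l * δ i k + C k l * δ j l - C k l * δ i l - C k l * δ j k) / 3
        + (C k l * δ j l * δ i k - C k l * δ i l * δ j k) / 3 := by
    rw [signCov_eq]; ring
  simp only [hterm, sum_add_distrib, sum_sub_distrib, ← sum_div, Matrix.one_apply, mul_ite, mul_one,
    mul_zero, sum_ite_eq, sum_ite_irrel, sum_const_zero, mem_univ, if_true, hcol, ← hC i j]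
  ring

lemma expect_sum_signKernel_mul_sq {C : Fin n → Fin n → ℝ} (hC : ∀ i j, -C i j = C j i) :
    𝔼 σ : Equiv.Perm (Fin n), (∑ i, ∑ j, signKernel σ i j * C i j) ^ 2
      = 4 / 3 * ∑ i, (∑ j, C i j) ^ 2 + 2 / 3 * ∑ i, ∑ j, C i j ^ 2 := by
  have hsq (σ : Equiv.Perm (Fin n)) : (∑ i, ∑ j, signKernel σ i j * C i j) ^ 2
      = ∑ i, ∑ j, C i j * ∑ k, ∑ l, C k l * (signKernel σ i j * signKernel σ k l) := by
    simp only [sq, sum_mul, mul_sum]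
    exact sum_congr rfl fun i _ => sum_congr rfl fun j _ => sum_congr rfl fun k _ =>
      sum_congr rfl fun l _ => by ring
  have hrow : ∑ i, ∑ j, C i j * ∑ l, C i l = ∑ i, (∑ j, C i j) ^ 2 := by
    simp only [← sum_mul, sq]
  have hcol : ∑ i, ∑ j, C i j * ∑ l, C j l = -∑ i, (∑ j, C i j) ^ 2 := by
    rw [sum_comm, ← sum_neg_distrib]
    refine sum_congr rfl fun j _ => ?_
    rw [← sum_mul, sq, ← neg_mul, ← sum_neg_distrib]
    simp only [hC]
  calc 𝔼 σ : Equiv.Perm (Fin n), (∑ i, ∑ j, signKernel σ i j * C i j) ^ 2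
      = ∑ i, ∑ j, C i j * ∑ k, ∑ l, C k l * signCov i j k l := by
        simp only [hsq, expect_sum_comm, ← mul_expect, signCov]
    _ = 2 / 3 * ∑ i, ∑ j, C i j * ∑ l, C i l - 2 / 3 * ∑ i, ∑ j, C i j * ∑ l, C j l
          + 2 / 3 * ∑ i, ∑ j, C i j ^ 2 := by
        have hterm (a u v : ℝ) : a * (2 / 3 * u - 2 / 3 * v + 2 / 3 * a)
            = 2 / 3 * (a * u) - 2 / 3 * (a * v) + 2 / 3 * a ^ 2 := by ring
        simp only [sum_mul_signCov hC, hterm, sum_add_distrib, sum_sub_distrib,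
          ← mul_sum univ _ (2 / 3 : ℝ)]
    _ = 4 / 3 * ∑ i, (∑ j, C i j) ^ 2 + 2 / 3 * ∑ i, ∑ j, C i j ^ 2 := by
        rw [hrow, hcol]; ring

/-- Twice the rank of `i` under `σ`, centered. -/
noncomputable def centeredRank (σ : Equiv.Perm (Fin n)) (i : Fin n) : ℝ :=
  2 * (σ i : ℕ) - ((n : ℝ) - 1)

lemma sum_range_sign_sub {m N : ℕ} (h : m + 1 ≤ N) :
    ∑ v ∈ range N, Real.sign ((m : ℝ) - v) = 2 * m - ((N : ℝ) - 1) := by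
  induction N, h using Nat.le_induction with
  | base =>
    have hpos : ∀ v ∈ range m, Real.sign ((m : ℝ) - v) = 1 := fun v hv =>
      Real.sign_of_pos (sub_pos.2 (by exact_mod_cast mem_range.1 hv))
    rw [sum_range_succ, sum_congr rfl hpos]
    simp; ring
  | succ N hN ih =>
    rw [sum_range_succ, ih, Real.sign_of_neg (sub_neg.2 (by exact_mod_cast hN))]
    push_cast; ring

lemma sum_range_two_mul_sub_sq (c : ℝ) (N : ℕ) :
    ∑ v ∈ range N, (2 * (v : ℝ) - c) ^ 2
      = 2 * N * (N - 1) * (2 * N - 1) / 3 - 2 * c * N * (N - 1) + N * c ^ 2 := by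
  induction N with
  | zero => simp
  | succ N ih => rw [sum_range_succ, ih]; push_cast; ring

lemma sum_signKernel (σ : Equiv.Perm (Fin n)) (i : Fin n) :
    ∑ j, signKernel σ i j = centeredRank σ i := by
  simp only [signKernel, centeredRank]
  rw [Equiv.sum_comp σ (fun v : Fin n => Real.sign (((σ i : ℕ) : ℝ) - ((v : ℕ) : ℝ))),
    Fin.sum_univ_eq_sum_range (fun v : ℕ => Real.sign (((σ i : ℕ) : ℝ) - (v : ℝ))) n]
  exact sum_range_sign_sub (σ i).2

lemma sum_centeredRank (σ : Equiv.Perm (Fin n)) : ∑ i, centeredRank σ i = 0 := by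
  have h : ∑ i, ∑ j, signKernel σ i j = -∑ i, ∑ j, signKernel σ i j := by
    conv_lhs => rw [sum_comm]
    simp only [← sum_neg_distrib, neg_signKernel]
  simp only [sum_signKernel] at h
  linarith

lemma sum_centeredRank_sq (σ : Equiv.Perm (Fin n)) :
    ∑ i, centeredRank σ i ^ 2 = n * ((n : ℝ) ^ 2 - 1) / 3 := by
  simp only [centeredRank]
  rw [Equiv.sum_comp σ (fun v : Fin n => (2 * ((v : ℕ) : ℝ) - ((n : ℝ) - 1)) ^ 2),
    Fin.sum_univ_eq_sum_range (fun v : ℕ => (2 * (v : ℝ) - ((n : ℝ) - 1)) ^ 2) n,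
    sum_range_two_mul_sub_sq]
  ring

lemma abs_centeredRank_le (σ : Equiv.Perm (Fin n)) (i : Fin n) :
    |centeredRank σ i| ≤ (n : ℝ) - 1 := by
  have hlt : ((σ i : ℕ) : ℝ) + 1 ≤ n := by exact_mod_cast (σ i).2
  have : (0 : ℝ) ≤ ((σ i : ℕ) : ℝ) := Nat.cast_nonneg _
  rw [centeredRank, abs_le]
  constructor <;> linarith

/-- The score vector of Spearman's statistic: the centered ranks, scaled to a unit vector. -/
noncomputable def spearmanScore (n : ℕ) (i : Fin n) : ℝ :=
  centeredRank 1 i / √(n * ((n : ℝ) ^ 2 - 1) / 3)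

lemma spearmanScore_apply_perm (σ : Equiv.Perm (Fin n)) (i : Fin n) :
    spearmanScore n (σ i) = centeredRank σ i / √(n * ((n : ℝ) ^ 2 - 1) / 3) := rfl

lemma isBoundedScore_spearmanScore (hn : 2 ≤ n) : IsBoundedScore 3 (spearmanScore n) := by
  have hn' : (2 : ℝ) ≤ n := by exact_mod_cast hn
  have hsub : (0 : ℝ) < (n : ℝ) ^ 2 - 1 := by nlinarith
  have hpos : (0 : ℝ) < n * ((n : ℝ) ^ 2 - 1) / 3 := by positivity
  refine ⟨⟨?_, ?_⟩, fun i => ?_⟩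
  · simp only [spearmanScore, ← sum_div, sum_centeredRank, zero_div]
  · simp only [spearmanScore, div_pow, Real.sq_sqrt hpos.le, ← sum_div, sum_centeredRank_sq,
      div_self hpos.ne']
  · have hrank : centeredRank (1 : Equiv.Perm (Fin n)) i ^ 2 ≤ ((n : ℝ) - 1) ^ 2 :=
      sq_le_sq' (abs_le.1 (abs_centeredRank_le 1 i)).1 (abs_le.1 (abs_centeredRank_le 1 i)).2
    rw [spearmanScore, div_pow, Real.sq_sqrt hpos.le, Fintype.card_fin,
      div_le_div_iff₀ hpos (by linarith)]
    nlinarith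

end SignKernel

section HoeffdingDecomposition

open scoped Matrix.Norms.Frobenius

variable {n p : ℕ}

/-- Spearman's rank correlation matrix. -/
noncomputable def spearmanMatrix (n p : ℕ) (ω : Fin p → Equiv.Perm (Fin n)) :
    Matrix (Fin p) (Fin p) ℝ :=
  gramMatrix p (column (spearmanScore n) ω)

/-- Kendall's rank correlation matrix. -/
noncomputable def kendallMatrix (n p : ℕ) (ω : Fin p → Equiv.Perm (Fin n)) :
    Matrix (Fin p) (Fin p) ℝ :=
  Matrix.of fun a b =>
    1 / (n * ((n : ℝ) - 1)) * ∑ i, ∑ j, signKernel (ω a) i j * signKernel (ω b) i j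

/-- The remainder left when `3 • τ` is replaced by its Hájek projection `2 • ρ + 1`, for `τ` and
`ρ` the rank correlation matrices of Kendall and Spearman. -/
noncomputable def kendallRemainder (n p : ℕ) (ω : Fin p → Equiv.Perm (Fin n)) :
    Matrix (Fin p) (Fin p) ℝ :=
  (2 : ℝ) • spearmanMatrix n p ω + 1 - (3 : ℝ) • kendallMatrix n p ω

lemma spearmanMatrix_apply (hn : 2 ≤ n) (ω : Fin p → Equiv.Perm (Fin n)) (a b : Fin p) :
    spearmanMatrix n p ω a b
      = 3 / (n * ((n : ℝ) ^ 2 - 1)) * ∑ i, centeredRank (ω a) i * centeredRank (ω b) i := by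
  have hn' : (2 : ℝ) ≤ n := by exact_mod_cast hn
  have hsub : (0 : ℝ) < (n : ℝ) ^ 2 - 1 := by nlinarith
  have hpos : (0 : ℝ) < n * ((n : ℝ) ^ 2 - 1) / 3 := by positivity
  simp only [spearmanMatrix, gramMatrix, Matrix.of_apply, dotProduct, column_fin,
    Function.comp_apply, spearmanScore_apply_perm, div_mul_div_comm, Real.mul_self_sqrt hpos.le,
    ← sum_div]
  field_simp

lemma kendallMatrix_apply (ω : Fin p → Equiv.Perm (Fin n)) (a b : Fin p) :
    kendallMatrix n p ω a b
      = 1 / (n * ((n : ℝ) - 1)) * ∑ i, ∑ j, signKernel (ω a) i j * signKernel (ω b) i j := rfl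

lemma kendallRemainder_apply (ω : Fin p → Equiv.Perm (Fin n)) (a b : Fin p) :
    kendallRemainder n p ω a b = 2 * spearmanMatrix n p ω a b
      + (1 : Matrix (Fin p) (Fin p) ℝ) a b - 3 * kendallMatrix n p ω a b := rfl

lemma sum_erase_erase_signKernel (σ τ : Equiv.Perm (Fin n)) (i : Fin n) :
    ∑ j ∈ univ.erase i, ∑ k ∈ (univ.erase i).erase j, signKernel σ i j * signKernel τ i k
      = centeredRank σ i * centeredRank τ i - ∑ j, signKernel σ i j * signKernel τ i j := by
  have hinner : ∀ j ∈ univ.erase i,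
      ∑ k ∈ (univ.erase i).erase j, signKernel σ i j * signKernel τ i k
        = signKernel σ i j * (centeredRank τ i - signKernel τ i j) := fun j hj => by
    rw [← mul_sum, ← sum_signKernel τ, sum_erase_eq_sub hj, sum_erase _ (signKernel_self τ i)]
  rw [sum_congr rfl hinner, sum_erase _ (by simp [signKernel_self])]
  simp only [mul_sub, sum_sub_distrib, ← sum_mul, sum_signKernel]

theorem improvedSpearmanRho_eq (hn : 3 ≤ n) (ω : Fin p → Equiv.Perm (Fin n)) :
    improvedSpearmanRho n p ω = spearmanMatrix n p ω
      + (1 / ((n : ℝ) - 2)) • (spearmanMatrix n p ω - 1 + kendallRemainder n p ω) := by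
  have hn' : (3 : ℝ) ≤ n := by exact_mod_cast hn
  ext a b
  have hentry : improvedSpearmanRho n p ω a b = 3 / ((n : ℝ) * ((n : ℝ) - 1) * ((n : ℝ) - 2))
      * ∑ i, ∑ j ∈ univ.erase i, ∑ k ∈ (univ.erase i).erase j,
          signKernel (ω a) i j * signKernel (ω b) i k := by
    simp only [improvedSpearmanRho, Matrix.smul_apply, smul_eq_mul, Matrix.sum_apply,
      Matrix.vecMulVec_apply, signKernel]
  simp only [hentry, sum_erase_erase_signKernel, sum_sub_distrib, Matrix.add_apply,
    Matrix.smul_apply, Matrix.sub_apply, smul_eq_mul, kendallRemainder_apply, kendallMatrix_apply,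
    spearmanMatrix_apply (by lia : 2 ≤ n)]
  have h₁ : (n : ℝ) - 1 ≠ 0 := by linarith
  have h₂ : (n : ℝ) - 2 ≠ 0 := by linarith
  have h₃ : (n : ℝ) + 1 ≠ 0 := by linarith
  rw [(by ring : (n : ℝ) ^ 2 - 1 = (n - 1) * (n + 1))]
  field_simp
  ring

lemma isSymm_kendallRemainder (ω : Fin p → Equiv.Perm (Fin n)) :
    (kendallRemainder n p ω).IsSymm := by
  refine Matrix.IsSymm.ext fun a b => ?_
  simp only [kendallRemainder_apply, kendallMatrix_apply, spearmanMatrix, gramMatrix,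
    Matrix.of_apply, dotProduct_comm (column _ ω b), mul_comm (signKernel (ω b) _ _),
    Matrix.one_apply, eq_comm (a := b)]

lemma kendallRemainder_apply_self (hn : 2 ≤ n) (ω : Fin p → Equiv.Perm (Fin n)) (a : Fin p) :
    kendallRemainder n p ω a a = 0 := by
  have hn' : (2 : ℝ) ≤ n := by exact_mod_cast hn
  have h₁ : (n : ℝ) - 1 ≠ 0 := by linarith
  have h₂ : (n : ℝ) ^ 2 - 1 ≠ 0 := by nlinarith
  have hrow (i : Fin n) : ∑ j, signKernel (ω a) i j ^ 2 = (n : ℝ) - 1 := by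
    have hone : ∀ j ∈ univ.erase i, signKernel (ω a) i j ^ 2 = 1 := fun j hj =>
      signKernel_sq _ (ne_of_mem_erase hj).symm
    have hzero : signKernel (ω a) i i ^ 2 = 0 := by simp [signKernel_self]
    rw [← sum_erase (f := fun j => signKernel (ω a) i j ^ 2) univ hzero, sum_congr rfl hone]
    simp [card_erase_of_mem, Nat.cast_sub (by lia : 1 ≤ n)]
  simp only [kendallRemainder_apply, spearmanMatrix_apply hn, kendallMatrix_apply, ← sq,
    sum_centeredRank_sq, hrow, sum_const, card_univ, Fintype.card_fin, nsmul_eq_mul,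
    Matrix.one_apply_eq]
  field_simp
  norm_num

/-- The coefficients of an off-diagonal entry of `kendallRemainder` as a linear form in the sign
kernel of one column, the other column `τ` being fixed. -/
noncomputable def remainderCoeff (τ : Equiv.Perm (Fin n)) (i j : Fin n) : ℝ :=
  3 / (n * ((n : ℝ) ^ 2 - 1)) * (centeredRank τ i - centeredRank τ j)
    - 3 / (n * ((n : ℝ) - 1)) * signKernel τ i j

lemma kendallRemainder_apply_of_ne (hn : 2 ≤ n) (ω : Fin p → Equiv.Perm (Fin n)) {a b : Fin p}
    (hab : a ≠ b) :
    kendallRemainder n p ω a b = ∑ i, ∑ j, signKernel (ω a) i j * remainderCoeff (ω b) i j := by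
  have hleft : ∑ i, ∑ j, signKernel (ω a) i j * centeredRank (ω b) i
      = ∑ i, centeredRank (ω a) i * centeredRank (ω b) i := by
    simp only [← sum_mul, sum_signKernel]
  have hright : ∑ i, ∑ j, signKernel (ω a) i j * centeredRank (ω b) j
      = -∑ i, centeredRank (ω a) i * centeredRank (ω b) i := by
    rw [sum_comm]
    simp only [← sum_mul, ← sum_neg_distrib, ← neg_mul, ← sum_signKernel (ω a), neg_signKernel]
  have hterm (i j : Fin n) : signKernel (ω a) i j * remainderCoeff (ω b) i j
      = 3 / (n * ((n : ℝ) ^ 2 - 1)) * (signKernel (ω a) i j * centeredRank (ω b) i)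
        - 3 / (n * ((n : ℝ) ^ 2 - 1)) * (signKernel (ω a) i j * centeredRank (ω b) j)
        - 3 / (n * ((n : ℝ) - 1)) * (signKernel (ω a) i j * signKernel (ω b) i j) := by
    rw [remainderCoeff]; ring
  simp only [hterm, sum_sub_distrib, ← mul_sum, hleft, hright, kendallRemainder_apply,
    spearmanMatrix_apply hn, kendallMatrix_apply, Matrix.one_apply_ne hab]
  ring

lemma neg_remainderCoeff (τ : Equiv.Perm (Fin n)) (i j : Fin n) :
    -remainderCoeff τ i j = remainderCoeff τ j i := by
  rw [remainderCoeff, remainderCoeff, ← neg_signKernel τ i j]; ring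

lemma sum_remainderCoeff (hn : 2 ≤ n) (τ : Equiv.Perm (Fin n)) (i : Fin n) :
    ∑ j, remainderCoeff τ i j = -3 / (n * ((n : ℝ) ^ 2 - 1)) * centeredRank τ i := by
  have hn' : (2 : ℝ) ≤ n := by exact_mod_cast hn
  have h₁ : (n : ℝ) - 1 ≠ 0 := by linarith
  have h₂ : (n : ℝ) + 1 ≠ 0 := by linarith
  simp only [remainderCoeff, sum_sub_distrib, ← mul_sum, sum_centeredRank, sum_signKernel,
    sum_const, card_univ, Fintype.card_fin, nsmul_eq_mul]
  rw [(by ring : (n : ℝ) ^ 2 - 1 = (n - 1) * (n + 1))]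
  field_simp
  ring

lemma abs_remainderCoeff_le (hn : 2 ≤ n) (τ : Equiv.Perm (Fin n)) (i j : Fin n) :
    |remainderCoeff τ i j| ≤ 9 / (n * ((n : ℝ) - 1)) := by
  have hn' : (2 : ℝ) ≤ n := by exact_mod_cast hn
  have h₁ : (0 : ℝ) < (n : ℝ) - 1 := by linarith
  have h₂ : (n : ℝ) ^ 2 - 1 = (n - 1) * (n + 1) := by ring
  have h₃ : (0 : ℝ) < (n : ℝ) ^ 2 - 1 := by rw [h₂]; positivity
  have hrank : |centeredRank τ i - centeredRank τ j| ≤ 2 * (n + 1) :=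
    (abs_sub _ _).trans (by linarith [abs_centeredRank_le τ i, abs_centeredRank_le τ j])
  calc |remainderCoeff τ i j|
      ≤ 3 / (n * ((n : ℝ) ^ 2 - 1)) * |centeredRank τ i - centeredRank τ j|
          + 3 / (n * ((n : ℝ) - 1)) * |signKernel τ i j| := by
        refine (abs_sub _ _).trans (le_of_eq ?_)
        rw [abs_mul, abs_mul, abs_of_pos (by positivity : 0 < 3 / (n * ((n : ℝ) ^ 2 - 1))),
          abs_of_pos (by positivity : 0 < 3 / (n * ((n : ℝ) - 1)))]
    _ ≤ 3 / (n * ((n : ℝ) ^ 2 - 1)) * (2 * (n + 1)) + 3 / (n * ((n : ℝ) - 1)) * 1 := by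
        gcongr
        exact abs_signKernel_le_one τ i j
    _ = 9 / (n * ((n : ℝ) - 1)) := by
        rw [h₂]
        field_simp
        norm_num

lemma expect_sum_signKernel_mul_remainderCoeff_sq_le (hn : 2 ≤ n) (τ : Equiv.Perm (Fin n)) :
    𝔼 σ : Equiv.Perm (Fin n), (∑ i, ∑ j, signKernel σ i j * remainderCoeff τ i j) ^ 2
      ≤ 58 / ((n : ℝ) - 1) ^ 2 := by
  have hn' : (2 : ℝ) ≤ n := by exact_mod_cast hn
  have h₁ : (0 : ℝ) < (n : ℝ) - 1 := by linarith
  have hrows : ∑ i, (∑ j, remainderCoeff τ i j) ^ 2 ≤ 3 / ((n : ℝ) - 1) ^ 2 := by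
    have h₂ : (0 : ℝ) < (n : ℝ) ^ 2 - 1 := by nlinarith
    calc ∑ i, (∑ j, remainderCoeff τ i j) ^ 2 = 3 / (n * ((n : ℝ) ^ 2 - 1)) := by
          simp only [sum_remainderCoeff hn, mul_pow, ← mul_sum, sum_centeredRank_sq]
          field_simp
      _ ≤ 3 / ((n : ℝ) - 1) ^ 2 := by
          gcongr
          nlinarith
  have hentries : ∑ i, ∑ j, remainderCoeff τ i j ^ 2 ≤ 81 / ((n : ℝ) - 1) ^ 2 := by
    calc ∑ i, ∑ j, remainderCoeff τ i j ^ 2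
        ≤ ∑ _i : Fin n, ∑ _j : Fin n, (9 / (n * ((n : ℝ) - 1))) ^ 2 :=
          sum_le_sum fun i _ => sum_le_sum fun j _ => by
            rw [← sq_abs]
            exact pow_le_pow_left₀ (abs_nonneg _) (abs_remainderCoeff_le hn τ i j) 2
      _ = 81 / ((n : ℝ) - 1) ^ 2 := by
          simp only [sum_const, card_univ, Fintype.card_fin, nsmul_eq_mul]
          field_simp
          norm_num
  calc _ = 4 / 3 * ∑ i, (∑ j, remainderCoeff τ i j) ^ 2
        + 2 / 3 * ∑ i, ∑ j, remainderCoeff τ i j ^ 2 :=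
        expect_sum_signKernel_mul_sq (neg_remainderCoeff τ)
    _ ≤ 4 / 3 * (3 / ((n : ℝ) - 1) ^ 2) + 2 / 3 * (81 / ((n : ℝ) - 1) ^ 2) := by gcongr
    _ = 58 / ((n : ℝ) - 1) ^ 2 := by ring

lemma expect_kendallRemainder_apply_sq_le (hn : 2 ≤ n) (a b : Fin p) :
    𝔼 ω : Fin p → Equiv.Perm (Fin n), kendallRemainder n p ω a b ^ 2
      ≤ 58 / ((n : ℝ) - 1) ^ 2 := by
  rcases eq_or_ne a b with rfl | hab
  · simp only [kendallRemainder_apply_self hn, zero_pow two_ne_zero, expect_const_zero]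
    positivity
  · rw [expect_eq_expect_update a]
    refine expect_le univ_nonempty fun ω _ => ?_
    simp only [kendallRemainder_apply_of_ne hn _ hab, Function.update_self,
      Function.update_of_ne hab.symm]
    exact expect_sum_signKernel_mul_remainderCoeff_sq_le hn (ω b)

theorem expect_norm_kendallRemainder_sq_le (hn : 2 ≤ n) (hp : p + 1 ≤ n) :
    𝔼 ω : Fin p → Equiv.Perm (Fin n), ‖kendallRemainder n p ω‖ ^ 2 ≤ 58 := by
  have hn' : (0 : ℝ) < (n : ℝ) - 1 := by
    have : (2 : ℝ) ≤ n := by exact_mod_cast hn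
    linarith
  have hp' : (p : ℝ) ≤ n - 1 := by
    have : (p : ℝ) + 1 ≤ n := by exact_mod_cast hp
    linarith
  calc 𝔼 ω : Fin p → Equiv.Perm (Fin n), ‖kendallRemainder n p ω‖ ^ 2
      = ∑ a, ∑ b, 𝔼 ω : Fin p → Equiv.Perm (Fin n), kendallRemainder n p ω a b ^ 2 := by
        simp only [sq_frobenius_norm_eq_sum, expect_sum_comm]
    _ ≤ ∑ _a : Fin p, ∑ _b : Fin p, 58 / ((n : ℝ) - 1) ^ 2 :=
        sum_le_sum fun a _ => sum_le_sum fun b _ => expect_kendallRemainder_apply_sq_le hn a b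
    _ = 58 * (p / ((n : ℝ) - 1)) ^ 2 := by
        rw [div_pow]
        simp only [sum_const, card_univ, Fintype.card_fin, nsmul_eq_mul]
        ring
    _ ≤ 58 * 1 ^ 2 := by
        gcongr
        exact (div_le_one hn').2 hp'
    _ = 58 := by norm_num

end HoeffdingDecomposition

section InverseOfTriangularGram

variable {m : Type*} [Fintype m] [LinearOrder m] {T : Matrix m m ℝ} {a l : m}

lemma inv_transpose_mul_self_apply_self (T : Matrix m m ℝ) (a : m) :
    (Tᵀ * T)⁻¹ a a = ∑ j, T⁻¹ a j ^ 2 := by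
  rw [Matrix.mul_inv_rev, ← Matrix.transpose_nonsing_inv, Matrix.mul_apply]
  simp only [Matrix.transpose_apply, sq]

variable (hT : T.BlockTriangular id) (hdet : T.det ≠ 0)
include hT hdet

lemma blockTriangular_id_inv : T⁻¹.BlockTriangular id := by
  have := T.invertibleOfIsUnitDet (isUnit_iff_ne_zero.2 hdet)
  exact Matrix.blockTriangular_inv_of_blockTriangular hT

lemma inv_apply_self_mul_apply_self (a : m) : T⁻¹ a a * T a a = 1 := by
  have h := congrFun₂ (Matrix.nonsing_inv_mul T (isUnit_iff_ne_zero.2 hdet)) a a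
  rw [Matrix.mul_apply, Matrix.one_apply_eq, sum_eq_single_of_mem a (mem_univ a)] at h
  · exact h
  · intro j _ hj
    rcases hj.lt_or_gt with hlt | hlt
    · rw [blockTriangular_id_inv hT hdet hlt, zero_mul]
    · rw [hT hlt, mul_zero]

lemma inv_transpose_mul_self_apply_top (hl : IsTop l) : (Tᵀ * T)⁻¹ l l = (T l l ^ 2)⁻¹ := by
  rw [inv_transpose_mul_self_apply_self, sum_eq_single_of_mem l (mem_univ l), ← inv_pow,
    eq_inv_of_mul_eq_one_left (inv_apply_self_mul_apply_self hT hdet l)]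
  intro j _ hj
  rw [blockTriangular_id_inv hT hdet ((hl j).lt_of_ne hj), zero_pow two_ne_zero]

-- The `(a, l)` entry of `T * (Tᵀ * T)⁻¹ = (T⁻¹)ᵀ` vanishes and has only two terms on the left.
lemma apply_self_mul_inv_add_apply_mul_inv (hl : IsTop l) (hal : a ⋖ l) :
    T a a * (Tᵀ * T)⁻¹ a l + T a l * (Tᵀ * T)⁻¹ l l = 0 := by
  have hmul : T * (Tᵀ * T)⁻¹ = T⁻¹ᵀ := by
    rw [Matrix.mul_inv_rev, ← mul_assoc, Matrix.mul_nonsing_inv T (isUnit_iff_ne_zero.2 hdet),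
      one_mul, Matrix.transpose_nonsing_inv]
  have h := congrFun₂ hmul a l
  rwa [Matrix.transpose_apply, blockTriangular_id_inv hT hdet hal.lt, Matrix.mul_apply,
    ← sum_subset (subset_univ {a, l}), sum_pair hal.lt.ne] at h
  intro j _ hj
  simp only [mem_insert, mem_singleton, not_or] at hj
  have hja : j < a := (hal.le_of_lt ((hl j).lt_of_ne hj.2)).lt_of_ne hj.1
  rw [hT hja, zero_mul]

lemma inv_transpose_mul_self_apply_sq_le (hl : IsTop l) (hal : a ⋖ l) :
    (Tᵀ * T)⁻¹ a l ^ 2 ≤ T a l ^ 2 * (Tᵀ * T)⁻¹ l l ^ 2 * (Tᵀ * T)⁻¹ a a := by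
  have hcol := apply_self_mul_inv_add_apply_mul_inv hT hdet hl hal
  have hdiag := inv_apply_self_mul_apply_self hT hdet a
  have hentry : (Tᵀ * T)⁻¹ a l = -(T⁻¹ a a * (T a l * (Tᵀ * T)⁻¹ l l)) := by
    linear_combination T⁻¹ a a * hcol - (Tᵀ * T)⁻¹ a l * hdiag
  calc (Tᵀ * T)⁻¹ a l ^ 2 = T a l ^ 2 * (Tᵀ * T)⁻¹ l l ^ 2 * T⁻¹ a a ^ 2 := by
        rw [hentry]; ring
    _ ≤ T a l ^ 2 * (Tᵀ * T)⁻¹ l l ^ 2 * (Tᵀ * T)⁻¹ a a := by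
        rw [inv_transpose_mul_self_apply_self T a]
        gcongr
        exact single_le_sum (f := fun j => T⁻¹ a j ^ 2) (fun _ _ => sq_nonneg _) (mem_univ a)

end InverseOfTriangularGram

section ColumnExchangeability

variable {ι : Type*} [Fintype ι] [DecidableEq ι] {p : ℕ}

local notation "N" => (Fintype.card ι : ℝ)

lemma expect_comp_perm {κ α E : Type*} [Fintype κ] [DecidableEq κ] [Fintype α] [AddCommMonoid E]
    [Module ℚ≥0 E] (π : Equiv.Perm κ) (F : (κ → α) → E) : 𝔼 ω : κ → α, F (ω ∘ π) = 𝔼 ω, F ω :=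
  Fintype.expect_equiv (Equiv.arrowCongr π.symm (Equiv.refl _)) _ _ fun _ => rfl

omit [DecidableEq ι] in
lemma gramMatrix_column_comp (x : ι → ℝ) (ω : Fin p → Equiv.Perm ι) (π : Equiv.Perm (Fin p)) :
    gramMatrix p (column x (ω ∘ π)) = (gramMatrix p (column x ω)).submatrix π π := by
  ext a b
  simp only [gramMatrix, Matrix.of_apply, Matrix.submatrix_apply, column_fin, Function.comp_apply]

omit [DecidableEq ι] in
lemma det_gramMatrix_column_comp (x : ι → ℝ) (ω : Fin p → Equiv.Perm ι)
    (π : Equiv.Perm (Fin p)) :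
    (gramMatrix p (column x (ω ∘ π))).det = (gramMatrix p (column x ω)).det := by
  rw [gramMatrix_column_comp, Matrix.det_submatrix_equiv_self]

omit [DecidableEq ι] in
lemma inv_gramMatrix_column_comp (x : ι → ℝ) (ω : Fin p → Equiv.Perm ι)
    (π : Equiv.Perm (Fin p)) (a b : Fin p) :
    (gramMatrix p (column x (ω ∘ π)))⁻¹ a b = (gramMatrix p (column x ω))⁻¹ (π a) (π b) := by
  rw [gramMatrix_column_comp, Matrix.inv_submatrix_equiv, Matrix.submatrix_apply]

/-- A permutation that moves `a` to `k` and, if `a ≠ l` and `k ≠ m`, moves `l` to `m`. -/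
def pairPerm {κ : Type*} [DecidableEq κ] (a l k m : κ) : Equiv.Perm κ :=
  Equiv.swap (Equiv.swap l m a) k * Equiv.swap l m

lemma pairPerm_apply_left {κ : Type*} [DecidableEq κ] (a l k m : κ) : pairPerm a l k m a = k := by
  simp [pairPerm]

lemma pairPerm_apply_right {κ : Type*} [DecidableEq κ] {a l k m : κ} (hal : a ≠ l) (hkm : k ≠ m) :
    pairPerm a l k m l = m := by
  rw [pairPerm, Equiv.Perm.mul_apply, Equiv.swap_apply_left]
  refine Equiv.swap_apply_of_ne_of_ne (fun h => hal ?_) hkm.symm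
  exact (Equiv.swap l m).injective (h.symm.trans (Equiv.swap_apply_left l m).symm)

variable {x : ι → ℝ} {ω : Fin p → Equiv.Perm ι}

omit [DecidableEq ι] in
lemma IsStandardized.sum_column (hx : IsStandardized x) (ω : Fin p → Equiv.Perm ι) {k : ℕ}
    (hk : k < p) : ∑ i, column x ω k i = 0 := by
  rw [column_fin x ω ⟨k, hk⟩]
  exact (Equiv.sum_comp (ω ⟨k, hk⟩) x).trans hx.sum_eq_zero

lemma dotProduct_residualProj_mulVec_eq (U : ℕ → ι → ℝ) {k : ℕ} (hk : k + 1 < Fintype.card ι) :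
    U k ⬝ᵥ residualProj U k *ᵥ U k
      = (1 + residualFluctuation U k) * ((N - 1 - k) / (N - 1)) := by
  have hk' : (k : ℝ) + 1 < N := by exact_mod_cast hk
  have : (0 : ℝ) ≤ k := Nat.cast_nonneg k
  have h₁ : N - 1 ≠ 0 := by linarith
  have h₂ : N - 1 - k ≠ 0 := by linarith
  rw [residualFluctuation, trace_residualProj U (by lia)]
  field_simp
  ring

variable (hx : IsStandardized x) (hp : p < Fintype.card ι)
include hx hp

lemma IsStandardized.gramMatrix_column_eq (ω : Fin p → Equiv.Perm ι) :
    gramMatrix p (column x ω) = (gramFactor p (column x ω))ᵀ * gramFactor p (column x ω) :=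
  gramMatrix_eq_transpose_mul hp fun _ hk => hx.sum_column ω hk

lemma IsStandardized.det_gramFactor_column_ne_zero (h : (gramMatrix p (column x ω)).det ≠ 0) :
    (gramFactor p (column x ω)).det ≠ 0 := by
  rw [hx.gramMatrix_column_eq hp, Matrix.det_mul] at h
  exact right_ne_zero_of_mul h

lemma IsStandardized.det_gramMatrix_column (ω : Fin p → Equiv.Perm ι) :
    (gramMatrix p (column x ω)).det
      = ∏ k ∈ range p, (1 + residualFluctuation (column x ω) k) * ((N - 1 - k) / (N - 1)) := by
  rw [det_gramMatrix hp fun _ hk => hx.sum_column ω hk, prod_range]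
  exact prod_congr rfl fun k _ => dotProduct_residualProj_mulVec_eq _ (by lia)

-- Exchanging columns `k` and `l` turns any diagonal entry into the last one.
lemma IsStandardized.inv_gramMatrix_column_apply_self (h : (gramMatrix p (column x ω)).det ≠ 0)
    {l : Fin p} (hl : IsTop l) (k : Fin p) :
    (gramMatrix p (column x ω))⁻¹ k k
      = (N - 1) / (N - p) / (1 + residualFluctuation (column x (ω ∘ Equiv.swap l k)) l) := by
  have hl_cast : (l : ℝ) + 1 = p := by
    have hle : p - 1 ≤ (l : ℕ) := hl ⟨p - 1, Nat.sub_one_lt l.pos.ne'⟩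
    exact_mod_cast (by lia : (l : ℕ) + 1 = p)
  have hdet : (gramMatrix p (column x (ω ∘ Equiv.swap l k))).det ≠ 0 := by
    rwa [det_gramMatrix_column_comp]
  calc (gramMatrix p (column x ω))⁻¹ k k
      = (gramMatrix p (column x (ω ∘ Equiv.swap l k)))⁻¹ l l := by
        rw [inv_gramMatrix_column_comp, Equiv.swap_apply_left]
    _ = (gramFactor p (column x (ω ∘ Equiv.swap l k)) l l ^ 2)⁻¹ := by
        rw [hx.gramMatrix_column_eq hp]
        exact inv_transpose_mul_self_apply_top (blockTriangular_gramFactor hp _)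
          (hx.det_gramFactor_column_ne_zero hp hdet) hl
    _ = _ := by
        rw [gramFactor_apply_self_sq hp, dotProduct_residualProj_mulVec_eq _ (by lia),
          (by linarith : N - 1 - (l : ℝ) = N - p), mul_inv, inv_div, mul_comm,
          div_eq_mul_inv _ (1 + _)]

lemma IsStandardized.inv_gramMatrix_column_apply_sq_le (h : (gramMatrix p (column x ω)).det ≠ 0)
    {a l k m : Fin p} (hl : IsTop l) (hal : a ⋖ l) (hkm : k ≠ m) :
    (gramMatrix p (column x ω))⁻¹ k m ^ 2
      ≤ gramFactor p (column x (ω ∘ pairPerm a l k m)) a l ^ 2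
        * (gramMatrix p (column x ω))⁻¹ m m ^ 2 * (gramMatrix p (column x ω))⁻¹ k k := by
  have hdet : (gramMatrix p (column x (ω ∘ pairPerm a l k m))).det ≠ 0 := by
    rwa [det_gramMatrix_column_comp]
  have hle := inv_transpose_mul_self_apply_sq_le (blockTriangular_gramFactor hp _)
    (hx.det_gramFactor_column_ne_zero hp hdet) hl hal
  rwa [← hx.gramMatrix_column_eq hp, inv_gramMatrix_column_comp, inv_gramMatrix_column_comp,
    inv_gramMatrix_column_comp, pairPerm_apply_left, pairPerm_apply_right hal.lt.ne hkm] at hle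

lemma IsStandardized.expect_gramFactor_column_sq {a l : Fin p} (hal : a < l) :
    𝔼 ω : Fin p → Equiv.Perm ι, gramFactor p (column x ω) a l ^ 2 = 1 / (N - 1) := by
  have hlt : (a : ℕ) < l := hal
  have hdir (ω : Fin p → Equiv.Perm ι) (σ : Equiv.Perm ι) :
      direction (column x (Function.update ω l σ)) a = direction (column x ω) a := by
    rw [direction, direction, residualProj_column_update x ω l σ hlt.le,
      column_update_of_ne x ω l σ hlt.ne]
  rw [expect_eq_expect_update l]
  simp only [gramFactor, Matrix.of_apply, hdir, column_update_self]
  have hmoment (ω : Fin p → Equiv.Perm ι) :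
      𝔼 σ : Equiv.Perm ι, (direction (column x ω) a ⬝ᵥ (x ∘ σ)) ^ 2 = 1 / (N - 1) := by
    rw [hx.expect_dotProduct_sq (sum_direction (column x ω) (by lia)),
      (isResidualDirection_direction (column x ω) (by lia)).sum_sq]
  simp only [hmoment, Fintype.expect_const]

end ColumnExchangeability

section GoodDraws

variable {ι : Type*} [Fintype ι] [DecidableEq ι] {p : ℕ} {x : ι → ℝ} {t b κ : ℝ} {a l : Fin p}
  {ω : Fin p → Equiv.Perm ι}

local notation "N" => (Fintype.card ι : ℝ)

lemma abs_le_one_of_pow_four_le_one {u : ℝ} (h : u ^ 4 ≤ 1) : |u| ≤ 1 := by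
  rwa [← pow_le_one_iff_of_nonneg (abs_nonneg u) four_ne_zero, Even.pow_abs (by decide)]

lemma inv_one_add_le_two {u : ℝ} (hu : |u| ≤ 1 / 2) : (1 + u)⁻¹ ≤ 2 :=
  inv_le_of_inv_le₀ two_pos (by linarith [(abs_le.1 hu).1])

lemma abs_inv_one_add_sub_one_le {u : ℝ} (hu : |u| ≤ 1 / 2) : |(1 + u)⁻¹ - 1| ≤ 2 * |u| := by
  have hpos : 0 < 1 + u := by linarith [(abs_le.1 hu).1]
  calc |(1 + u)⁻¹ - 1| = |(1 + u)⁻¹ * -u| := by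
        congr 1
        field_simp
        ring
    _ = (1 + u)⁻¹ * |u| := by rw [abs_mul, abs_neg, abs_of_pos (inv_pos.2 hpos)]
    _ ≤ 2 * |u| := by
        gcongr
        exact inv_one_add_le_two hu

/-- The draws of the columns for which the Gram matrix is invertible with controlled inverse at
level `t`. By exchangeability only the last column `l` and its predecessor `a` enter the bounds on
the inverse, but evaluated at rearrangements of the columns. -/
structure IsGoodDraw (x : ι → ℝ) (t : ℝ) (a l : Fin p) (ω : Fin p → Equiv.Perm ι) : Prop where
  abs_residualFluctuation_le : ∀ k < p, |residualFluctuation (column x ω) k| ≤ 1 / 2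
  abs_residualFluctuation_swap_le :
    ∀ k, |residualFluctuation (column x (ω ∘ Equiv.swap l k)) l| ≤ 1 / t
  sum_gramFactor_sq_le :
    ∑ k, ∑ m, gramFactor p (column x (ω ∘ pairPerm a l k m)) a l ^ 2 ≤ t ^ 10

/-- A nonnegative functional which is at least `1` at every draw that is not good and has small
expectation. -/
noncomputable def badness (x : ι → ℝ) (t : ℝ) (a l : Fin p) (ω : Fin p → Equiv.Perm ι) : ℝ :=
  ∑ k ∈ range p, (2 * residualFluctuation (column x ω) k) ^ 4
    + ∑ k, (t * residualFluctuation (column x (ω ∘ Equiv.swap l k)) l) ^ 4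
    + (∑ k, ∑ m, gramFactor p (column x (ω ∘ pairPerm a l k m)) a l ^ 2) / t ^ 10

lemma badness_nonneg : 0 ≤ badness x t a l ω := by
  unfold badness
  positivity

lemma isGoodDraw_of_badness_lt_one (ht : 0 < t) (h : badness x t a l ω < 1) :
    IsGoodDraw x t a l ω := by
  have h₁ : 0 ≤ ∑ k ∈ range p, (2 * residualFluctuation (column x ω) k) ^ 4 := by positivity
  have h₂ : 0 ≤ ∑ k, (t * residualFluctuation (column x (ω ∘ Equiv.swap l k)) l) ^ 4 := by
    positivity
  have h₃ : 0 ≤ (∑ k, ∑ m, gramFactor p (column x (ω ∘ pairPerm a l k m)) a l ^ 2) / t ^ 10 := by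
    positivity
  unfold badness at h
  refine ⟨fun k hk => ?_, fun k => ?_, ?_⟩
  · have hle := abs_le_one_of_pow_four_le_one ((single_le_sum
      (f := fun k => (2 * residualFluctuation (column x ω) k) ^ 4)
      (fun k _ => by positivity) (mem_range.2 hk)).trans (by linarith))
    rw [abs_mul, abs_two] at hle
    linarith
  · have hle := abs_le_one_of_pow_four_le_one ((single_le_sum
      (f := fun k => (t * residualFluctuation (column x (ω ∘ Equiv.swap l k)) l) ^ 4)
      (fun k _ => by positivity) (mem_univ k)).trans (by linarith))
    rwa [abs_mul, abs_of_pos ht, ← le_div_iff₀' ht] at hle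
  · rw [← div_le_one (by positivity)]
    linarith

lemma IsStandardized.expect_sum_gramFactor_pairPerm_sq_le (hx : IsStandardized x)
    (hlt : p < Fintype.card ι) (hal : a < l) :
    (𝔼 ω, ∑ k, ∑ m, gramFactor p (column x (ω ∘ pairPerm a l k m)) a l ^ 2) ≤ N := by
  have h_exch (k m : Fin p) : (𝔼 ω : Fin p → Equiv.Perm ι,
      gramFactor p (column x (ω ∘ pairPerm a l k m)) a l ^ 2) = 1 / (N - 1) :=
    (expect_comp_perm (pairPerm a l k m) fun ω => gramFactor p (column x ω) a l ^ 2).trans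
      (hx.expect_gramFactor_column_sq hlt hal)
  have hlt_cast : (p : ℝ) + 1 ≤ N := mod_cast hlt
  have hN : 0 < N - 1 := by linarith [(mod_cast l.pos : (0 : ℝ) < p)]
  simp only [expect_sum_comm, h_exch, sum_const, card_univ, Fintype.card_fin, nsmul_eq_mul]
  calc p * (p * (1 / (N - 1))) ≤ N * 1 := by
        gcongr
        rw [mul_one_div, div_le_one hN]
        linarith
    _ = N := mul_one N

section BadnessExpectation

variable (hx : IsBoundedScore b x) (hN : 6 * b ≤ Fintype.card ι) (hκ : 0 < κ)
  (hp : κ * Fintype.card ι ≤ Fintype.card ι - p)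
include hx hN hκ hp

lemma IsBoundedScore.expect_residualFluctuation_pow_four_le {k : ℕ} (hk : k < p) :
    (𝔼 ω : Fin p → Equiv.Perm ι, residualFluctuation (column x ω) k ^ 4)
      ≤ 500000 * (b / κ) ^ 4 / N ^ 2 := by
  have hlt : p < Fintype.card ι := hx.lt_card hN hκ hp
  rw [expect_eq_expect_update ⟨k, hk⟩]
  refine expect_le univ_nonempty fun ω _ => ?_
  simp only [residualFluctuation_column_update_self x ω ⟨k, hk⟩]
  exact hx.expect_relFluctuation_pow_four_le (isCenteredProj_residualProj _ (hk.trans hlt)) hκ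
    (mul_card_le_trace_residualProj hlt hp hk)

lemma IsBoundedScore.expect_sum_residualFluctuation_pow_four_le :
    (𝔼 ω : Fin p → Equiv.Perm ι, ∑ k ∈ range p, residualFluctuation (column x ω) k ^ 4)
      ≤ 500000 * (b / κ) ^ 4 / N := by
  have hlt : p < Fintype.card ι := hx.lt_card hN hκ hp
  rw [expect_sum_comm]
  calc _ ≤ ∑ _k ∈ range p, 500000 * (b / κ) ^ 4 / N ^ 2 :=
        sum_le_sum fun k hk => hx.expect_residualFluctuation_pow_four_le hN hκ hp (mem_range.1 hk)
    _ = p * (500000 * (b / κ) ^ 4 / N ^ 2) := by rw [sum_const, card_range, nsmul_eq_mul]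
    _ ≤ N * (500000 * (b / κ) ^ 4 / N ^ 2) := by gcongr
    _ = 500000 * (b / κ) ^ 4 / N := by
      field_simp

lemma IsBoundedScore.expect_sum_residualFluctuation_swap_pow_four_le (l : Fin p) :
    (𝔼 ω, ∑ k, residualFluctuation (column x (ω ∘ Equiv.swap l k)) l ^ 4)
      ≤ 500000 * (b / κ) ^ 4 / N := by
  have hlt : p < Fintype.card ι := hx.lt_card hN hκ hp
  have h_exch (k : Fin p) : (𝔼 ω, residualFluctuation (column x (ω ∘ Equiv.swap l k)) l ^ 4)
      = 𝔼 ω : Fin p → Equiv.Perm ι, residualFluctuation (column x ω) l ^ 4 :=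
    expect_comp_perm (Equiv.swap l k) fun ω => residualFluctuation (column x ω) l ^ 4
  simp only [expect_sum_comm, h_exch, sum_const, card_univ, Fintype.card_fin, nsmul_eq_mul]
  calc _ ≤ N * (500000 * (b / κ) ^ 4 / N ^ 2) := by
        gcongr
        exact hx.expect_residualFluctuation_pow_four_le hN hκ hp l.2
    _ = 500000 * (b / κ) ^ 4 / N := by
      field_simp

lemma IsBoundedScore.expect_badness_le (ht : 1 ≤ t) (h_card : t ^ 8 = N) (hal : a < l) :
    (𝔼 ω, badness x t a l ω) ≤ (17 * (500000 * (b / κ) ^ 4) + 1) / t ^ 2 := by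
  have h_fluct := hx.expect_sum_residualFluctuation_pow_four_le hN hκ hp
  have h_swap := hx.expect_sum_residualFluctuation_swap_pow_four_le hN hκ hp l
  have h_factor :=
    hx.toIsStandardized.expect_sum_gramFactor_pairPerm_sq_le (hx.lt_card hN hκ hp) hal
  set C := 500000 * (b / κ) ^ 4
  calc (𝔼 ω, badness x t a l ω) ≤ 2 ^ 4 * (C / N) + t ^ 4 * (C / N) + N / t ^ 10 := by
        simp only [badness, mul_pow, expect_add_distrib, ← mul_sum, ← mul_expect, ← expect_div]
        gcongr
    _ = 16 * C / t ^ 8 + C / t ^ 4 + 1 / t ^ 2 := by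
        rw [← h_card]
        field_simp
        norm_num
    _ ≤ 16 * C / t ^ 2 + C / t ^ 2 + 1 / t ^ 2 := by
        gcongr 16 * C / ?_ + C / ?_ + _
        · exact pow_le_pow_right₀ ht (by norm_num)
        · exact pow_le_pow_right₀ ht (by norm_num)
    _ = (17 * C + 1) / t ^ 2 := by ring

end BadnessExpectation

end GoodDraws

section LogDetOnGoodDraws

variable {ι : Type*} [Fintype ι] [DecidableEq ι] {p : ℕ} {x : ι → ℝ} {t κ δ : ℝ} {a l : Fin p}
  {ω : Fin p → Equiv.Perm ι}

local notation "N" => (Fintype.card ι : ℝ)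

omit [DecidableEq ι] in
lemma sub_one_sub_div_pos (hp : p < Fintype.card ι) {k : ℕ} (hk : k < p) :
    0 < (N - 1 - k) / (N - 1) := by
  have hk_cast : (k : ℝ) + 1 < N := mod_cast (by lia : k + 1 < Fintype.card ι)
  have : (0 : ℝ) ≤ k := Nat.cast_nonneg k
  exact div_pos (by linarith) (by linarith)

omit [DecidableEq ι] in
lemma sub_one_div_sub_le (hκ : 0 < κ) (hp_lt : p < Fintype.card ι) (hp : κ * N ≤ N - p) :
    (N - 1) / (N - p) ≤ 1 / κ := by
  have : (p : ℝ) < N := mod_cast hp_lt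
  rw [div_le_div_iff₀ (by linarith) hκ]
  linarith

lemma mul_mul_le_div_of_le {r h K : ℝ} (ht : 1 ≤ t) (hδ : |δ| ≤ 2 / t ^ 8) (hr₀ : 0 ≤ r)
    (hr : r ≤ K * t ^ 5) (hh₀ : 0 ≤ h) (hh : h ≤ t) : |δ| * (r * h) ≤ 2 * K / t ^ 2 := by
  have : 0 ≤ K * t ^ 5 := hr₀.trans hr
  calc |δ| * (r * h) ≤ 2 / t ^ 8 * (K * t ^ 5 * t) := by gcongr
    _ = 2 * K / t ^ 2 := by
      field_simp

lemma mul_sqrt_add_add_mul_le {r h K q : ℝ} (ht : 1 ≤ t) (hδ : |δ| ≤ 2 / t ^ 8)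
    (hq : q ≤ t ^ 8) (hr₀ : 0 ≤ r) (hr : r ≤ K * t ^ 5) (hh₀ : 0 ≤ h) (hh : h ≤ t) (hK : 0 ≤ K) :
    |δ| * (√q + r + r * h) ≤ 2 * (1 + 2 * K) / t ^ 2 := by
  have hq' : √q ≤ t ^ 6 := calc
    √q ≤ t ^ 4 := Real.sqrt_le_iff.2 ⟨by positivity, by rwa [← pow_mul]⟩
    _ ≤ t ^ 6 := pow_le_pow_right₀ ht (by norm_num)
  have hr' : r ≤ K * t ^ 6 := hr.trans
    (mul_le_mul_of_nonneg_left (pow_le_pow_right₀ ht (by norm_num)) hK)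
  calc |δ| * (√q + r + r * h) = |δ| * (√q + r) + |δ| * (r * h) := by ring
    _ ≤ 2 / t ^ 8 * (t ^ 6 + K * t ^ 6) + 2 * K / t ^ 2 := by
        refine add_le_add (by gcongr) ?_
        exact mul_mul_le_div_of_le ht hδ hr₀ hr hh₀ hh
    _ = 2 * (1 + 2 * K) / t ^ 2 := by
        field_simp
        ring

/-- The constant of the bound `invNormConst κ * t ^ 5` for the Frobenius norm of the inverse Gram
matrix on good draws at level `t`. -/
noncomputable def invNormConst (κ : ℝ) : ℝ := √(4 / κ ^ 2 + 8 / κ ^ 3)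

namespace IsGoodDraw

lemma one_add_pos (h : IsGoodDraw x t a l ω) {k : ℕ} (hk : k < p) :
    0 < 1 + residualFluctuation (column x ω) k := by
  linarith [(abs_le.1 (h.abs_residualFluctuation_le k hk)).1]

lemma abs_residualFluctuation_swap_le_half (h : IsGoodDraw x t a l ω) (ht : 2 ≤ t) (k : Fin p) :
    |residualFluctuation (column x (ω ∘ Equiv.swap l k)) l| ≤ 1 / 2 :=
  (h.abs_residualFluctuation_swap_le k).trans (one_div_le_one_div_of_le two_pos ht)

section Determinant

variable (h : IsGoodDraw x t a l ω) (hx : IsStandardized x) (hp_lt : p < Fintype.card ι)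
include h hx hp_lt

lemma det_gramMatrix_ne_zero : (gramMatrix p (column x ω)).det ≠ 0 := by
  rw [hx.det_gramMatrix_column hp_lt]
  refine prod_ne_zero_iff.2 fun k hk => ?_
  rw [mem_range] at hk
  exact mul_ne_zero (h.one_add_pos hk).ne' (sub_one_sub_div_pos hp_lt hk).ne'

lemma log_det_gramMatrix :
    Real.log (gramMatrix p (column x ω)).det
      = ∑ k ∈ range p, Real.log (1 + residualFluctuation (column x ω) k)
        + ∑ k ∈ range p, Real.log ((N - 1 - k) / (N - 1)) := by
  have hdet := h.det_gramMatrix_ne_zero hx hp_lt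
  rw [hx.det_gramMatrix_column hp_lt] at hdet ⊢
  rw [Real.log_prod fun k hk => prod_ne_zero_iff.1 hdet k hk, ← sum_add_distrib]
  refine sum_congr rfl fun k hk => ?_
  rw [mem_range] at hk
  exact Real.log_mul (h.one_add_pos hk).ne' (sub_one_sub_div_pos hp_lt hk).ne'

end Determinant

variable (h : IsGoodDraw x t a l ω) (hx : IsStandardized x) (hp_lt : p < Fintype.card ι)
  (hκ : 0 < κ) (hp : κ * Fintype.card ι ≤ Fintype.card ι - p) (ht : 2 ≤ t) (hl : IsTop l)
include h hx hp_lt hκ hp ht hl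

lemma inv_gramMatrix_apply_self_mem_Icc (k : Fin p) :
    (gramMatrix p (column x ω))⁻¹ k k ∈ Set.Icc 0 (2 / κ) := by
  have hp_cast : (p : ℝ) < N := mod_cast hp_lt
  have hN : 0 ≤ N - 1 := by linarith [(mod_cast l.pos : (1 : ℝ) ≤ p)]
  have hu := h.abs_residualFluctuation_swap_le_half ht k
  have hpos : 0 < 1 + residualFluctuation (column x (ω ∘ Equiv.swap l k)) l := by
    linarith [(abs_le.1 hu).1]
  rw [hx.inv_gramMatrix_column_apply_self hp_lt (h.det_gramMatrix_ne_zero hx hp_lt) hl k]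
  refine ⟨div_nonneg (div_nonneg hN (by linarith)) hpos.le, ?_⟩
  rw [div_eq_mul_inv _ (1 + _)]
  calc _ ≤ 1 / κ * 2 := mul_le_mul (sub_one_div_sub_le hκ hp_lt hp) (inv_one_add_le_two hu)
        (inv_pos.2 hpos).le (one_div_pos.2 hκ).le
    _ = 2 / κ := by ring

lemma abs_inv_gramMatrix_apply_self_sub_le (k : Fin p) :
    |(gramMatrix p (column x ω))⁻¹ k k - (N - 1) / (N - p)| ≤ 2 / (κ * t) := by
  have hp_cast : (p : ℝ) < N := mod_cast hp_lt
  have hN : 0 ≤ N - 1 := by linarith [(mod_cast l.pos : (1 : ℝ) ≤ p)]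
  rw [hx.inv_gramMatrix_column_apply_self hp_lt (h.det_gramMatrix_ne_zero hx hp_lt) hl k,
    div_eq_mul_inv _ (1 + _), ← mul_sub_one, abs_mul,
    abs_of_nonneg (div_nonneg hN (by linarith))]
  have hu : |(1 + residualFluctuation (column x (ω ∘ Equiv.swap l k)) l)⁻¹ - 1| ≤ 2 * (1 / t) :=
    (abs_inv_one_add_sub_one_le (h.abs_residualFluctuation_swap_le_half ht k)).trans
      (mul_le_mul_of_nonneg_left (h.abs_residualFluctuation_swap_le k) zero_le_two)
  calc _ ≤ 1 / κ * (2 * (1 / t)) := mul_le_mul (sub_one_div_sub_le hκ hp_lt hp) hu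
        (abs_nonneg _) (one_div_pos.2 hκ).le
    _ = 2 / (κ * t) := by
        field_simp

lemma abs_trace_inv_gramMatrix_sub_le :
    |(gramMatrix p (column x ω))⁻¹.trace - p * ((N - 1) / (N - p))| ≤ p * (2 / (κ * t)) := by
  calc |(gramMatrix p (column x ω))⁻¹.trace - p * ((N - 1) / (N - p))|
      = |∑ k, ((gramMatrix p (column x ω))⁻¹ k k - (N - 1) / (N - p))| := by
        simp [Matrix.trace, sum_sub_distrib]
    _ ≤ ∑ k, |(gramMatrix p (column x ω))⁻¹ k k - (N - 1) / (N - p)| := abs_sum_le_sum_abs _ _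
    _ ≤ ∑ _k : Fin p, 2 / (κ * t) := sum_le_sum fun k _ =>
        h.abs_inv_gramMatrix_apply_self_sub_le hx hp_lt hκ hp ht hl k
    _ = p * (2 / (κ * t)) := by rw [sum_const, card_univ, Fintype.card_fin, nsmul_eq_mul]

lemma inv_gramMatrix_apply_sq_le (hal : a ⋖ l) (k m : Fin p) :
    (gramMatrix p (column x ω))⁻¹ k m ^ 2
      ≤ (if k = m then 4 / κ ^ 2 else 0)
        + 8 / κ ^ 3 * gramFactor p (column x (ω ∘ pairPerm a l k m)) a l ^ 2 := by
  have hdiag := h.inv_gramMatrix_apply_self_mem_Icc hx hp_lt hκ hp ht hl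
  have hsq : (gramMatrix p (column x ω))⁻¹ m m ^ 2 ≤ (2 / κ) ^ 2 :=
    pow_le_pow_left₀ (hdiag m).1 (hdiag m).2 2
  split_ifs with hkm
  · subst hkm
    have : (2 / κ) ^ 2 = 4 / κ ^ 2 := by ring
    have : 0 ≤ 8 / κ ^ 3 * gramFactor p (column x (ω ∘ pairPerm a l k k)) a l ^ 2 := by positivity
    linarith
  · calc _ ≤ gramFactor p (column x (ω ∘ pairPerm a l k m)) a l ^ 2
          * (gramMatrix p (column x ω))⁻¹ m m ^ 2 * (gramMatrix p (column x ω))⁻¹ k k :=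
          hx.inv_gramMatrix_column_apply_sq_le hp_lt (h.det_gramMatrix_ne_zero hx hp_lt) hl hal hkm
      _ ≤ gramFactor p (column x (ω ∘ pairPerm a l k m)) a l ^ 2 * (2 / κ) ^ 2 * (2 / κ) := by
          gcongr
          · exact (hdiag k).1
          · exact (hdiag k).2
      _ = _ := by ring

open scoped Matrix.Norms.Frobenius

lemma norm_inv_gramMatrix_le (h_card : t ^ 8 = N) (hal : a ⋖ l) :
    ‖(gramMatrix p (column x ω))⁻¹‖ ≤ invNormConst κ * t ^ 5 := by
  have ht₁ : 1 ≤ t := by linarith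
  have hp_cast : (p : ℝ) ≤ t ^ 10 := calc
    (p : ℝ) ≤ t ^ 8 := h_card ▸ mod_cast hp_lt.le
    _ ≤ t ^ 10 := pow_le_pow_right₀ ht₁ (by norm_num)
  refine le_of_sq_le_sq ?_ (by unfold invNormConst; positivity)
  calc ‖(gramMatrix p (column x ω))⁻¹‖ ^ 2
      = ∑ k, ∑ m, (gramMatrix p (column x ω))⁻¹ k m ^ 2 := sq_frobenius_norm_eq_sum _
    _ ≤ ∑ k, ∑ m, ((if k = m then 4 / κ ^ 2 else 0)
          + 8 / κ ^ 3 * gramFactor p (column x (ω ∘ pairPerm a l k m)) a l ^ 2) :=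
        sum_le_sum fun k _ => sum_le_sum fun m _ =>
          h.inv_gramMatrix_apply_sq_le hx hp_lt hκ hp ht hl hal k m
    _ = p * (4 / κ ^ 2) + 8 / κ ^ 3 *
          ∑ k, ∑ m, gramFactor p (column x (ω ∘ pairPerm a l k m)) a l ^ 2 := by
        simp [sum_add_distrib, mul_sum]
    _ ≤ t ^ 10 * (4 / κ ^ 2) + 8 / κ ^ 3 * t ^ 10 := by
        gcongr
        exact h.sum_gramFactor_sq_le
    _ = (invNormConst κ * t ^ 5) ^ 2 := by
        rw [mul_pow, invNormConst, Real.sq_sqrt (by positivity)]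
        ring

lemma abs_log_det_gramMatrix_add_smul_sub_le (h_card : t ^ 8 = N) (hal : a ⋖ l)
    (ht_sq : 4 * (1 + 2 * invNormConst κ) ≤ t ^ 2) {H : Matrix (Fin p) (Fin p) ℝ}
    (hH : H.IsSymm) (hH_norm : ‖H‖ ≤ t) (hδ : |δ| ≤ 2 / N) :
    |Real.log (gramMatrix p (column x ω) + δ • (gramMatrix p (column x ω) - 1 + H)).det
        - (∑ k ∈ range p, Real.log (1 + residualFluctuation (column x ω) k)
          + ∑ k ∈ range p, Real.log ((N - 1 - k) / (N - 1)))
        - δ * (p - p * ((N - 1) / (N - p)))|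
      ≤ (2 + 6 * invNormConst κ + 4 / κ) / t := by
  have hR := h.norm_inv_gramMatrix_le hx hp_lt hκ hp ht hl h_card hal
  have htr := h.abs_trace_inv_gramMatrix_sub_le hx hp_lt hκ hp ht hl
  have hlog := h.log_det_gramMatrix hx hp_lt
  have hT := hx.det_gramFactor_column_ne_zero hp_lt (h.det_gramMatrix_ne_zero hx hp_lt)
  have hgram := hx.gramMatrix_column_eq hp_lt ω
  set K := invNormConst κ
  have hK₀ : 0 ≤ K := Real.sqrt_nonneg _
  have ht₁ : 1 ≤ t := by linarith
  have hp_le : (p : ℝ) ≤ t ^ 8 := h_card ▸ mod_cast hp_lt.le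
  rw [← h_card] at hδ
  have hcross := mul_mul_le_div_of_le ht₁ hδ (norm_nonneg _) hR (norm_nonneg H) hH_norm
  have hsize := mul_sqrt_add_add_mul_le ht₁ hδ hp_le (norm_nonneg _) hR (norm_nonneg H) hH_norm hK₀
  have hsmall : 2 * (1 + 2 * K) / t ^ 2 ≤ 1 / 2 := by
    rw [div_le_div_iff₀ (by positivity) two_pos]
    linarith
  have hdrift : |δ * (p * ((N - 1) / (N - p)) - (gramMatrix p (column x ω))⁻¹.trace)|
      ≤ 4 / κ / t := by
    rw [abs_mul, abs_sub_comm]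
    calc _ ≤ 2 / t ^ 8 * (t ^ 8 * (2 / (κ * t))) := by
          gcongr
          exact htr.trans (by gcongr)
      _ = 4 / κ / t := by
          field_simp
          norm_num
  have hpert := abs_log_det_add_smul_sub_le hT hH (δ := δ)
  rw [← hgram, Fintype.card_fin, hlog] at hpert
  set q := |δ| * (√p + ‖(gramMatrix p (column x ω))⁻¹‖ + ‖(gramMatrix p (column x ω))⁻¹‖ * ‖H‖)
  have hsq : 2 * q ^ 2 ≤ 2 * (1 + 2 * K) / t ^ 2 := by
    have hq₀ : 0 ≤ q := by positivity
    nlinarith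
  calc _ = |_ + δ * (p * ((N - 1) / (N - p)) - (gramMatrix p (column x ω))⁻¹.trace)| := by
        congr 1
        ring
    _ ≤ 2 * K / t ^ 2 + 2 * (1 + 2 * K) / t ^ 2 + 4 / κ / t :=
        (abs_add_le _ _).trans (add_le_add ((hpert (hsize.trans hsmall)).trans
          (add_le_add hcross hsq)) hdrift)
    _ ≤ 2 * K / t + 2 * (1 + 2 * K) / t + 4 / κ / t := by
        gcongr <;> exact le_self_pow₀ ht₁ two_ne_zero
    _ = (2 + 6 * K + 4 / κ) / t := by ring

end IsGoodDraw

end LogDetOnGoodDraws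

section CharacteristicFunctionComparison

lemma norm_exp_mul_I_sub_exp_mul_I_le {s A B W e : ℝ} (hW : 0 ≤ W) (he : 0 ≤ e)
    (h : W < 1 → |A - B| ≤ e) :
    ‖Complex.exp ((s * A : ℝ) * Complex.I) - Complex.exp ((s * B : ℝ) * Complex.I)‖
      ≤ 2 * W + |s| * e := by
  rcases lt_or_ge W 1 with hlt | hge
  · have hfactor : Complex.exp ((s * A : ℝ) * Complex.I) - Complex.exp ((s * B : ℝ) * Complex.I)
        = Complex.exp ((s * B : ℝ) * Complex.I)
          * (Complex.exp (Complex.I * (s * (A - B) : ℝ)) - 1) := by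
      rw [mul_sub, ← Complex.exp_add, mul_one]
      congr 2
      push_cast
      ring
    rw [hfactor, norm_mul, Complex.norm_exp_ofReal_mul_I, one_mul]
    calc _ ≤ ‖s * (A - B)‖ := Real.norm_exp_I_mul_ofReal_sub_one_le
      _ = |s| * |A - B| := abs_mul _ _
      _ ≤ |s| * e := by
        gcongr
        exact h hlt
      _ ≤ 2 * W + |s| * e := le_add_of_nonneg_left (by positivity)
  · refine (norm_sub_le _ _).trans ?_
    rw [Complex.norm_exp_ofReal_mul_I, Complex.norm_exp_ofReal_mul_I]
    linarith [mul_nonneg (abs_nonneg s) he]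

lemma prod_exp_mul_I_eq {κ : Type*} (S : Finset κ) (s : ℝ) (f : κ → ℝ) :
    ∏ j ∈ S, Complex.exp ((s * f j : ℝ) * Complex.I)
      = Complex.exp ((s * ∑ j ∈ S, f j : ℝ) * Complex.I) := by
  rw [← Complex.exp_sum, ← sum_mul, mul_sum, Complex.ofReal_sum]

lemma exists_isTop_and_covBy {p : ℕ} (hp : 2 ≤ p) : ∃ a l : Fin p, IsTop l ∧ a ⋖ l := by
  obtain ⟨q, rfl⟩ := Nat.exists_eq_add_of_le' hp
  refine ⟨(Fin.last q).castSucc, Fin.last (q + 1), Fin.le_last, ?_, fun c h₁ h₂ => ?_⟩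
  · exact Fin.castSucc_lt_last _
  · simp only [Fin.lt_def, Fin.val_castSucc, Fin.val_last] at h₁ h₂
    lia

/-- The log-determinant of the improved Spearman matrix, shifted by the terms that compensate for
its divergence. -/
noncomputable def logDetStatistic (n p : ℕ) (ω : Fin p → Equiv.Perm (Fin n)) : ℝ :=
  Real.log (improvedSpearmanRho n p ω).det
    + ((n : ℝ) - (p : ℝ)) * Real.log (1 - (p : ℝ) / (n : ℝ)) + (p : ℝ)

/-- The deterministic part of `logDetStatistic`. Its second summand is the first-order effect on
the log-determinant of passing from the Spearman matrix to the improved one. -/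
noncomputable def logDetCentering (n p : ℕ) : ℝ :=
  (∑ k ∈ range p, Real.log (((n : ℝ) - 1 - k) / (n - 1))
      + ((n : ℝ) - p) * Real.log (1 - p / n) + p)
    + 1 / ((n : ℝ) - 2) * (p - p * (((n : ℝ) - 1) / (n - p)))

variable {n p : ℕ} {κ t : ℝ} {a l : Fin p} {ω : Fin p → Equiv.Perm (Fin n)}

open scoped Matrix.Norms.Frobenius

lemma abs_logDetStatistic_sub_le (h : IsGoodDraw (spearmanScore n) t a l ω)
    (hH : ‖kendallRemainder n p ω‖ ≤ t) (hn : 4 ≤ n) (hp_lt : p < n) (hκ : 0 < κ)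
    (hp : κ * n ≤ n - p) (ht : 2 ≤ t) (ht_sq : 4 * (1 + 2 * invNormConst κ) ≤ t ^ 2)
    (h_card : t ^ 8 = n) (hl : IsTop l) (hal : a ⋖ l) :
    |logDetStatistic n p ω - (logDetCentering n p
        + ∑ k ∈ range p, Real.log (1 + residualFluctuation (column (spearmanScore n) ω) k))|
      ≤ (2 + 6 * invNormConst κ + 4 / κ) / t := by
  have hn_cast : (4 : ℝ) ≤ n := mod_cast hn
  have hδ : |1 / ((n : ℝ) - 2)| ≤ 2 / n := by
    rw [abs_of_nonneg (one_div_nonneg.2 (by linarith)),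
      div_le_div_iff₀ (by linarith) (by linarith)]
    linarith
  have hx := (isBoundedScore_spearmanScore (by lia : 2 ≤ n)).toIsStandardized
  have hle := h.abs_log_det_gramMatrix_add_smul_sub_le hx (by rwa [Fintype.card_fin]) hκ
    (by rwa [Fintype.card_fin]) ht hl (by rwa [Fintype.card_fin]) hal ht_sq
    (isSymm_kendallRemainder ω) hH (by rwa [Fintype.card_fin])
  rw [Fintype.card_fin, ← spearmanMatrix, ← improvedSpearmanRho_eq (by lia)] at hle
  convert hle using 2
  rw [logDetStatistic, logDetCentering]
  ring

lemma expect_badness_add_norm_kendallRemainder_le (hn : 18 ≤ n) (hκ : 0 < κ)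
    (hp : κ * n ≤ n - p) (ht : 1 ≤ t) (h_card : t ^ 8 = n) (hal : a < l) :
    (𝔼 ω, (badness (spearmanScore n) t a l ω + (‖kendallRemainder n p ω‖ / t) ^ 2))
      ≤ (17 * (500000 * (3 / κ) ^ 4) + 59) / t ^ 2 := by
  have hx := isBoundedScore_spearmanScore (by lia : 2 ≤ n)
  have hN : 6 * (3 : ℝ) ≤ Fintype.card (Fin n) := by
    rw [Fintype.card_fin]
    exact_mod_cast hn
  have hp' : κ * Fintype.card (Fin n) ≤ Fintype.card (Fin n) - p := by rwa [Fintype.card_fin]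
  have hlt : p < n := by simpa using hx.lt_card hN hκ hp'
  have h_bad := hx.expect_badness_le hN hκ hp' ht (by rwa [Fintype.card_fin]) hal
  have h_norm := expect_norm_kendallRemainder_sq_le (by lia : 2 ≤ n) hlt
  simp only [div_pow, expect_add_distrib, ← expect_div]
  calc _ ≤ (17 * (500000 * (3 / κ) ^ 4) + 1) / t ^ 2 + 58 / t ^ 2 := by
        gcongr
    _ = _ := by ring

lemma norm_expect_exp_logDetStatistic_sub_le (s : ℝ) (hn : 18 ≤ n) (hp_two : 2 ≤ p) (hκ : 0 < κ)
    (hp : κ * n ≤ n - p) (ht : 2 ≤ t) (ht_sq : 4 * (1 + 2 * invNormConst κ) ≤ t ^ 2)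
    (h_card : t ^ 8 = n) :
    ‖(𝔼 ω, Complex.exp ((s * logDetStatistic n p ω : ℝ) * Complex.I))
        - Complex.exp ((s * logDetCentering n p : ℝ) * Complex.I)
          * 𝔼 ω : Fin p → Equiv.Perm (Fin n), ∏ k ∈ range p, Complex.exp ((s * Real.log
            (1 + residualFluctuation (column (spearmanScore n) ω) k) : ℝ) * Complex.I)‖
      ≤ 2 * ((17 * (500000 * (3 / κ) ^ 4) + 59) / t ^ 2)
        + |s| * ((2 + 6 * invNormConst κ + 4 / κ) / t) := by
  obtain ⟨a, l, hl, hal⟩ := exists_isTop_and_covBy hp_two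
  have hn₀ : (0 : ℝ) < n := by positivity
  have hlt : p < n := by
    have : (p : ℝ) < n := by linarith [mul_pos hκ hn₀]
    exact_mod_cast this
  set e := (2 + 6 * invNormConst κ + 4 / κ) / t
  have he : 0 ≤ e := by
    have : 0 ≤ invNormConst κ := Real.sqrt_nonneg _
    positivity
  set W : (Fin p → Equiv.Perm (Fin n)) → ℝ := fun ω =>
    badness (spearmanScore n) t a l ω + (‖kendallRemainder n p ω‖ / t) ^ 2
  rw [mul_expect, ← expect_sub_distrib]
  calc _ ≤ 𝔼 ω, (2 * W ω + |s| * e) := norm_expect_le_expect fun ω => ?_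
    _ ≤ 2 * ((17 * (500000 * (3 / κ) ^ 4) + 59) / t ^ 2) + |s| * e := by
      rw [expect_add_distrib, Fintype.expect_const, ← mul_expect]
      gcongr
      exact expect_badness_add_norm_kendallRemainder_le hn hκ hp (by linarith) h_card hal.lt
  rw [prod_exp_mul_I_eq, ← Complex.exp_add, ← add_mul, ← Complex.ofReal_add, ← mul_add]
  have h_bad : 0 ≤ badness (spearmanScore n) t a l ω := badness_nonneg
  have h_norm : 0 ≤ (‖kendallRemainder n p ω‖ / t) ^ 2 := sq_nonneg _
  refine norm_exp_mul_I_sub_exp_mul_I_le (add_nonneg h_bad h_norm) he fun hW => ?_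
  have hH : ‖kendallRemainder n p ω‖ / t ≤ 1 := by
    rw [← sq_le_one_iff₀ (by positivity)]
    linarith
  exact abs_logDetStatistic_sub_le (isGoodDraw_of_badness_lt_one (by linarith) (by linarith))
    ((div_le_one (by linarith)).1 hH) (by lia) hlt hκ hp ht ht_sq h_card hl hal

end CharacteristicFunctionComparison

section CentralLimit

open Filter Topology

instance (n p : ℕ) : DiscreteMeasurableSpace (Fin p → Equiv.Perm (Fin n)) := ⟨fun _ => trivial⟩

instance (n p : ℕ) : IsProbabilityMeasure (permVecUniform n p) := by
  unfold permVecUniform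
  infer_instance

lemma charFun_map_permVecUniform {n p : ℕ} (F : (Fin p → Equiv.Perm (Fin n)) → ℝ) (s : ℝ) :
    charFun (Measure.map F (permVecUniform n p)) s
      = 𝔼 ω, Complex.exp ((s * F ω : ℝ) * Complex.I) := by
  rw [charFun_apply_real, integral_map Measurable.of_discrete.aemeasurable (by fun_prop),
    permVecUniform, PMF.integral_eq_sum, Fintype.expect_eq_sum_div_card, sum_div]
  refine sum_congr rfl fun ω _ => ?_
  rw [PMF.uniformOfFintype_apply, ENNReal.toReal_inv, ENNReal.toReal_natCast,
    Complex.real_smul, div_eq_inv_mul]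
  push_cast
  rfl

variable {y : ℝ} {p : ℕ → ℕ}

lemma tendsto_logDetCentering (hy1 : y < 1)
    (hpy : Tendsto (fun n => (p n : ℝ) / (n : ℝ)) atTop (𝓝 y)) :
    Tendsto (fun n => logDetCentering n (p n)) atTop
      (𝓝 (1 / 2 * Real.log (1 - y) + y - y ^ 2 / (1 - y))) := by
  have hy : 1 - y ≠ 0 := by linarith
  have h_drift : Tendsto (fun n : ℕ =>
      (p n : ℝ) / ((n : ℝ) - 2) * (1 - (1 - (n : ℝ)⁻¹) / (1 - p n / n))) atTop
      (𝓝 (y * (1 - (1 - 0) / (1 - y)))) :=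
    (tendsto_div_natCast_sub hpy 2).mul
      (((tendsto_inv_atTop_nhds_zero_nat.const_sub 1).div (hpy.const_sub 1) hy).const_sub 1)
  have h_lim := (tendsto_sum_log_one_sub_div hy1 hpy).add h_drift
  rw [show 1 / 2 * Real.log (1 - y) + y + y * (1 - (1 - 0) / (1 - y))
    = 1 / 2 * Real.log (1 - y) + y - y ^ 2 / (1 - y) by field_simp; ring] at h_lim
  refine h_lim.congr' ?_
  filter_upwards [eventually_gt_atTop 0] with n hn
  have hn₀ : (n : ℝ) ≠ 0 := by positivity
  rw [logDetCentering, one_sub_div hn₀, ← one_div, one_sub_div hn₀,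
    div_div_div_cancel_right₀ hn₀]
  ring

lemma eventually_le_of_tendsto_div (hy0 : 0 < y)
    (hpy : Tendsto (fun n => (p n : ℝ) / (n : ℝ)) atTop (𝓝 y)) (m : ℕ) :
    ∀ᶠ n in atTop, m ≤ p n := by
  have hp : Tendsto (fun n => (p n : ℝ)) atTop atTop := by
    refine (hpy.pos_mul_atTop hy0 tendsto_natCast_atTop_atTop).congr' ?_
    filter_upwards [eventually_ne_atTop 0] with n hn
    exact div_mul_cancel₀ _ (Nat.cast_ne_zero.2 hn)
  exact (tendsto_natCast_atTop_iff.1 hp).eventually_ge_atTop m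

lemma tendsto_expect_exp_logDetStatistic_sub (hy0 : 0 < y) (hy1 : y < 1)
    (hpy : Tendsto (fun n => (p n : ℝ) / (n : ℝ)) atTop (𝓝 y)) (s : ℝ) :
    Tendsto (fun n => (𝔼 ω, Complex.exp ((s * logDetStatistic n (p n) ω : ℝ) * Complex.I))
      - Complex.exp ((s * logDetCentering n (p n) : ℝ) * Complex.I)
        * 𝔼 ω : Fin (p n) → Equiv.Perm (Fin n), ∏ k ∈ range (p n), Complex.exp ((s * Real.log
          (1 + residualFluctuation (column (spearmanScore n) ω) k) : ℝ) * Complex.I))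
      atTop (𝓝 0) := by
  set κ := (1 - y) / 2
  have hκ : 0 < κ := by
    simp only [κ]
    linarith
  set t : ℕ → ℝ := fun n => √√√(n : ℝ)
  have ht : Tendsto t atTop atTop := Real.tendsto_sqrt_atTop.comp
    (Real.tendsto_sqrt_atTop.comp (Real.tendsto_sqrt_atTop.comp tendsto_natCast_atTop_atTop))
  have ht_sq : Tendsto (fun n => t n ^ 2) atTop atTop := (tendsto_pow_atTop two_ne_zero).comp ht
  have h_card (n : ℕ) : t n ^ 8 = n := by
    rw [show t n ^ 8 = ((t n ^ 2) ^ 2) ^ 2 by ring, Real.sq_sqrt (by positivity),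
      Real.sq_sqrt (by positivity), Real.sq_sqrt (by positivity)]
  have h_bound := ((ht_sq.const_div_atTop (17 * (500000 * (3 / κ) ^ 4) + 59)).const_mul 2).add
    ((ht.const_div_atTop (2 + 6 * invNormConst κ + 4 / κ)).const_mul |s|)
  rw [mul_zero, mul_zero, add_zero] at h_bound
  refine squeeze_zero_norm' ?_ h_bound
  filter_upwards [eventually_ge_atTop 18, eventually_le_of_tendsto_div hy0 hpy 2,
    eventually_mul_natCast_le_sub hy1 hpy, ht.eventually_ge_atTop 2,
    ht_sq.eventually_ge_atTop (4 * (1 + 2 * invNormConst κ))] with n hn hp_two hp ht ht_sq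
  exact norm_expect_exp_logDetStatistic_sub_le s hn hp_two hκ hp ht ht_sq (h_card n)

lemma tendsto_sum_pow_four {b : ℝ} {x : (n : ℕ) → Fin n → ℝ}
    (hx : ∀ᶠ n in atTop, IsBoundedScore b (x n)) :
    Tendsto (fun n => ∑ i, x n i ^ 4) atTop (𝓝 0) := by
  refine squeeze_zero' (.of_forall fun n => IsBoundedScore.sum_pow_four_nonneg _) ?_
    (tendsto_const_div_atTop_nhds_zero_nat b)
  filter_upwards [hx] with n hx
  simpa using hx.sum_pow_four_le

lemma tendsto_expect_prod_residualFluctuation (hy1 : y < 1)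
    (hpy : Tendsto (fun n => (p n : ℝ) / (n : ℝ)) atTop (𝓝 y)) {b : ℝ}
    {x : (n : ℕ) → Fin n → ℝ} (hx : ∀ᶠ n in atTop, IsBoundedScore b (x n)) {h : ℝ → ℂ}
    {α z : ℂ} {C : ℝ} (hh : HasQuadraticExpansion h α z C) (hz_re : z.re ≤ 0) :
    Tendsto (fun n => 𝔼 ω : Fin (p n) → Equiv.Perm (Fin n), ∏ k ∈ range (p n),
      h (residualFluctuation (column (x n) ω) k)) atTop
      (𝓝 (Complex.exp (z * (-2 * Real.log (1 - y) - 2 * y : ℝ)))) := by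
  set κ := (1 - y) / 2
  have hκ : 0 < κ := by
    simp only [κ]
    linarith
  have h_exp : Tendsto (fun n : ℕ => Complex.exp (z * (∑ k ∈ range (p n),
      residualVariance n (∑ i, x n i ^ 4) k : ℝ))) atTop
      (𝓝 (Complex.exp (z * (-2 * Real.log (1 - y) - 2 * y : ℝ)))) :=
    ((by fun_prop : Continuous fun v : ℝ => Complex.exp (z * v)).tendsto _).comp
      (tendsto_sum_residualVariance hy1 hpy (tendsto_sum_pow_four hx))
  have h_bound : Tendsto (fun n : ℕ => (p n : ℝ) / n * (stepError C z b κ / √(n : ℝ))) atTop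
      (𝓝 0) := by
    simpa using hpy.mul ((Real.tendsto_sqrt_atTop.comp
      tendsto_natCast_atTop_atTop).const_div_atTop (stepError C z b κ))
  refine (tendsto_iff_of_dist (squeeze_zero' (.of_forall fun _ => dist_nonneg) ?_ h_bound)).1 h_exp
  filter_upwards [hx, eventually_mul_natCast_le_sub hy1 hpy,
    tendsto_natCast_atTop_atTop.eventually_ge_atTop (6 * b),
    tendsto_natCast_atTop_atTop.eventually_ge_atTop (8 * ‖z‖ / κ)] with n hx hp hN hz
  rw [dist_comm, dist_eq_norm]
  have h_le := hx.norm_expect_prod_sub_exp_le (by rwa [Fintype.card_fin]) hκ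
    (by rwa [Fintype.card_fin]) hh (by rwa [Fintype.card_fin]) hz_re (le_refl (p n))
  rw [Fintype.card_fin] at h_le
  exact h_le.trans_eq (by ring)

theorem tendsto_charFun_logDetStatistic (hy0 : 0 < y) (hy1 : y < 1)
    (hpy : Tendsto (fun n => (p n : ℝ) / (n : ℝ)) atTop (𝓝 y)) (s : ℝ) :
    Tendsto (fun n =>
      charFun (Measure.map (logDetStatistic n (p n)) (permVecUniform n (p n))) s) atTop
      (𝓝 (charFun (ProbabilityTheory.gaussianReal
        ((3 / 2) * Real.log (1 - y) + 2 * y - y ^ 2 / (1 - y))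
        (Real.toNNReal (-2 * Real.log (1 - y) - 2 * y))) s)) := by
  have hv : 0 ≤ -2 * Real.log (1 - y) - 2 * y := by
    linarith [Real.log_le_sub_one_of_pos (by linarith : 0 < 1 - y)]
  obtain ⟨C, hC⟩ := exists_hasQuadraticExpansion_exp_log_one_add s
  have hz_re : ((-(s : ℂ) ^ 2 - s * Complex.I) / 2).re ≤ 0 := by
    rw [Complex.div_ofNat_re, Complex.sub_re, Complex.re_ofReal_mul, Complex.I_re,
      ← Complex.ofReal_pow, Complex.neg_re, Complex.ofReal_re]
    linarith [sq_nonneg s]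
  have h_centering : Tendsto (fun n =>
      Complex.exp ((s * logDetCentering n (p n) : ℝ) * Complex.I)) atTop
      (𝓝 (Complex.exp ((s * (1 / 2 * Real.log (1 - y) + y - y ^ 2 / (1 - y)) : ℝ)
        * Complex.I))) :=
    ((by fun_prop : Continuous fun d : ℝ =>
      Complex.exp ((s * d : ℝ) * Complex.I)).tendsto _).comp (tendsto_logDetCentering hy1 hpy)
  have h_prod := tendsto_expect_prod_residualFluctuation hy1 hpy
    ((eventually_ge_atTop 2).mono fun n => isBoundedScore_spearmanScore) hC hz_re
  have h_lim := (tendsto_expect_exp_logDetStatistic_sub hy0 hy1 hpy s).add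
    (h_centering.mul h_prod)
  simp only [sub_add_cancel, zero_add] at h_lim
  simp only [charFun_map_permVecUniform]
  convert h_lim using 2
  rw [ProbabilityTheory.charFun_gaussianReal, Real.coe_toNNReal _ hv, ← Complex.exp_add]
  congr 1
  push_cast
  ring

end CentralLimit

/-- (CLT for the log-determinant of the improved Spearman rank correlation
matrix.)  If `p(n)/n → y ∈ (0,1)`, then `log det ρ̃ₙ + (n − p(n))·log(1 − p(n)/n) + p(n)`
converges in distribution to `N((3/2)log(1−y) + 2y − y²/(1−y), −2log(1−y) − 2y)`;
convergence in distribution is expressed by testing against all bounded continuous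
functions. -/
theorem improved_spearman_logdet_clt (y : ℝ) (hy0 : 0 < y) (hy1 : y < 1)
    (p : ℕ → ℕ) (hp : ∀ n, 1 ≤ p n)
    (hpy : Filter.Tendsto (fun n => (p n : ℝ) / (n : ℝ)) Filter.atTop (nhds y)) :
    ∀ g : BoundedContinuousFunction ℝ ℝ,
      Filter.Tendsto
        (fun n => ∫ x, g x ∂(Measure.map
          (fun ω => Real.log (improvedSpearmanRho n (p n) ω).det
            + ((n : ℝ) - (p n : ℝ)) * Real.log (1 - (p n : ℝ) / (n : ℝ)) + (p n : ℝ))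
          (permVecUniform n (p n))))
        Filter.atTop
        (nhds (∫ x, g x ∂(ProbabilityTheory.gaussianReal
          ((3 / 2) * Real.log (1 - y) + 2 * y - y ^ 2 / (1 - y))
          (Real.toNNReal (-2 * Real.log (1 - y) - 2 * y))))) := by
  have h_prob (n : ℕ) :
      IsProbabilityMeasure (Measure.map (logDetStatistic n (p n)) (permVecUniform n (p n))) :=
    Measure.isProbabilityMeasure_map Measurable.of_discrete.aemeasurable
  exact ProbabilityMeasure.tendsto_iff_forall_integral_tendsto.1
    (ProbabilityMeasure.tendsto_iff_tendsto_charFun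
      (μ := fun n => ⟨_, h_prob n⟩) (μ₀ := ⟨ProbabilityTheory.gaussianReal _ _, inferInstance⟩).2
      (tendsto_charFun_logDetStatistic hy0 hy1 hpy))
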